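/- arXiv:math/0602211 — 7 statements merged into one kernel-verified Lean document; each statement's English description precedes it below -/
import Mathlib

section
/- In the auxiliary-variable accept–reject scheme, the average acceptance probability equals (Σ_{j=1}^N β_j)/M with M = max_k M_k/τ_k, and for any given choice of the proposal densities ρ(j,·) and bounds M_j this average acceptance probability is less than or equal to (Σ_{j=1}^N β_j)/(Σ_{j=1}^N M_j), with equality if and only if τ_j is proportional to M_j (i.e. τ_j = M_j/Σ_k M_k for all j). -/
open MeasureTheory

/-- Lemma 1: in the auxiliary-variable accept–reject scheme with index proposal
probabilities `τ_j`, proposal densities `ρ(j,·)` and bounds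
`M_j ≥ sup_x a(j,x) b(x) / ρ(j,x)`, with `M = max_k M_k / τ_k`, the average
acceptance probability `Σ_j ∫ π(j,x) τ_j ρ(j,x) dμ(x)`, where
`π(j,x) = a(j,x) b(x) / (M τ_j ρ(j,x))`, equals `(Σ_j β_j)/M`; it is
at most `(Σ_j β_j)/(Σ_j M_j)`, with equality if and only if `τ_j ∝ M_j`,
i.e. `τ_j = M_j / Σ_k M_k` for all `j`.  Here `β_j = ∫ a(j,x) b(x) dμ(x)`. -/
theorem auxiliary_accept_reject_average_acceptance
    {α : Type*} [MeasurableSpace α] (μ : Measure α)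
    (n : ℕ) (hn : 0 < n)
    (b : α → ℝ) (hb_meas : Measurable b) (hb_nonneg : ∀ x, 0 ≤ b x)
    (a ρ : Fin n → α → ℝ)
    (ha_meas : ∀ j, Measurable (a j)) (hρ_meas : ∀ j, Measurable (ρ j))
    (ha_nonneg : ∀ j x, 0 ≤ a j x) (hρ_nonneg : ∀ j x, 0 ≤ ρ j x)
    (ha_one : ∀ j, ∫ x, a j x ∂μ = 1) (hρ_one : ∀ j, ∫ x, ρ j x ∂μ = 1)
    (hab_int : ∀ j, Integrable (fun x => a j x * b x) μ)
    (hβ_pos : ∀ j, 0 < ∫ x, a j x * b x ∂μ)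
    (τ : Fin n → ℝ) (hτ_pos : ∀ j, 0 < τ j) (hτ_sum : ∑ j, τ j = 1)
    (M : Fin n → ℝ)
    (hM : ∀ j x, a j x * b x ≤ M j * ρ j x) :
    (∑ j, ∫ x, (a j x * b x / ((⨆ k, M k / τ k) * τ j * ρ j x)) * (τ j * ρ j x) ∂μ)
        = (∑ j, ∫ x, a j x * b x ∂μ) / (⨆ k, M k / τ k)
      ∧ (∑ j, ∫ x, (a j x * b x / ((⨆ k, M k / τ k) * τ j * ρ j x)) * (τ j * ρ j x) ∂μ)
          ≤ (∑ j, ∫ x, a j x * b x ∂μ) / (∑ j, M j)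
      ∧ ((∑ j, ∫ x, (a j x * b x / ((⨆ k, M k / τ k) * τ j * ρ j x)) * (τ j * ρ j x) ∂μ)
            = (∑ j, ∫ x, a j x * b x ∂μ) / (∑ j, M j)
          ↔ ∀ j, τ j = M j / ∑ k, M k) := by
  have hMpos : ∀ j, 0 < M j := by
    intro j
    by_contra hneg
    push Not at hneg
    have h0 : ∫ x, a j x * b x ∂μ ≤ 0 :=
      integral_nonpos fun x =>
        (hM j x).trans (mul_nonpos_of_nonpos_of_nonneg hneg (hρ_nonneg j x))
    exact absurd (hβ_pos j) (not_lt.mpr h0)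
  haveI : Nonempty (Fin n) := ⟨⟨0, hn⟩⟩
  have hle : ∀ k, M k / τ k ≤ ⨆ k, M k / τ k := fun k =>
    le_ciSup (f := fun k => M k / τ k) (Set.finite_range _).bddAbove k
  have hconst : (∀ j, τ j = M j / ∑ k, M k) → (⨆ k, M k / τ k) = ∑ k, M k := by
    intro h
    have h1 : ∀ k, M k / τ k = ∑ k, M k := by
      intro k
      rw [h k, div_div_cancel₀ (hMpos k).ne']
    simp only [h1, ciSup_const]
  generalize (⨆ k, M k / τ k) = S at hle hconst ⊢
  have hSpos : 0 < S := lt_of_lt_of_le (div_pos (hMpos ⟨0, hn⟩) (hτ_pos _)) (hle ⟨0, hn⟩)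
  have hle2 : ∀ k, M k ≤ S * τ k := fun k => (div_le_iff₀ (hτ_pos k)).1 (hle k)
  have hsumS : ∑ k, S * τ k = S := by rw [← Finset.mul_sum, hτ_sum, mul_one]
  have hsumle : ∑ k, M k ≤ S := by
    calc ∑ k, M k ≤ ∑ k, S * τ k := Finset.sum_le_sum fun k _ => hle2 k
      _ = S := hsumS
  have hMsum : 0 < ∑ k, M k := Finset.sum_pos (fun k _ => hMpos k) Finset.univ_nonempty
  have hβ : 0 < ∑ j, ∫ x, a j x * b x ∂μ :=
    Finset.sum_pos (fun k _ => hβ_pos k) Finset.univ_nonempty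
  have hE : (∑ j, ∫ x, (a j x * b x / (S * τ j * ρ j x)) * (τ j * ρ j x) ∂μ)
      = (∑ j, ∫ x, a j x * b x ∂μ) / S := by
    rw [Finset.sum_div]
    refine Finset.sum_congr rfl fun j _ => ?_
    rw [← integral_div]
    congr 1
    funext x
    have ht := (hτ_pos j).ne'
    have hS := hSpos.ne'
    by_cases hr : ρ j x = 0
    · have h1 := hM j x
      rw [hr, mul_zero] at h1
      have h2 : a j x * b x = 0 := le_antisymm h1 (mul_nonneg (ha_nonneg j x) (hb_nonneg x))
      simp [h2]
    · field_simp
  rw [hE]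
  refine ⟨rfl, div_le_div_of_nonneg_left hβ.le hMsum hsumle, ?_, ?_⟩
  · intro h
    have hS : S = ∑ k, M k := by
      rw [div_eq_div_iff hSpos.ne' hMsum.ne'] at h
      exact (mul_left_cancel₀ hβ.ne' h).symm
    have h2 : ∑ k, M k = ∑ k, S * τ k := by rw [hsumS, ← hS]
    have h3 := (Finset.sum_eq_sum_iff_of_le fun k _ => hle2 k).1 h2
    intro j
    rw [← hS, h3 j (Finset.mem_univ j), mul_div_cancel_left₀ _ hSpos.ne']
  · intro h
    rw [hconst h]
end

section
/- For the systematic resampling counts N_j (without random permutation), for any j < k the covariance Cov(N_j, N_k) depends only on r_l = Nπ_j mod 1, r_u = Nπ_k mod 1 and r_m = N Σ_{i=j+1}^{k-1} π_i mod 1; explicitly, writing M_j = N_j − ⌊Nπ_j⌋ and M_k = N_k − ⌊Nπ_k⌋, one has E[M_j M_k] = (r_l + r_m + r_u − 1)^+ if r_l + r_m ≤ 1 and r_m + r_u ≤ 1; = r_u if r_l + r_m > 1 and r_m + r_u ≤ 1; = r_l if r_l + r_m ≤ 1 and r_m + r_u > 1; = 1 − r_m if r_l + r_m > 1, r_m +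 r_u > 1 and r_l + r_m + r_u ≤ 2; and = r_l + r_u − 1 if r_l + r_m + r_u > 2. Moreover, for every fixed r_l and r_u the integral of E[M_j M_k] over r_m uniformly distributed on (0,1) equals r_l r_u, so that the average of Cov(N_j, N_k) = E[M_j M_k] − r_l r_u with respect to uniform r_m is zero. -/
open MeasureTheory

/-- The systematic resampling count
`N_j = |[N Σ_{i=1}^{j-1} π_i + u, N Σ_{i=1}^{j} π_i + u) ∩ {1, 2, …, N}|`. -/
noncomputable def sysCount (N : ℕ) (π : ℕ → ℝ) (u : ℝ) (j : ℕ) : ℕ :=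
  ((Finset.Icc 1 N).filter fun n : ℕ =>
    (N : ℝ) * (∑ i ∈ Finset.Icc 1 (j - 1), π i) + u ≤ (n : ℝ)
      ∧ (n : ℝ) < (N : ℝ) * (∑ i ∈ Finset.Icc 1 j, π i) + u).card

/-- The explicit piecewise expression for `E[M_j M_k]` in Lemma 2, as a function of
`r_l, r_m, r_u`. -/
noncomputable def covF (rl rm ru : ℝ) : ℝ :=
  if 2 < rl + rm + ru then rl + ru - 1
  else if 1 < rl + rm ∧ 1 < rm + ru then 1 - rm
  else if 1 < rl + rm then ru
  else if 1 < rm + ru then rl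
  else max (rl + rm + ru - 1) 0

theorem covF_eq (rl rm ru : ℝ) (hl : rl ∈ Set.Ico (0 : ℝ) 1) (hm : rm ∈ Set.Icc (0 : ℝ) 1)
    (hu : ru ∈ Set.Ico (0 : ℝ) 1) :
    covF rl rm ru = max ((rl + ru - 1) + rm) 0 + max ((rl + ru - 2) + rm) 0
      - max ((rl - 1) + rm) 0 - max ((ru - 1) + rm) 0 := by
  obtain ⟨h1, h2⟩ := hl
  obtain ⟨h3, h4⟩ := hm
  obtain ⟨h5, h6⟩ := hu
  unfold covF
  simp only [max_def]
  split_ifs <;> grind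

theorem integral_pos_part (c : ℝ) :
    (∫ t in (0:ℝ)..1, max (c + t) 0) = (max (c + 1) 0) ^ 2 / 2 - (max c 0) ^ 2 / 2 := by
  have h := MeasureTheory.integral_eq_of_hasDerivAt_off_countable_of_le
    (fun t : ℝ => (max (c + t) 0) ^ 2 / 2) (fun t => max (c + t) 0) (zero_le_one)
    (s := {-c}) (Set.countable_singleton _) (by fun_prop) ?_
    (Continuous.intervalIntegrable (by fun_prop) _ _)
  · simpa using h
  · rintro t ⟨-, ht⟩
    have ht' : t ≠ -c := by simpa using ht
    rcases lt_or_gt_of_ne ht' with h | h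
    · have : max (c + t) 0 = 0 := max_eq_right (by linarith)
      rw [this]
      refine (hasDerivAt_const t (0:ℝ)).congr_of_eventuallyEq ?_
      filter_upwards [Iio_mem_nhds h] with y hy
      have hy' : y < -c := hy
      rw [max_eq_right (by linarith)]; norm_num
    · have : max (c + t) 0 = c + t := max_eq_left (by linarith)
      rw [this]
      have hd : HasDerivAt (fun t : ℝ => (c + t) ^ 2 / 2) (c + t) t := by
        have := (((hasDerivAt_id t).const_add c).pow 2).div_const 2
        exact this.congr_deriv (by simp)
      refine hd.congr_of_eventuallyEq ?_
      filter_upwards [Ioi_mem_nhds h] with y hy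
      have hy' : -c < y := hy
      rw [max_eq_left (by linarith)]

theorem covF_average (rl ru : ℝ) (hl : rl ∈ Set.Ico (0 : ℝ) 1) (hu : ru ∈ Set.Ico (0 : ℝ) 1) :
    (∫ rm in Set.Ioo (0 : ℝ) 1, (covF rl rm ru - rl * ru)) = 0 := by
  rw [← MeasureTheory.integral_Ioc_eq_integral_Ioo,
    ← intervalIntegral.integral_of_le zero_le_one]
  have : (∫ rm in (0:ℝ)..1, (covF rl rm ru - rl * ru)) =
      ∫ rm in (0:ℝ)..1, (max ((rl + ru - 1) + rm) 0 + max ((rl + ru - 2) + rm) 0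
      - max ((rl - 1) + rm) 0 - max ((ru - 1) + rm) 0 - rl * ru) := by
    apply intervalIntegral.integral_congr
    intro rm hrm
    rw [Set.uIcc_of_le zero_le_one] at hrm
    simp only [covF_eq rl rm ru hl hrm hu]
  have hi : ∀ c : ℝ, IntervalIntegrable (fun t : ℝ => max (c + t) 0) volume 0 1 :=
    fun c => Continuous.intervalIntegrable (by fun_prop) _ _
  rw [this, intervalIntegral.integral_sub (Continuous.intervalIntegrable (by fun_prop) _ _)
      (by simp),
    intervalIntegral.integral_sub (Continuous.intervalIntegrable (by fun_prop) _ _) (hi _),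
    intervalIntegral.integral_sub (Continuous.intervalIntegrable (by fun_prop) _ _) (hi _),
    intervalIntegral.integral_add (hi _) (hi _)]
  simp only [integral_pos_part, intervalIntegral.integral_const]
  obtain ⟨h1, h2⟩ := hl
  obtain ⟨h5, h6⟩ := hu
  have e1 : max (rl + ru - 2) 0 = 0 := max_eq_right (by linarith)
  have e2 : max (rl - 1) 0 = 0 := max_eq_right (by linarith)
  have e3 : max (ru - 1) 0 = 0 := max_eq_right (by linarith)
  have e4 : max (rl - 1 + 1) 0 = rl := by rw [max_eq_left] <;> linarith
  have e5 : max (ru - 1 + 1) 0 = ru := by rw [max_eq_left] <;> linarith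
  have e6 : max (rl + ru - 1 + 1) 0 = rl + ru := by rw [max_eq_left] <;> linarith
  have e7 : rl + ru - 2 + 1 = rl + ru - 1 := by ring
  rw [e7, e1, e2, e3, e4, e5, e6]
  simp
  ring

theorem sysCount_eq (N : ℕ) (π : ℕ → ℝ) (u : ℝ) (j : ℕ) (hu : u ∈ Set.Ioo (0 : ℝ) 1)
    (a b : ℝ) (ha : (N : ℝ) * (∑ i ∈ Finset.Icc 1 (j - 1), π i) = a)
    (hb : (N : ℝ) * (∑ i ∈ Finset.Icc 1 j, π i) = b)
    (h0 : 0 ≤ a) (hab : a ≤ b) (hbN : b ≤ N) :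
    (sysCount N π u j : ℝ) = (⌈b + u⌉ : ℝ) - ⌈a + u⌉ := by
  obtain ⟨hu0, hu1⟩ := hu
  have hc : sysCount N π u j = (Finset.Ico ⌈a + u⌉ ⌈b + u⌉).card := by
    unfold sysCount
    rw [ha, hb]
    refine Finset.card_bij (fun n _ => (n : ℤ)) ?_ ?_ ?_
    · intro n hn
      simp only [Finset.mem_filter, Finset.mem_Icc] at hn
      simp only [Finset.mem_Ico, Int.ceil_le, Int.lt_ceil]
      exact_mod_cast hn.2
    · intro n _ m _ h
      exact_mod_cast h
    · intro z hz
      simp only [Finset.mem_Ico, Int.ceil_le, Int.lt_ceil] at hz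
      obtain ⟨hz1, hz2⟩ := hz
      have hz0 : 0 < z := by
        have : (0:ℝ) < z := by linarith
        exact_mod_cast this
      have hzN : z < N + 1 := by
        have : (z:ℝ) < N + 1 := by linarith
        exact_mod_cast this
      obtain ⟨n, rfl⟩ := Int.eq_ofNat_of_zero_le hz0.le
      refine ⟨n, ?_, rfl⟩
      simp only [Finset.mem_filter, Finset.mem_Icc]
      refine ⟨by omega, ?_⟩
      exact_mod_cast And.intro hz1 hz2
  rw [hc, Int.card_Ico]
  have : ⌈a + u⌉ ≤ ⌈b + u⌉ := Int.ceil_le_ceil (by linarith)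
  have h2 : (((⌈b + u⌉ - ⌈a + u⌉).toNat : ℤ) : ℝ) = ((⌈b + u⌉ - ⌈a + u⌉ : ℤ) : ℝ) := by
    rw [Int.toNat_of_nonneg (by omega)]
  push_cast at h2
  exact_mod_cast h2

/-- The product of the residual counts as a function of the shifted position. -/
noncomputable def resH (rl rm ru w : ℝ) : ℝ :=
  ((⌈w⌉ : ℝ) - ⌈w - rl⌉) * ((⌈w + rm + ru⌉ : ℝ) - ⌈w + rm⌉)

theorem resH_periodic (rl rm ru : ℝ) : Function.Periodic (resH rl rm ru) 1 := by
  intro w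
  unfold resH
  have e1 : w + 1 - rl = w - rl + 1 := by ring
  have e2 : w + 1 + rm + ru = w + rm + ru + 1 := by ring
  have e3 : w + 1 + rm = w + rm + 1 := by ring
  rw [e1, e2, e3]
  simp only [Int.ceil_add_one]
  push_cast
  ring

theorem resH_measurable (rl rm ru : ℝ) : Measurable (resH rl rm ru) := by
  have hc : Measurable (fun x : ℝ => (⌈x⌉ : ℝ)) :=
    (measurable_from_top (f := fun z : ℤ => (z : ℝ))).comp Int.measurable_ceil
  unfold resH
  exact (hc.sub (hc.comp (measurable_id.sub_const rl))).mul
    ((hc.comp ((measurable_id.add_const rm).add_const ru)).sub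
      (hc.comp (measurable_id.add_const rm)))

theorem ceil_cases (x : ℝ) (z : ℤ) (h1 : (z : ℝ) - 1 < x) (h2 : x ≤ z) : (⌈x⌉ : ℝ) = z := by
  rw [Int.ceil_eq_iff.mpr ⟨h1, h2⟩]

theorem resH_eq (rl rm ru w : ℝ) (hl : rl ∈ Set.Ico (0 : ℝ) 1) (hm : rm ∈ Set.Ico (0 : ℝ) 1)
    (hu : ru ∈ Set.Ico (0 : ℝ) 1) (hw : w ∈ Set.Ioc (0 : ℝ) 1) :
    resH rl rm ru w =
      (Set.Ioc (max 0 (1 - rm - ru)) (min rl (1 - rm))).indicator (fun _ => (1 : ℝ)) w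
      + (Set.Ioc (2 - rm - ru) rl).indicator (fun _ => (1 : ℝ)) w := by
  obtain ⟨h1, h2⟩ := hl
  obtain ⟨h3, h4⟩ := hm
  obtain ⟨h5, h6⟩ := hu
  obtain ⟨h7, h8⟩ := hw
  unfold resH
  have a0 : (⌈w⌉ : ℝ) = 1 := by
    simpa using ceil_cases w 1 (by norm_num; linarith) (by norm_num; linarith)
  have a1 : (⌈w - rl⌉ : ℝ) = if w ≤ rl then 0 else 1 := by
    split_ifs with h
    · simpa using ceil_cases (w - rl) 0 (by norm_num; linarith) (by norm_num; linarith)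
    · simpa using ceil_cases (w - rl) 1 (by norm_num; linarith) (by norm_num; linarith)
  have a2 : (⌈w + rm⌉ : ℝ) = if w + rm ≤ 1 then 1 else 2 := by
    split_ifs with h
    · simpa using ceil_cases (w + rm) 1 (by norm_num; linarith) (by norm_num; linarith)
    · simpa using ceil_cases (w + rm) 2 (by norm_num; linarith) (by norm_num; linarith)
  have a3 : (⌈w + rm + ru⌉ : ℝ) =
      if w + rm + ru ≤ 1 then 1 else if w + rm + ru ≤ 2 then 2 else 3 := by
    split_ifs with h h'
    · simpa using ceil_cases (w + rm + ru) 1 (by norm_num; linarith) (by norm_num; linarith)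
    · simpa using ceil_cases (w + rm + ru) 2 (by norm_num; linarith) (by norm_num; linarith)
    · simpa using ceil_cases (w + rm + ru) 3 (by norm_num; linarith) (by norm_num; linarith)
  rw [a0, a1, a2, a3]
  simp only [Set.indicator_apply, Set.mem_Ioc, max_lt_iff, le_min_iff]
  split_ifs <;> grind

theorem resH_integral (rl rm ru : ℝ) (hl : rl ∈ Set.Ico (0 : ℝ) 1) (hm : rm ∈ Set.Ico (0 : ℝ) 1)
    (hu : ru ∈ Set.Ico (0 : ℝ) 1) :
    (∫ w in (0:ℝ)..1, resH rl rm ru w) = covF rl rm ru := by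
  have key : ∀ A B : ℝ, 0 ≤ A → B ≤ 1 →
      (∫ w in Set.Ioc (0:ℝ) 1, (Set.Ioc A B).indicator (fun _ => (1 : ℝ)) w) = max (B - A) 0 := by
    intro A B hA hB
    rw [MeasureTheory.setIntegral_indicator measurableSet_Ioc,
      Set.inter_eq_right.mpr (Set.Ioc_subset_Ioc hA hB)]
    simp [Measure.real, Real.volume_Ioc, ENNReal.toReal_ofReal']
  have hIoc : ∀ A B : ℝ, Integrable ((Set.Ioc A B).indicator (fun _ => (1 : ℝ)))
      (volume.restrict (Set.Ioc (0:ℝ) 1)) := fun A B =>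
    (integrable_const (1:ℝ)).indicator measurableSet_Ioc
  rw [intervalIntegral.integral_of_le zero_le_one,
    MeasureTheory.setIntegral_congr_fun measurableSet_Ioc
      (fun w hw => resH_eq rl rm ru w hl hm hu hw),
    MeasureTheory.integral_add (hIoc _ _) (hIoc _ _)]
  obtain ⟨h1, h2⟩ := hl
  obtain ⟨h3, h4⟩ := hm
  obtain ⟨h5, h6⟩ := hu
  rw [key _ _ (le_max_left _ _) ((min_le_left _ _).trans h2.le), key _ _ (by linarith) h2.le]
  unfold covF
  simp only [max_def, min_def]
  split_ifs <;> grind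

theorem resH_reduce (x m y w : ℝ) :
    ((⌈w⌉ : ℝ) - ⌈w - x⌉ - ⌊x⌋) * ((⌈w + m + y⌉ : ℝ) - ⌈w + m⌉ - ⌊y⌋)
      = resH (Int.fract x) (Int.fract m) (Int.fract y) w := by
  unfold resH
  have e1 : w - x = w - Int.fract x - (⌊x⌋ : ℤ) := by
    have := Int.floor_add_fract x; linarith
  have e2 : w + m = w + Int.fract m + (⌊m⌋ : ℤ) := by
    have := Int.floor_add_fract m; linarith
  have e3 : w + m + y = w + Int.fract m + Int.fract y + ((⌊m⌋ + ⌊y⌋ : ℤ) : ℝ) := by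
    have := Int.floor_add_fract m
    have := Int.floor_add_fract y
    push_cast; linarith
  have f1 : ⌈w - x⌉ = ⌈w - Int.fract x⌉ - ⌊x⌋ := by
    conv_lhs => rw [e1]
    exact Int.ceil_sub_intCast _ _
  have f2 : ⌈w + m⌉ = ⌈w + Int.fract m⌉ + ⌊m⌋ := by
    conv_lhs => rw [e2]
    exact Int.ceil_add_intCast _ _
  have f3 : ⌈w + m + y⌉ = ⌈w + Int.fract m + Int.fract y⌉ + (⌊m⌋ + ⌊y⌋) := by
    conv_lhs => rw [e3]
    exact Int.ceil_add_intCast _ _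
  rw [f1, f2, f3]
  push_cast
  ring

/-- Lemma 2: for systematic resampling (without random permutation) with a uniform
`U` on `(0,1)`, for `j < k` the covariance `Cov(N_j, N_k) = E[M_j M_k] − r_l r_u`
(with `M_j = N_j − ⌊Nπ_j⌋`, `M_k = N_k − ⌊Nπ_k⌋`) depends only on
`r_l = Nπ_j mod 1`, `r_u = Nπ_k mod 1` and `r_m = N Σ_{i=j+1}^{k-1} π_i mod 1`, with
`E[M_j M_k]` given by the explicit piecewise expression `covF r_l r_m r_u`; moreover,
for every `r_l, r_u ∈ [0,1)` the average of `E[M_j M_k]` over `r_m` uniform on `(0,1)`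
equals `r_l r_u`, i.e. the average of the covariance is zero. -/
theorem systematic_resampling_covariance
    {Ω : Type*} [MeasurableSpace Ω] (P : Measure Ω) [IsProbabilityMeasure P]
    (U : Ω → ℝ) (hU_meas : Measurable U)
    (hU_law : Measure.map U P = volume.restrict (Set.Ioo (0 : ℝ) 1))
    (R N : ℕ) (π : ℕ → ℝ)
    (hπ_nonneg : ∀ i, 0 ≤ π i)
    (hπ_sum : ∑ i ∈ Finset.Icc 1 R, π i = 1)
    (j k : ℕ) (hj : 1 ≤ j) (hjk : j < k) (hkR : k ≤ R) :
    (∫ ω, ((sysCount N π (U ω) j : ℝ) - ⌊(N : ℝ) * π j⌋)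
        * ((sysCount N π (U ω) k : ℝ) - ⌊(N : ℝ) * π k⌋) ∂P)
      = covF (Int.fract ((N : ℝ) * π j))
          (Int.fract ((N : ℝ) * ∑ i ∈ Finset.Icc (j + 1) (k - 1), π i))
          (Int.fract ((N : ℝ) * π k))
    ∧ ∀ rl ru : ℝ, rl ∈ Set.Ico (0 : ℝ) 1 → ru ∈ Set.Ico (0 : ℝ) 1 →
        (∫ rm in Set.Ioo (0 : ℝ) 1, (covF rl rm ru - rl * ru)) = 0 := by
  refine ⟨?_, fun rl ru hl hu => covF_average rl ru hl hu⟩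
  set S : ℕ → ℝ := fun n => (N : ℝ) * ∑ i ∈ Finset.Icc 1 n, π i with hS
  set m : ℝ := (N : ℝ) * ∑ i ∈ Finset.Icc (j + 1) (k - 1), π i with hm
  have hN : (0:ℝ) ≤ N := Nat.cast_nonneg N
  have hmono : Monotone S := by
    intro p q hpq
    refine mul_le_mul_of_nonneg_left ?_ hN
    exact Finset.sum_le_sum_of_subset_of_nonneg (Finset.Icc_subset_Icc le_rfl hpq)
      (fun i _ _ => hπ_nonneg i)
  have hS0 : ∀ n, 0 ≤ S n := fun n =>
    mul_nonneg hN (Finset.sum_nonneg fun i _ => hπ_nonneg i)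
  have hSR : ∀ n, n ≤ R → S n ≤ N := by
    intro n hn
    have h := hmono hn
    have h2 : S R = N := by simp only [hS, hπ_sum, mul_one]
    linarith
  have hstep : ∀ n, 1 ≤ n → S n = S (n - 1) + N * π n := by
    intro n hn
    obtain ⟨p, rfl⟩ := Nat.exists_eq_add_of_le' hn
    simp only [hS, Nat.add_sub_cancel]
    rw [Finset.sum_Icc_succ_top (by omega), mul_add]
  have hmid : S (k - 1) = S j + m := by
    simp only [hS, hm]
    rw [← mul_add]
    congr 1
    have : Finset.Icc 1 (k - 1) = Finset.Icc 1 j ∪ Finset.Icc (j + 1) (k - 1) := by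
      ext i; simp only [Finset.mem_Icc, Finset.mem_union]; omega
    rw [this, Finset.sum_union]
    rw [Finset.disjoint_left]
    intro i; simp only [Finset.mem_Icc]; omega
  set H := resH (Int.fract ((N : ℝ) * π j)) (Int.fract m) (Int.fract ((N : ℝ) * π k)) with hH
  have hmeas : Measurable H := resH_measurable _ _ _
  have hUae : ∀ᵐ ω ∂P, U ω ∈ Set.Ioo (0:ℝ) 1 := by
    apply ae_of_ae_map hU_meas.aemeasurable
    rw [hU_law]
    exact ae_restrict_mem measurableSet_Ioo
  have hae : (fun ω => ((sysCount N π (U ω) j : ℝ) - ⌊(N : ℝ) * π j⌋)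
        * ((sysCount N π (U ω) k : ℝ) - ⌊(N : ℝ) * π k⌋)) =ᵐ[P] fun ω => H (U ω + S j) := by
    filter_upwards [hUae] with ω hω
    rw [sysCount_eq N π (U ω) j hω (S (j - 1)) (S j) rfl rfl (hS0 _) (hmono (by omega))
        (hSR _ (by omega)),
      sysCount_eq N π (U ω) k hω (S (k - 1)) (S k) rfl rfl (hS0 _) (hmono (by omega))
        (hSR _ hkR), hH, ← resH_reduce]
    have g1 : S (j - 1) + U ω = U ω + S j - N * π j := by rw [hstep j hj]; ring
    have g2 : S (k - 1) + U ω = U ω + S j + m := by rw [hmid]; ring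
    have g3 : S k + U ω = U ω + S j + m + N * π k := by rw [hstep k (by omega), hmid]; ring
    rw [g1, g2, g3, add_comm (S j) (U ω)]
  rw [integral_congr_ae hae,
    ← integral_map (φ := U) (f := fun u => H (u + S j)) hU_meas.aemeasurable
      (hmeas.comp (measurable_id.add_const _)).aestronglyMeasurable, hU_law,
    ← MeasureTheory.integral_Ioc_eq_integral_Ioo,
    ← intervalIntegral.integral_of_le zero_le_one,
    intervalIntegral.integral_comp_add_right (fun w => H w), zero_add, add_comm (1:ℝ) (S j),
    (resH_periodic _ _ _).intervalIntegral_add_eq (S j) 0, zero_add]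
  exact resH_integral _ _ _ ⟨Int.fract_nonneg _, Int.fract_lt_one _⟩
    ⟨Int.fract_nonneg _, Int.fract_lt_one _⟩ ⟨Int.fract_nonneg _, Int.fract_lt_one _⟩
end

section
/- For any two probability densities f, g with respect to μ and any bounded nonnegative likelihood b with ∫ b f dμ > 0 and ∫ b g dμ > 0, ‖B(f,b) − B(g,b)‖₁ ≤ β(f,b) ‖f − g‖₁, where β(f,b) = (sup_x b(x)) / (∫ b(x) f(x) dμ(x)). -/
open MeasureTheory

/-- The Bayes operator `B(f, b)(x) = f(x) b(x) / ∫ f b dμ`. -/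
noncomputable def bayesOp {α : Type*} [MeasurableSpace α] (μ : Measure α)
    (f b : α → ℝ) : α → ℝ :=
  fun x => f x * b x / ∫ x', f x' * b x' ∂μ

theorem abs_int_aux {α : Type*} [MeasurableSpace α] (μ : Measure α) (u v : α → ℝ) (c : ℝ)
    (hu : Integrable u μ) (hv : Integrable v μ) (hu0 : ∫ x, u x ∂μ = 0) (hv0 : ∫ x, v x ∂μ = 0)
    (h : ∀ x, |u x| + u x ≤ c * (|v x| + v x)) :
    ∫ x, |u x| ∂μ ≤ c * ∫ x, |v x| ∂μ := by
  have h1 := integral_mono (hu.abs.add hu) ((hv.abs.add hv).const_mul c) h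
  have e1 : ∫ x, (|u x| + u x) ∂μ = ∫ x, |u x| ∂μ := by
    rw [integral_add hu.abs hu, hu0, add_zero]
  have e2 : ∫ x, c * (|v x| + v x) ∂μ = c * ∫ x, |v x| ∂μ := by
    rw [integral_const_mul, integral_add hv.abs hv, hv0, add_zero]
  exact e1 ▸ e2 ▸ h1

theorem abs_add_aux {u v b S F : ℝ} (hF : 0 < F) (hb : 0 ≤ b) (hS : b ≤ S)
    (h : u ≤ v * b / F) : |u| + u ≤ S / F * (|v| + v) := by
  have hv : 0 ≤ |v| + v := by linarith [neg_abs_le v]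
  have hc : b / F ≤ S / F := by gcongr
  have hb' : 0 ≤ b / F := by positivity
  have h2 := mul_le_mul_of_nonneg_right hc hv
  have h3 := mul_nonneg hb' hv
  rcases le_total u 0 with h0 | h0
  · rw [abs_of_nonpos h0]; linarith
  · rw [abs_of_nonneg h0]
    have : v * b / F = b / F * v := by ring
    have := mul_le_mul_of_nonneg_left (le_abs_self v) hb'
    linarith

/-- Lemma 7: Lipschitz continuity of the Bayes operator in the prior, with constant
`β(f,b) = sup_x b(x) / ∫ b f dμ`. -/
theorem bayes_operator_L1_lipschitz
    {α : Type*} [MeasurableSpace α] (μ : Measure α)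
    (f g b : α → ℝ)
    (hf_meas : Measurable f) (hg_meas : Measurable g) (hb_meas : Measurable b)
    (hf_nonneg : ∀ x, 0 ≤ f x) (hg_nonneg : ∀ x, 0 ≤ g x) (hb_nonneg : ∀ x, 0 ≤ b x)
    (hf_int : Integrable f μ) (hg_int : Integrable g μ)
    (hf_one : ∫ x, f x ∂μ = 1) (hg_one : ∫ x, g x ∂μ = 1)
    (hb_bdd : BddAbove (Set.range b))
    (hbf_pos : 0 < ∫ x, f x * b x ∂μ)
    (hbg_pos : 0 < ∫ x, g x * b x ∂μ) :
    ∫ x, |bayesOp μ f b x - bayesOp μ g b x| ∂μ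
      ≤ ((⨆ x, b x) / ∫ x, f x * b x ∂μ) * ∫ x, |f x - g x| ∂μ := by
  have hbS : ∀ x, b x ≤ ⨆ x, b x := fun x => le_ciSup hb_bdd x
  have hbd : ∀ᵐ x ∂μ, ‖b x‖ ≤ ⨆ x, b x := Filter.Eventually.of_forall fun x => by
    rw [Real.norm_of_nonneg (hb_nonneg x)]; exact hbS x
  have hfb : Integrable (fun x => f x * b x) μ := hf_int.mul_bdd hb_meas.aestronglyMeasurable hbd
  have hgb : Integrable (fun x => g x * b x) μ := hg_int.mul_bdd hb_meas.aestronglyMeasurable hbd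
  unfold bayesOp
  generalize (⨆ x, b x) = S at *
  generalize hF : ∫ x, f x * b x ∂μ = F at *
  generalize hG : ∫ x, g x * b x ∂μ = G at *
  have iF : ∫ x, f x * b x / F ∂μ = 1 := by rw [integral_div, hF, div_self hbf_pos.ne']
  have iG : ∫ x, g x * b x / G ∂μ = 1 := by rw [integral_div, hG, div_self hbg_pos.ne']
  have jF := hfb.div_const F
  have jG := hgb.div_const G
  rcases le_total G F with hGF | hGF
  · refine abs_int_aux μ (fun x => f x * b x / F - g x * b x / G) (fun x => f x - g x) (S / F)
      (jF.sub jG) (hf_int.sub hg_int) ?_ ?_ fun x =>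
      abs_add_aux hbf_pos (hb_nonneg x) (hbS x) ?_
    · rw [integral_sub jF jG, iF, iG, sub_self]
    · rw [integral_sub hf_int hg_int, hf_one, hg_one, sub_self]
    · have : g x * b x / F ≤ g x * b x / G :=
        div_le_div_of_nonneg_left (mul_nonneg (hg_nonneg x) (hb_nonneg x)) hbg_pos hGF
      rw [sub_mul, sub_div]; linarith
  · simp_rw [abs_sub_comm (f _ * b _ / F), abs_sub_comm (f _)]
    refine abs_int_aux μ (fun x => g x * b x / G - f x * b x / F) (fun x => g x - f x) (S / F)
      (jG.sub jF) (hg_int.sub hf_int) ?_ ?_ fun x =>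
      abs_add_aux hbf_pos (hb_nonneg x) (hbS x) ?_
    · rw [integral_sub jG jF, iF, iG, sub_self]
    · rw [integral_sub hg_int hf_int, hf_one, hg_one, sub_self]
    · have : g x * b x / G ≤ g x * b x / F :=
        div_le_div_of_nonneg_left (mul_nonneg (hg_nonneg x) (hb_nonneg x)) hbf_pos hGF
      rw [sub_mul, sub_div]; linarith
end

section
/- If x ↦ a(x,·) is continuous with respect to the L₁-norm, then for every ε > 0, under i.i.d. sampling of size N from a probability density g, P[‖A* E_N(g) − A* g‖₁ > ε] → 0 exponentially fast in N (there exist constants, depending on ε and a but not on N, such that the probability is at most c₁ exp(−c₂ N)). Moreover, for any fixed compact set K, the convergence is uniform over all densities g with ∫_K g dμ ≥ 1 − ε/6. -/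
open MeasureTheory

lemma aux_hoeffding {α : Type*} [MeasurableSpace α] (P : Measure α) [IsProbabilityMeasure P]
    (f : α → ℝ) (hf : Measurable f) (l : ℝ) (hl : ∀ x, f x ∈ Set.Icc l (l + 1))
    (N : ℕ) (t : ℝ) (ht : 0 ≤ t) :
    (Measure.pi fun _ : Fin N => P).real {xs | t * N ≤ ∑ i, (f (xs i) - ∫ x, f x ∂P)}
      ≤ Real.exp (-(2 * t ^ 2) * N) := by
  have h1 : ProbabilityTheory.HasSubgaussianMGF (fun x => f x - ∫ x, f x ∂P)
      ((‖(l + 1) - l‖₊ / 2) ^ 2) P :=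
    ProbabilityTheory.hasSubgaussianMGF_of_mem_Icc hf.aemeasurable (Filter.Eventually.of_forall hl)
  have h2 : ∀ i : Fin N, ProbabilityTheory.HasSubgaussianMGF
      (fun xs : Fin N → α => f (xs i) - ∫ x, f x ∂P)
      ((‖(l + 1) - l‖₊ / 2) ^ 2) (Measure.pi fun _ : Fin N => P) := by
    intro i
    refine ProbabilityTheory.HasSubgaussianMGF.of_map (Y := fun xs : Fin N → α => xs i)
      (X := fun x => f x - ∫ x, f x ∂P) (measurable_pi_apply i).aemeasurable ?_
    have := (measurePreserving_eval (fun _ : Fin N => P) i).map_eq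
    change Measure.map (fun xs : Fin N → α => xs i) _ = _ at this
    rw [this]
    exact h1
  have h3 := ProbabilityTheory.iIndepFun_pi (μ := fun _ : Fin N => P)
    (X := fun _ (x : α) => f x - ∫ x, f x ∂P) (fun _ => (hf.sub_const _).aemeasurable)
  have h4 := ProbabilityTheory.HasSubgaussianMGF.measure_sum_ge_le_of_iIndepFun h3
    (s := Finset.univ) (fun i _ => h2 i) (ε := t * N) (by positivity)
  refine h4.trans (Real.exp_le_exp.2 (le_of_eq ?_))
  rcases Nat.eq_zero_or_pos N with rfl | hN
  · simp
  · have : (N : ℝ) ≠ 0 := by positivity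
    simp
    field_simp

lemma aux_hoeffding2 {α : Type*} [MeasurableSpace α] (P : Measure α) [IsProbabilityMeasure P]
    (f : α → ℝ) (hf : Measurable f) (hl : ∀ x, f x ∈ Set.Icc (0:ℝ) 1)
    (N : ℕ) (t : ℝ) (ht : 0 ≤ t) :
    (Measure.pi fun _ : Fin N => P).real {xs | t * N ≤ |∑ i, (f (xs i) - ∫ x, f x ∂P)|}
      ≤ 2 * Real.exp (-(2 * t ^ 2) * N) := by
  have h1 := aux_hoeffding P f hf 0 (by simpa using hl) N t ht
  have h2 := aux_hoeffding P (fun x => - f x) hf.neg (-1)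
    (fun x => ⟨by linarith [(hl x).2], by linarith [(hl x).1]⟩) N t ht
  have h3 : {xs : Fin N → α | t * N ≤ |∑ i, (f (xs i) - ∫ x, f x ∂P)|} ⊆
      {xs | t * N ≤ ∑ i, (f (xs i) - ∫ x, f x ∂P)} ∪
      {xs | t * N ≤ ∑ i, (- f (xs i) - ∫ x, - f x ∂P)} := by
    intro xs hxs
    simp only [Set.mem_union, Set.mem_ofPred_eq] at hxs ⊢
    rcases le_abs.1 hxs with h | h
    · exact Or.inl h
    · right
      refine h.trans (le_of_eq ?_)
      rw [integral_neg, ← Finset.sum_neg_distrib]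
      exact Finset.sum_congr rfl fun i _ => by ring
  calc _ ≤ _ := measureReal_mono h3
    _ ≤ _ := measureReal_union_le _ _
    _ ≤ _ := by linarith

lemma aux_det {α : Type*} [MeasurableSpace α] (P μ : Measure α) [IsProbabilityMeasure P]
    [SigmaFinite μ] (a : α → α → ℝ)
    (ha_meas : Measurable (Function.uncurry a))
    (ha_nonneg : ∀ x' x, 0 ≤ a x' x)
    (ha_kernel : ∀ x', ∫ x, a x' x ∂μ = 1)
    (J : α → ℕ) (m : ℕ) (hJ : Measurable J) (hJm : ∀ x, J x ≤ m)
    (c : ℕ → α → ℝ) (hc : ∀ j, Integrable (c j) μ) (hc1 : ∀ j, ∫ y, |c j y| ∂μ ≤ 1)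
    (d : α → ℝ) (hd : Integrable d P) (hd1 : ∀ x, ∫ y, |a x y - c (J x) y| ∂μ ≤ d x)
    (N : ℕ) (xs : Fin N → α) :
    ∫ y, |(N : ℝ)⁻¹ * (∑ i, a (xs i) y) - ∫ x', a x' y ∂P| ∂μ ≤
      (N : ℝ)⁻¹ * (∑ i, d (xs i)) + ∑ j ∈ Finset.range (m + 1),
        |(N : ℝ)⁻¹ * (∑ i, if J (xs i) = j then (1:ℝ) else 0) -
          ∫ x, (if J x = j then (1:ℝ) else 0) ∂P| + ∫ x, d x ∂P := by
  have hai : ∀ x, Integrable (a x) μ := fun x => by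
    by_contra h
    have := ha_kernel x
    rw [integral_undef h] at this
    norm_num at this
  have hq : ∀ j, Measurable (fun x => if J x = j then (1:ℝ) else 0) := fun j =>
    Measurable.ite (hJ (measurableSet_singleton j)) measurable_const measurable_const
  have hqi : ∀ j, Integrable (fun x => if J x = j then (1:ℝ) else 0) P := fun j => by
    refine Integrable.of_bound (hq j).aestronglyMeasurable 1 (Filter.Eventually.of_forall ?_)
    intro x; split_ifs <;> simp
  have hcJ : ∀ x y, c (J x) y = ∑ j ∈ Finset.range (m + 1),
      (if J x = j then (1:ℝ) else 0) * c j y := by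
    intro x y
    rw [Finset.sum_eq_single (J x)]
    · simp
    · intro b _ hb
      simp [Ne.symm hb]
    · intro h
      exact absurd (Finset.mem_range.2 (Nat.lt_succ_of_le (hJm x))) h
  have hA : Integrable (Function.uncurry a) (P.prod μ) := by
    rw [integrable_prod_iff ha_meas.aestronglyMeasurable]
    refine ⟨Filter.Eventually.of_forall hai, ?_⟩
    have : (fun x => ∫ y, ‖Function.uncurry a (x, y)‖ ∂μ) = fun _ => 1 := by
      funext x
      rw [← ha_kernel x]
      refine integral_congr_ae (Filter.Eventually.of_forall fun y => ?_)
      simp [abs_of_nonneg (ha_nonneg x y)]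
    rw [this]
    exact integrable_const _
  have hC : Integrable (fun p : α × α => c (J p.1) p.2) (P.prod μ) := by
    simp_rw [hcJ]
    exact integrable_finsetSum _ fun j _ => (hqi j).mul_prod (hc j)
  have hH : Integrable (fun p : α × α => |a p.1 p.2 - c (J p.1) p.2|) (P.prod μ) := (hA.sub hC).abs
  have hHr : Integrable (fun y => ∫ x, |a x y - c (J x) y| ∂P) μ := hH.integral_prod_right
  have hHl : Integrable (fun x => ∫ y, |a x y - c (J x) y| ∂μ) P := hH.integral_prod_left
  have hI1 : Integrable (fun y => (N : ℝ)⁻¹ * ∑ i, |a (xs i) y - c (J (xs i)) y|) μ :=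
    (integrable_finsetSum _ fun i _ => ((hai _).sub (hc _)).abs).const_mul _
  set r : ℕ → ℝ := fun j => |(N : ℝ)⁻¹ * (∑ i, if J (xs i) = j then (1:ℝ) else 0) -
          ∫ x, (if J x = j then (1:ℝ) else 0) ∂P| with hr
  have hI2 : Integrable (fun y => ∑ j ∈ Finset.range (m + 1), r j * |c j y|) μ :=
    integrable_finsetSum _ fun i _ => ((hc _).abs).const_mul _
  have key : ∀ᵐ y ∂μ, |(N : ℝ)⁻¹ * (∑ i, a (xs i) y) - ∫ x', a x' y ∂P| ≤
      ((N : ℝ)⁻¹ * ∑ i, |a (xs i) y - c (J (xs i)) y|) +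
      (∑ j ∈ Finset.range (m + 1), r j * |c j y|) + ∫ x, |a x y - c (J x) y| ∂P := by
    filter_upwards [hA.prod_left_ae] with y hy
    have hy' : Integrable (fun x => a x y) P := hy
    have hcy : Integrable (fun x => c (J x) y) P := by
      simp_rw [hcJ]
      exact integrable_finsetSum _ fun j _ => (hqi j).mul_const _
    have e1 : ∫ x, c (J x) y ∂P = ∑ j ∈ Finset.range (m + 1),
        (∫ x, (if J x = j then (1:ℝ) else 0) ∂P) * c j y := by
      simp_rw [hcJ]
      rw [integral_finsetSum _ fun j _ => (hqi j).mul_const _]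
      simp_rw [integral_mul_const]
    have e2 : (N : ℝ)⁻¹ * ∑ i, c (J (xs i)) y = ∑ j ∈ Finset.range (m + 1),
        ((N : ℝ)⁻¹ * (∑ i, if J (xs i) = j then (1:ℝ) else 0)) * c j y := by
      simp_rw [hcJ]
      rw [Finset.sum_comm, Finset.mul_sum]
      refine Finset.sum_congr rfl fun j _ => ?_
      rw [← Finset.sum_mul, mul_assoc]
    have e3 : (N : ℝ)⁻¹ * (∑ i, a (xs i) y) - ∫ x', a x' y ∂P =
        (N : ℝ)⁻¹ * (∑ i, (a (xs i) y - c (J (xs i)) y)) +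
        (∑ j ∈ Finset.range (m + 1),
          ((N : ℝ)⁻¹ * (∑ i, if J (xs i) = j then (1:ℝ) else 0) -
          ∫ x, (if J x = j then (1:ℝ) else 0) ∂P) * c j y) -
        ∫ x, (a x y - c (J x) y) ∂P := by
      simp_rw [sub_mul]
      rw [integral_sub hy' hcy, Finset.sum_sub_distrib, Finset.sum_sub_distrib, ← e1, ← e2]
      ring
    rw [e3]
    refine (abs_sub _ _).trans (add_le_add ((abs_add_le _ _).trans (add_le_add ?_ ?_)) ?_)
    · rw [abs_mul, abs_of_nonneg (by positivity : (0:ℝ) ≤ (N : ℝ)⁻¹)]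
      exact mul_le_mul_of_nonneg_left (Finset.abs_sum_le_sum_abs _ _) (by positivity)
    · refine (Finset.abs_sum_le_sum_abs _ _).trans (le_of_eq ?_)
      exact Finset.sum_congr rfl fun j _ => abs_mul _ _
    · exact abs_integral_le_integral_abs
  calc _ ≤ ∫ y, (((N : ℝ)⁻¹ * ∑ i, |a (xs i) y - c (J (xs i)) y|) +
      (∑ j ∈ Finset.range (m + 1), r j * |c j y|) + ∫ x, |a x y - c (J x) y| ∂P) ∂μ :=
        integral_mono_of_nonneg (Filter.Eventually.of_forall fun y => abs_nonneg _)
          ((hI1.add hI2).add hHr) key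
    _ = (N : ℝ)⁻¹ * (∑ i, ∫ y, |a (xs i) y - c (J (xs i)) y| ∂μ) +
        (∑ j ∈ Finset.range (m + 1), r j * ∫ y, |c j y| ∂μ) +
        ∫ x, ∫ y, |a x y - c (J x) y| ∂μ ∂P := by
      rw [integral_add (by exact hI1.add hI2) hHr, integral_add hI1 hI2, integral_const_mul,
        integral_finsetSum _ fun i _ => by exact ((hai (xs i)).sub (hc (J (xs i)))).abs,
        integral_finsetSum _ fun i _ => ((hc _).abs).const_mul _,
        integral_integral_swap (f := fun x y => |a x y - c (J x) y|) hH]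
      simp_rw [integral_const_mul]
    _ ≤ _ := by
      refine add_le_add (add_le_add ?_ ?_) ?_
      · exact mul_le_mul_of_nonneg_left (Finset.sum_le_sum fun i _ => hd1 _) (by positivity)
      · exact Finset.sum_le_sum fun j _ => mul_le_of_le_one_right (abs_nonneg _) (hc1 j)
      · exact integral_mono hHl hd hd1

lemma aux_partition {α : Type*} [MeasurableSpace α] [MetricSpace α]
    [BorelSpace α] (μ : Measure α) (a : α → α → ℝ)
    (ha_nonneg : ∀ x' x, 0 ≤ a x' x)
    (ha_kernel : ∀ x', ∫ x, a x' x ∂μ = 1)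
    (ha_cont : ∀ x₀ : α, ∀ δ > (0:ℝ), ∃ η > (0:ℝ), ∀ x, dist x x₀ < η →
      (∫ y, |a x y - a x₀ y| ∂μ) < δ) (δ : ℝ) (hδ : 0 < δ) (K : Set α) (hK : IsCompact K) :
    ∃ (J : α → ℕ) (m : ℕ) (c : ℕ → α → ℝ), Measurable J ∧ (∀ x, J x ≤ m) ∧
      (∀ j, Integrable (c j) μ) ∧ (∀ j, ∫ y, |c j y| ∂μ ≤ 1) ∧
      (∀ x, ∫ y, |a x y - c (J x) y| ∂μ ≤ δ + if J x = m then 1 else 0) ∧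
      (∀ x, J x = m → x ∉ K) := by
  classical
  have hai : ∀ x, Integrable (a x) μ := fun x => by
    by_contra h
    have := ha_kernel x
    rw [integral_undef h] at this
    norm_num at this
  have ha1 : ∀ x, ∫ y, |a x y| ∂μ = 1 := fun x => by
    simp_rw [abs_of_nonneg (ha_nonneg x _)]
    exact ha_kernel x
  choose η hη hη' using fun x₀ => ha_cont x₀ δ hδ
  obtain ⟨t, -, ht⟩ := hK.elim_nhds_subcover (fun x => Metric.ball x (η x))
    (fun x _ => Metric.ball_mem_nhds x (hη x))
  set L := t.toList with hL
  let p : α → ℕ → Prop := fun x n => ∀ z, L[n]? = some z → dist x z < η z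
  have hp : ∀ x, p x L.length := fun x z hz => by simp at hz
  have hpe : ∀ x, ∃ n, p x n := fun x => ⟨_, hp x⟩
  obtain ⟨J, hJ, hJ1, hJ2⟩ : ∃ J : α → ℕ, Measurable J ∧ (∀ x, p x (J x)) ∧
      ∀ x n, p x n → J x ≤ n := by
    refine ⟨fun x => Nat.find (hpe x), ?_, fun x => Nat.find_spec (hpe x),
      fun x n h => Nat.find_min' (hpe x) h⟩
    refine measurable_find _ fun k => ?_
    rcases h : L[k]? with _ | z
    · simp [p, h]
    · have : {x | p x k} = Metric.ball z (η z) := by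
          ext x; simp [p, h]
      rw [this]
      exact Metric.isOpen_ball.measurableSet
  refine ⟨J, L.length, fun n => (L[n]?).elim (fun _ => 0) a, hJ, ?_, ?_, ?_, ?_, ?_⟩
  · exact fun x => hJ2 x _ (hp x)
  · intro j
    rcases h : L[j]? with _ | z
    · simp [h]
    · simpa [h] using hai z
  · intro j
    rcases h : L[j]? with _ | z
    · simp [h]
    · simpa [h] using (ha1 z).le
  · intro x
    have h1 := hJ1 x
    have h2 := hJ2 x _ (hp x)
    dsimp only
    generalize J x = k at h1 h2 ⊢
    rcases h : L[k]? with _ | z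
    · have : k = L.length := le_antisymm h2 (by simpa using h)
      subst this
      simp [ha1, hδ.le]
    · have h3 := hη' z x (h1 z h)
      refine h3.le.trans ?_
      split_ifs <;> linarith
  · intro x hx hxK
    have := ht hxK
    simp only [Set.mem_iUnion] at this
    obtain ⟨z, hz, hxz⟩ := this
    have hz' : z ∈ L := by simpa [hL] using hz
    obtain ⟨n, hn, hnz⟩ := List.getElem_of_mem hz'
    have : p x n := by
      intro w hw
      rw [List.getElem?_eq_getElem hn, hnz] at hw
      cases hw
      exact hxz
    have := hJ2 x _ this
    omega

lemma aux_main {α : Type*} [MeasurableSpace α] [MetricSpace α]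
    [BorelSpace α]
    (μ : Measure α) [SigmaFinite μ]
    (a : α → α → ℝ)
    (ha_meas : Measurable (Function.uncurry a))
    (ha_nonneg : ∀ x' x, 0 ≤ a x' x)
    (ha_kernel : ∀ x', ∫ x, a x' x ∂μ = 1)
    (ha_cont : ∀ x₀ : α, ∀ δ > (0:ℝ), ∃ η > (0:ℝ), ∀ x, dist x x₀ < η →
      (∫ y, |a x y - a x₀ y| ∂μ) < δ) (ε : ℝ) (hε : 0 < ε) (K : Set α) (hK : IsCompact K) :
    ∃ c₁ c₂ : ℝ, 0 < c₂ ∧ ∀ P : Measure α, IsProbabilityMeasure P → 1 - ε / 6 ≤ P.real K →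
      ∀ N : ℕ, (Measure.pi fun _ : Fin N => P)
        {xs | ε < ∫ y, |(N : ℝ)⁻¹ * (∑ i, a (xs i) y) - ∫ x', a x' y ∂P| ∂μ}
          ≤ ENNReal.ofReal (c₁ * Real.exp (-c₂ * N)) := by
  obtain ⟨J, m, c, hJ, hJm, hc, hc1, hd, hJK⟩ :=
    aux_partition μ a ha_nonneg ha_kernel ha_cont (ε / 6) (by positivity) K hK
  set t : ℝ := ε / (3 * (m + 2)) with ht
  have htpos : 0 < t := by positivity
  refine ⟨2 * (m + 1), 2 * t ^ 2, by positivity, ?_⟩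
  intro P hP hPK N
  set q : ℕ → α → ℝ := fun j x => if J x = j then (1:ℝ) else 0 with hqdef
  have hq : ∀ j, Measurable (q j) := fun j =>
    Measurable.ite (hJ (measurableSet_singleton j)) measurable_const measurable_const
  have hq01 : ∀ j x, q j x ∈ Set.Icc (0:ℝ) 1 := by
    intro j x; simp only [hqdef]; split_ifs <;> simp
  have hqi : ∀ j, Integrable (q j) P := fun j => by
    refine Integrable.of_bound (hq j).aestronglyMeasurable 1 (Filter.Eventually.of_forall ?_)
    intro x
    rw [Real.norm_eq_abs, abs_of_nonneg (hq01 j x).1]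
    exact (hq01 j x).2
  rcases Nat.eq_zero_or_pos N with rfl | hN
  · refine prob_le_one.trans ?_
    rw [ENNReal.one_le_ofReal]
    simp
    have : (0:ℝ) ≤ m := by positivity
    linarith
  have hN' : (0:ℝ) < N := by exact_mod_cast hN
  have hpm : ∫ x, q m x ∂P ≤ ε / 6 := by
    have h1 : ∫ x, q m x ∂P ≤ ∫ x, Set.indicator Kᶜ (fun _ => (1:ℝ)) x ∂P := by
      refine integral_mono (hqi m)
        ((integrable_const (1:ℝ)).indicator hK.isClosed.measurableSet.compl) ?_
      intro x
      simp only [hqdef]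
      split_ifs with h
      · simp [hJK x h]
      · exact Set.indicator_nonneg (fun _ _ => zero_le_one) _
    rw [integral_indicator hK.isClosed.measurableSet.compl] at h1
    simp only [integral_const, smul_eq_mul, mul_one, measureReal_restrict_apply_univ] at h1
    rw [probReal_compl_eq_one_sub hK.isClosed.measurableSet] at h1
    linarith
  have hsub : {xs : Fin N → α |
      ε < ∫ y, |(N : ℝ)⁻¹ * (∑ i, a (xs i) y) - ∫ x', a x' y ∂P| ∂μ} ⊆
      ⋃ j ∈ Finset.range (m + 1), {xs | t * N ≤ |∑ i, (q j (xs i) - ∫ x, q j x ∂P)|} := by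
    intro xs hxs
    by_contra hcon
    simp only [Set.mem_iUnion, not_exists, Set.mem_ofPred_eq, not_le] at hcon
    have hdet := aux_det P μ a ha_meas ha_nonneg ha_kernel J m hJ hJm c hc hc1
      (fun x => ε / 6 + q m x) ((integrable_const _).add (hqi m)) hd N xs
    have hr : ∀ j ∈ Finset.range (m + 1), |(N : ℝ)⁻¹ * (∑ i, q j (xs i)) - ∫ x, q j x ∂P| < t := by
      intro j hj
      have h := hcon j hj
      have e : (N : ℝ)⁻¹ * (∑ i, q j (xs i)) - ∫ x, q j x ∂P =
          (N : ℝ)⁻¹ * ∑ i, (q j (xs i) - ∫ x, q j x ∂P) := by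
        rw [Finset.sum_sub_distrib]
        simp
        field_simp
      rw [e, abs_mul, abs_of_pos (inv_pos.2 hN'), inv_mul_lt_iff₀ hN', mul_comm (N : ℝ)]
      exact h
    have e1 : (N : ℝ)⁻¹ * ∑ i, (ε / 6 + q m (xs i)) = ε / 6 + (N : ℝ)⁻¹ * ∑ i, q m (xs i) := by
      rw [Finset.sum_add_distrib, mul_add]
      simp
      field_simp
    have e2 : ∫ x, (ε / 6 + q m x) ∂P = ε / 6 + ∫ x, q m x ∂P := by
      rw [integral_add (integrable_const _) (hqi m)]
      simp
    have e3 : (N : ℝ)⁻¹ * ∑ i, q m (xs i) ≤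
        |(N : ℝ)⁻¹ * (∑ i, q m (xs i)) - ∫ x, q m x ∂P| + ∫ x, q m x ∂P := by
      linarith [le_abs_self ((N : ℝ)⁻¹ * (∑ i, q m (xs i)) - ∫ x, q m x ∂P)]
    have e4 := hr m (Finset.self_mem_range_succ m)
    have e5 := Finset.sum_le_sum fun j hj => (hr j hj).le
    rw [Finset.sum_const, Finset.card_range, nsmul_eq_mul] at e5
    have e6 : ((m + 1 : ℕ) : ℝ) * t + t = ε / 3 := by
      rw [ht]; push_cast; field_simp; ring
    have hxs' := lt_of_lt_of_le (show ε < _ by simpa only [Set.mem_ofPred_eq] using hxs) hdet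
    change ε < (N : ℝ)⁻¹ * ∑ i, (ε / 6 + q m (xs i)) + ∑ j ∈ Finset.range (m + 1),
      |(N : ℝ)⁻¹ * (∑ i, q j (xs i)) - ∫ x, q j x ∂P| + ∫ x, (ε / 6 + q m x) ∂P at hxs'
    rw [e1, e2] at hxs'
    linarith
  calc _ ≤ _ := measure_mono hsub
    _ ≤ _ := measure_biUnion_finset_le _ _
    _ ≤ ∑ j ∈ Finset.range (m + 1), ENNReal.ofReal (2 * Real.exp (-(2 * t ^ 2) * N)) := by
      refine Finset.sum_le_sum fun j _ => ?_
      rw [← ofReal_measureReal]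
      exact ENNReal.ofReal_le_ofReal (aux_hoeffding2 P (q j) (hq j) (hq01 j) N t htpos.le)
    _ = _ := by
      rw [← ENNReal.ofReal_sum_of_nonneg (fun _ _ => by positivity)]
      congr 1
      simp
      ring

/-- Lemma 8: if `x ↦ a(x,·)` is continuous for the L¹-norm, then for every `ε > 0`,
under i.i.d. sampling of size `N` from a density `g`,
`P[‖A* E_N(g) − A* g‖₁ > ε] → 0` exponentially fast in `N`; moreover, for every
fixed compact set `K`, the constants can be chosen uniformly over all densities `g`
with `∫_K g dμ ≥ 1 − ε/6`. -/
theorem markov_empirical_L1_exponential_bound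
    {α : Type*} [MeasurableSpace α] [MetricSpace α] [CompleteSpace α]
    [SecondCountableTopology α] [BorelSpace α]
    (μ : Measure α) [SigmaFinite μ]
    (a : α → α → ℝ)
    (ha_meas : Measurable (Function.uncurry a))
    (ha_nonneg : ∀ x' x, 0 ≤ a x' x)
    (ha_kernel : ∀ x', ∫ x, a x' x ∂μ = 1)
    -- L¹-continuity of x ↦ a(x,·)
    (ha_cont : ∀ x₀ : α, ∀ δ > (0:ℝ), ∃ η > (0:ℝ), ∀ x, dist x x₀ < η →
      (∫ y, |a x y - a x₀ y| ∂μ) < δ) :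
    -- exponential convergence for each fixed density g
    (∀ g : α → ℝ, Measurable g → (∀ x, 0 ≤ g x) → Integrable g μ →
      (∫ x, g x ∂μ) = 1 →
      ∀ ε : ℝ, 0 < ε → ∃ c₁ c₂ : ℝ, 0 < c₂ ∧ ∀ N : ℕ,
        (Measure.pi fun _ : Fin N => μ.withDensity fun x => ENNReal.ofReal (g x))
            {xs | ε < ∫ y, |(N : ℝ)⁻¹ * (∑ i, a (xs i) y)
                - ∫ x', g x' * a x' y ∂μ| ∂μ}
          ≤ ENNReal.ofReal (c₁ * Real.exp (-c₂ * N)))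
    -- with constants uniform over densities concentrated on a fixed compact set
    ∧ (∀ ε : ℝ, 0 < ε → ∀ K : Set α, IsCompact K →
        ∃ c₁ c₂ : ℝ, 0 < c₂ ∧
          ∀ g : α → ℝ, Measurable g → (∀ x, 0 ≤ g x) → Integrable g μ →
            (∫ x, g x ∂μ) = 1 → (1 - ε / 6 ≤ ∫ x in K, g x ∂μ) →
            ∀ N : ℕ,
              (Measure.pi fun _ : Fin N => μ.withDensity fun x => ENNReal.ofReal (g x))
                  {xs | ε < ∫ y, |(N : ℝ)⁻¹ * (∑ i, a (xs i) y)
                      - ∫ x', g x' * a x' y ∂μ| ∂μ}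
                ≤ ENNReal.ofReal (c₁ * Real.exp (-c₂ * N))) := by
  have hPr : ∀ g : α → ℝ, Measurable g → (∀ x, 0 ≤ g x) → Integrable g μ →
      (∫ x, g x ∂μ) = 1 →
      IsProbabilityMeasure (μ.withDensity fun x => ENNReal.ofReal (g x)) := by
    intro g hg hg0 hgi hg1
    refine ⟨?_⟩
    rw [withDensity_apply _ MeasurableSet.univ, Measure.restrict_univ,
      ← ofReal_integral_eq_lintegral_ofReal hgi (Filter.Eventually.of_forall hg0), hg1]
    simp
  have hin : ∀ g : α → ℝ, Measurable g → (∀ x, 0 ≤ g x) → ∀ y,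
      ∫ x', a x' y ∂(μ.withDensity fun x => ENNReal.ofReal (g x)) = ∫ x', g x' * a x' y ∂μ := by
    intro g hg hg0 y
    rw [integral_withDensity_eq_integral_toReal_smul hg.ennreal_ofReal
      (Filter.Eventually.of_forall fun x => ENNReal.ofReal_lt_top)]
    simp [ENNReal.toReal_ofReal (hg0 _)]
  have hKr : ∀ g : α → ℝ, (∀ x, 0 ≤ g x) → Integrable g μ → ∀ K : Set α, IsCompact K →
      (μ.withDensity fun x => ENNReal.ofReal (g x)).real K = ∫ x in K, g x ∂μ := by
    intro g hg0 hgi K hK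
    rw [measureReal_def, withDensity_apply _ hK.isClosed.measurableSet,
      ← ofReal_integral_eq_lintegral_ofReal hgi.restrict (Filter.Eventually.of_forall hg0),
      ENNReal.toReal_ofReal (integral_nonneg hg0)]
  have main : ∀ ε : ℝ, 0 < ε → ∀ K : Set α, IsCompact K →
        ∃ c₁ c₂ : ℝ, 0 < c₂ ∧
          ∀ g : α → ℝ, Measurable g → (∀ x, 0 ≤ g x) → Integrable g μ →
            (∫ x, g x ∂μ) = 1 → (1 - ε / 6 ≤ ∫ x in K, g x ∂μ) →
            ∀ N : ℕ,
              (Measure.pi fun _ : Fin N => μ.withDensity fun x => ENNReal.ofReal (g x))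
                  {xs | ε < ∫ y, |(N : ℝ)⁻¹ * (∑ i, a (xs i) y)
                      - ∫ x', g x' * a x' y ∂μ| ∂μ}
                ≤ ENNReal.ofReal (c₁ * Real.exp (-c₂ * N)) := by
    intro ε hε K hK
    obtain ⟨c₁, c₂, hc, h⟩ :=
      aux_main μ a ha_meas ha_nonneg ha_kernel ha_cont ε hε K hK
    refine ⟨c₁, c₂, hc, fun g hg hg0 hgi hg1 hgK N => ?_⟩
    have := h _ (hPr g hg hg0 hgi hg1) (by rw [hKr g hg0 hgi K hK]; exact hgK) N
    simp_rw [hin g hg hg0] at this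
    exact this
  refine ⟨?_, main⟩
  intro g hg hg0 hgi hg1 ε hε
  have hP := hPr g hg hg0 hgi hg1
  have ht := isTightMeasureSet_singleton (μ := μ.withDensity fun x => ENNReal.ofReal (g x))
  rw [isTightMeasureSet_iff_exists_isCompact_measure_compl_le] at ht
  obtain ⟨K, hK, hK2⟩ := ht (ENNReal.ofReal (ε / 6)) (by simpa using hε)
  have hK3 := hK2 _ rfl
  have hK4 : (μ.withDensity fun x => ENNReal.ofReal (g x)).real Kᶜ ≤ ε / 6 :=
    ENNReal.toReal_le_of_le_ofReal (by positivity) hK3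
  rw [probReal_compl_eq_one_sub hK.isClosed.measurableSet, hKr g hg0 hgi K hK] at hK4
  obtain ⟨c₁, c₂, hc, h⟩ := main ε hε K hK
  exact ⟨c₁, c₂, hc, h g hg hg0 hgi hg1 (by linarith)⟩
end

section
/- Assume condition (19) (c_a h_t(x) ≤ a_t(x',x) ≤ C_a h_t(x) for all t, x, x') and condition (20) (0 < ∫ b_t(x, y_t) h_t(x) dμ(x) < ∞ for all t). Then for any two probability densities f and g and any s < t, ‖K_{s,t}(f) − K_{s,t}(g)‖₁ ≤ γ_a^{-1} (1 − γ_a)^{t−s} ‖f − g‖₁, where γ_a = c_a/C_a. -/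
open MeasureTheory

/-- The Markov operator `A_t*`. -/
noncomputable def markovOp {α : Type*} [MeasurableSpace α] (μ : Measure α)
    (a : α → α → ℝ) (f : α → ℝ) : α → ℝ :=
  fun x => ∫ x', f x' * a x' x ∂μ

/-- The filter transition operator `K_{s,t}`, defined by `K_{t,t}(f) = f` and
`K_{s,t}(f) = K_{s+1,t}(B(A_{s+1}* f, b_{s+1}))` for `s < t`; equivalently, apply
the one-step filter updates for times `s+1, …, t` in turn. -/
noncomputable def filterK {α : Type*} [MeasurableSpace α] (μ : Measure α)
    (a : ℕ → α → α → ℝ) (b : ℕ → α → ℝ) (s t : ℕ) (f : α → ℝ) : α → ℝ :=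
  ((List.range (t - s)).map fun i => s + 1 + i).foldl
    (fun g r => bayesOp μ (markovOp μ (a r) g) (b r)) f

set_option linter.unusedSectionVars false

/-- Standing assumptions on a one-step kernel with a nonnegative weight. -/
structure StepOK {α : Type*} [MeasurableSpace α] (μ : Measure α)
    (a : α → α → ℝ) (w h : α → ℝ) (ca Ca : ℝ) : Prop where
  ca_pos : 0 < ca
  lt : ca < Ca
  am : Measurable (Function.uncurry a)
  wm : Measurable w
  w0 : ∀ x, 0 ≤ w x
  hm : Measurable h
  h0 : ∀ x, 0 ≤ h x
  lo : ∀ x' x, ca * h x ≤ a x' x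
  hi : ∀ x' x, a x' x ≤ Ca * h x
  hpos : 0 < ∫ x, w x * h x ∂μ
  hint : Integrable (fun x => w x * h x) μ

/-- The backward operator. -/
noncomputable def backOp {α : Type*} [MeasurableSpace α] (μ : Measure α)
    (a : α → α → ℝ) (w : α → ℝ) : α → ℝ :=
  fun x' => ∫ x, a x' x * w x ∂μ

namespace StepOK

variable {α : Type*} [MeasurableSpace α] {μ : Measure α} [SigmaFinite μ]
  {a : α → α → ℝ} {w h : α → ℝ} {ca Ca : ℝ}

lemma a0 (S : StepOK μ a w h ca Ca) (x' x : α) : 0 ≤ a x' x :=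
  (mul_nonneg S.ca_pos.le (S.h0 x)).trans (S.lo x' x)

lemma Ca_pos (S : StepOK μ a w h ca Ca) : 0 < Ca := S.ca_pos.trans S.lt

lemma int_row (S : StepOK μ a w h ca Ca) (x' : α) : Integrable (fun x => a x' x * w x) μ := by
  have hm : Measurable (fun x => a x' x) := S.am.comp measurable_prodMk_left
  refine (S.hint.const_mul Ca).mono' (hm.mul S.wm).aestronglyMeasurable
    (Filter.Eventually.of_forall fun x => ?_)
  rw [Real.norm_eq_abs, abs_of_nonneg (mul_nonneg (S.a0 x' x) (S.w0 x))]
  have := mul_le_mul_of_nonneg_right (S.hi x' x) (S.w0 x)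
  linarith

lemma back_lo (S : StepOK μ a w h ca Ca) (x' : α) :
    ca * ∫ x, w x * h x ∂μ ≤ backOp μ a w x' := by
  rw [← integral_const_mul]
  refine integral_mono (S.hint.const_mul ca) (S.int_row x') fun x => ?_
  have := mul_le_mul_of_nonneg_right (S.lo x' x) (S.w0 x)
  simp only
  linarith

lemma back_hi (S : StepOK μ a w h ca Ca) (x' : α) :
    backOp μ a w x' ≤ Ca * ∫ x, w x * h x ∂μ := by
  rw [← integral_const_mul]
  refine integral_mono (S.int_row x') (S.hint.const_mul Ca) fun x => ?_
  have := mul_le_mul_of_nonneg_right (S.hi x' x) (S.w0 x)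
  simp only
  linarith

lemma back_meas (S : StepOK μ a w h ca Ca) : Measurable (backOp μ a w) := by
  have hm : Measurable (fun p : α × α => a p.1 p.2 * w p.2) :=
    Measurable.mul S.am (S.wm.comp measurable_snd)
  exact (hm.stronglyMeasurable.integral_prod_right' (ν := μ)).measurable

lemma back_pos (S : StepOK μ a w h ca Ca) (x' : α) : 0 < backOp μ a w x' :=
  (mul_pos S.ca_pos S.hpos).trans_le (S.back_lo x')

lemma int_mul_back (S : StepOK μ a w h ca Ca) {u : α → ℝ} (hu : Integrable u μ) :
    Integrable (fun x => u x * backOp μ a w x) μ := by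
  refine hu.mul_bdd (c := Ca * ∫ x, w x * h x ∂μ) S.back_meas.aestronglyMeasurable
    (Filter.Eventually.of_forall fun x => ?_)
  rw [Real.norm_eq_abs, abs_of_pos (S.back_pos x)]
  exact S.back_hi x

lemma int_col (S : StepOK μ a w h ca Ca) {u : α → ℝ} (hu : Integrable u μ) (x : α) :
    Integrable (fun x' => u x' * a x' x) μ := by
  have hm : Measurable (fun x' => a x' x) := S.am.comp measurable_prodMk_right
  refine hu.mul_bdd (c := Ca * h x) hm.aestronglyMeasurable
    (Filter.Eventually.of_forall fun x' => ?_)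
  rw [Real.norm_eq_abs, abs_of_nonneg (S.a0 x' x)]
  exact S.hi x' x

lemma int_prod (S : StepOK μ a w h ca Ca) {u : α → ℝ} (hu : Integrable u μ) :
    Integrable (fun p : α × α => u p.1 * (a p.1 p.2 * w p.2)) (μ.prod μ) := by
  have hm : Measurable (fun p : α × α => a p.1 p.2 * w p.2) :=
    Measurable.mul S.am (S.wm.comp measurable_snd)
  refine ((hu.norm.mul_prod S.hint).const_mul Ca).mono'
    (hu.1.comp_fst.mul hm.aestronglyMeasurable) (Filter.Eventually.of_forall fun p => ?_)
  rw [norm_mul, Real.norm_eq_abs (a _ _ * _),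
    abs_of_nonneg (mul_nonneg (S.a0 p.1 p.2) (S.w0 p.2))]
  have h1 := mul_le_mul_of_nonneg_right (S.hi p.1 p.2) (S.w0 p.2)
  have h2 := mul_le_mul_of_nonneg_left h1 (norm_nonneg (u p.1))
  calc _ ≤ _ := h2
    _ = _ := by ring

lemma markov_mul (u : α → ℝ) (x : α) :
    markovOp μ a u x * w x = ∫ x', u x' * (a x' x * w x) ∂μ := by
  unfold markovOp
  rw [← integral_mul_const]
  simp only [mul_assoc]

lemma int_markov (S : StepOK μ a w h ca Ca) {u : α → ℝ} (hu : Integrable u μ) :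
    Integrable (fun x => markovOp μ a u x * w x) μ := by
  simp only [markov_mul]
  exact (S.int_prod hu).integral_prod_right

lemma dual (S : StepOK μ a w h ca Ca) {u : α → ℝ} (hu : Integrable u μ) :
    ∫ x, markovOp μ a u x * w x ∂μ = ∫ x', u x' * backOp μ a w x' ∂μ := by
  simp only [markov_mul]
  rw [integral_integral_swap (f := fun x x' => u x' * (a x' x * w x)) (S.int_prod hu).swap]
  simp only [integral_const_mul, backOp]

lemma contract (S : StepOK μ a w h ca Ca) {u : α → ℝ} (hu : Integrable u μ)
    (h0 : ∫ x, u x * backOp μ a w x ∂μ = 0) :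
    ∫ x, |markovOp μ a u x * w x| ∂μ
      ≤ (1 - ca / Ca) * ∫ x, |u x| * backOp μ a w x ∂μ := by
  set H := ∫ x, w x * h x ∂μ with hH
  set I := ∫ x, |u x| * backOp μ a w x ∂μ with hI
  have hHpos : 0 < H := S.hpos
  have hCa := S.Ca_pos
  set k := ca / (Ca * H) with hk
  have hk0 : 0 < k := div_pos S.ca_pos (mul_pos hCa hHpos)
  have key : ∀ x, |markovOp μ a u x * w x|
      ≤ markovOp μ a (fun x => |u x|) x * w x - k * I * (w x * h x) := by
    intro x
    have e1 : markovOp μ a u x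
        = ∫ x', u x' * (a x' x - k * h x * backOp μ a w x') ∂μ := by
      have : (fun x' => u x' * (a x' x - k * h x * backOp μ a w x'))
          = fun x' => u x' * a x' x - k * h x * (u x' * backOp μ a w x') := by
        funext x'; ring
      rw [this, integral_sub (S.int_col hu x) ((S.int_mul_back hu).const_mul _),
        integral_const_mul, h0]
      simp [markovOp]
    have e2 : markovOp μ a (fun x => |u x|) x - k * h x * I
        = ∫ x', |u x'| * (a x' x - k * h x * backOp μ a w x') ∂μ := by
      have : (fun x' => |u x'| * (a x' x - k * h x * backOp μ a w x'))
          = fun x' => |u x'| * a x' x - k * h x * (|u x'| * backOp μ a w x') := by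
        funext x'; ring
      rw [this, integral_sub (S.int_col hu.abs x) ((S.int_mul_back hu.abs).const_mul _),
        integral_const_mul]
      rfl
    have e3 : |markovOp μ a u x| ≤ markovOp μ a (fun x => |u x|) x - k * h x * I := by
      rw [e1, e2]
      refine (abs_integral_le_integral_abs).trans (le_of_eq ?_)
      congr 1
      funext x'
      rw [abs_mul]
      congr 1
      apply abs_of_nonneg
      have h1 := mul_le_mul_of_nonneg_left (S.back_hi x') (mul_nonneg hk0.le (S.h0 x))
      have h2 : k * h x * (Ca * H) = ca * h x := by
        rw [hk]; field_simp
      have h3 := S.lo x' x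
      rw [← hH] at h1
      linarith
    rw [abs_mul, abs_of_nonneg (S.w0 x)]
    have := mul_le_mul_of_nonneg_right e3 (S.w0 x)
    linarith
  have hint2 := (S.int_markov hu.abs).sub (S.hint.const_mul (k * I))
  refine (integral_mono (S.int_markov hu).abs hint2 key).trans (le_of_eq ?_)
  have : ∫ x, (markovOp μ a (fun x => |u x|) x * w x - k * I * (w x * h x)) ∂μ
      = I - k * I * H := by
    rw [integral_sub (S.int_markov hu.abs) (S.hint.const_mul (k * I)), integral_const_mul,
      S.dual hu.abs]
  refine Eq.trans this ?_
  rw [hk]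
  field_simp

end StepOK

/-- A measurable probability density. -/
structure Dens {α : Type*} [MeasurableSpace α] (μ : Measure α) (f : α → ℝ) : Prop where
  m : Measurable f
  nn : ∀ x, 0 ≤ f x
  i : Integrable f μ
  one : ∫ x, f x ∂μ = 1

section

variable {α : Type*} [MeasurableSpace α] {μ : Measure α} [SigmaFinite μ]
  {a : α → α → ℝ} {w h : α → ℝ} {ca Ca : ℝ}

lemma dual_pos (S : StepOK μ a w h ca Ca) {f : α → ℝ} (hf : Dens μ f) :
    ca * ∫ x, w x * h x ∂μ ≤ ∫ x, f x * backOp μ a w x ∂μ := by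
  have : ca * ∫ x, w x * h x ∂μ = ∫ x, f x * (ca * ∫ x, w x * h x ∂μ) ∂μ := by
    rw [integral_mul_const, hf.one, one_mul]
  rw [this]
  exact integral_mono (hf.i.mul_const _) (S.int_mul_back hf.i)
    fun x => mul_le_mul_of_nonneg_left (S.back_lo x) (hf.nn x)

lemma norm_pos (S : StepOK μ a w h ca Ca) {f : α → ℝ} (hf : Dens μ f) :
    0 < ∫ x, markovOp μ a f x * w x ∂μ := by
  rw [S.dual hf.i]
  exact (mul_pos S.ca_pos S.hpos).trans_le (dual_pos S hf)

lemma dens_step (S : StepOK μ a w h ca Ca) {f : α → ℝ} (hf : Dens μ f) :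
    Dens μ (bayesOp μ (markovOp μ a f) w) := by
  have hm : Measurable (markovOp μ a f) := by
    have : Measurable (fun p : α × α => f p.1 * a p.1 p.2) :=
      Measurable.mul (hf.m.comp measurable_fst) S.am
    exact (this.stronglyMeasurable.integral_prod_left' (μ := μ)).measurable
  have hc := norm_pos S hf
  refine ⟨(hm.mul S.wm).div_const _, fun x => ?_, (S.int_markov hf.i).div_const _, ?_⟩
  · refine div_nonneg (mul_nonneg ?_ (S.w0 x)) hc.le
    exact integral_nonneg fun x' => mul_nonneg (hf.nn x') (S.a0 x' x)
  · unfold bayesOp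
    rw [integral_div, div_self hc.ne']

lemma first_step_aux (S : StepOK μ a w h ca Ca) {f g : α → ℝ} (hf : Dens μ f) (hg : Dens μ g)
    (hle : ∫ x, g x * backOp μ a w x ∂μ ≤ ∫ x, f x * backOp μ a w x ∂μ) :
    ∫ x, |f x / (∫ x, f x * backOp μ a w x ∂μ) - g x / (∫ x, g x * backOp μ a w x ∂μ)|
      * backOp μ a w x ∂μ ≤ (ca / Ca)⁻¹ * ∫ x, |f x - g x| ∂μ := by
  have hF := dual_pos S hf
  have hG := dual_pos S hg
  have hcH : 0 < ca * ∫ x, w x * h x ∂μ := mul_pos S.ca_pos S.hpos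
  set β := backOp μ a w with hβ
  set F := ∫ x, f x * β x ∂μ with hFd
  set G := ∫ x, g x * β x ∂μ with hGd
  have hF0 : 0 < F := hcH.trans_le hF
  have hG0 : 0 < G := hcH.trans_le hG
  have hiu : Integrable (fun x => f x / F - g x / G) μ :=
    (hf.i.div_const F).sub (hg.i.div_const G)
  have hz : ∫ x, (f x / F - g x / G) * β x ∂μ = 0 := by
    have : (fun x => (f x / F - g x / G) * β x)
        = fun x => f x * β x / F - g x * β x / G := by funext x; ring
    rw [this, integral_sub ((S.int_mul_back hf.i).div_const F)
      ((S.int_mul_back hg.i).div_const G), integral_div, integral_div,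
      ← hβ, ← hFd, ← hGd, div_self hF0.ne', div_self hG0.ne', sub_self]
  have hz2 : ∫ x, (f x - g x) ∂μ = 0 := by
    rw [integral_sub hf.i hg.i, hf.one, hg.one, sub_self]
  have hβF : ∀ x, β x / F ≤ (ca / Ca)⁻¹ := by
    intro x
    rw [inv_div, div_le_div_iff₀ hF0 S.ca_pos]
    have h1 := mul_le_mul_of_nonneg_left (S.back_hi x) S.ca_pos.le
    have h2 := mul_le_mul_of_nonneg_left hF S.Ca_pos.le
    rw [← hβ] at h1
    linarith
  have hpt : ∀ x, |f x / F - g x / G| * β x + (f x / F - g x / G) * β x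
      ≤ (ca / Ca)⁻¹ * (|f x - g x| + (f x - g x)) := by
    intro x
    have hb : 0 < β x := S.back_pos x
    have hnn : 0 ≤ |f x - g x| + (f x - g x) := by linarith [neg_abs_le (f x - g x)]
    have hγ : 0 ≤ (ca / Ca)⁻¹ := inv_nonneg.2 (div_nonneg S.ca_pos.le S.Ca_pos.le)
    rcases le_total (f x / F - g x / G) 0 with hs | hs
    · rw [abs_of_nonpos hs]
      have := mul_nonneg hγ hnn
      linarith
    · rw [abs_of_nonneg hs]
      have h1 : g x / F ≤ g x / G := div_le_div_of_nonneg_left (hg.nn x) hG0 hle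
      have h2 : f x / F - g x / G ≤ (f x - g x) / F := by rw [sub_div]; linarith
      have h3 : (f x / F - g x / G) * β x ≤ (f x - g x) / F * β x :=
        mul_le_mul_of_nonneg_right h2 hb.le
      have h5 : 0 ≤ f x - g x := by
        have := hs.trans h2
        by_contra hc
        exact absurd (div_neg_of_neg_of_pos (not_le.1 hc) hF0) (not_lt.2 this)
      have h4 : (f x - g x) / F * β x ≤ (ca / Ca)⁻¹ * (f x - g x) := by
        have := mul_le_mul_of_nonneg_right (hβF x) h5
        calc _ = β x / F * (f x - g x) := by ring
          _ ≤ _ := this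
      rw [abs_of_nonneg h5]
      linarith
  have i1 := S.int_mul_back hiu.abs
  have i2 := S.int_mul_back hiu
  have i3 := (hf.i.sub hg.i).abs
  have i4 := hf.i.sub hg.i
  have hmono := integral_mono (i1.add i2) ((i3.add i4).const_mul (ca / Ca)⁻¹) hpt
  have l1 : ∫ x, (|f x / F - g x / G| * β x + (f x / F - g x / G) * β x) ∂μ
      = ∫ x, |f x / F - g x / G| * β x ∂μ := by
    rw [integral_add i1 i2, ← hβ, hz, add_zero]
  have l2 : ∫ x, (ca / Ca)⁻¹ * (|f x - g x| + (f x - g x)) ∂μ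
      = (ca / Ca)⁻¹ * ∫ x, |f x - g x| ∂μ := by
    rw [integral_const_mul]
    congr 1
    refine (integral_add i3 i4).trans ?_
    change _ + ∫ x, (f x - g x) ∂μ = _
    rw [hz2, add_zero]
    rfl
  exact l1.symm.le.trans (hmono.trans l2.le)

lemma first_step (S : StepOK μ a w h ca Ca) {f g : α → ℝ} (hf : Dens μ f) (hg : Dens μ g) :
    ∫ x, |f x / (∫ x, f x * backOp μ a w x ∂μ) - g x / (∫ x, g x * backOp μ a w x ∂μ)|
      * backOp μ a w x ∂μ ≤ (ca / Ca)⁻¹ * ∫ x, |f x - g x| ∂μ := by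
  rcases le_total (∫ x, g x * backOp μ a w x ∂μ) (∫ x, f x * backOp μ a w x ∂μ) with hle | hle
  · exact first_step_aux S hf hg hle
  · have := first_step_aux S hg hf hle
    simp only [abs_sub_comm (g _ / _), abs_sub_comm (g _)] at this
    exact this

end

/-- Backward likelihood along a list of times. -/
noncomputable def betaL {α : Type*} [MeasurableSpace α] (μ : Measure α)
    (a : ℕ → α → α → ℝ) (b : ℕ → α → ℝ) : List ℕ → α → ℝ
  | [] => fun _ => 1
  | r :: l => backOp μ (a r) (fun x => b r x * betaL μ a b l x)

section

variable {α : Type*} [MeasurableSpace α] {μ : Measure α} [SigmaFinite μ]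
  {a : ℕ → α → α → ℝ} {b h : ℕ → α → ℝ} {ca Ca : ℝ}

lemma step_mul (S : ∀ r, StepOK μ (a r) (b r) (h r) ca Ca) (r : ℕ) {β : α → ℝ}
    (hm : Measurable β) (m M : ℝ) (m0 : 0 < m) (hlo : ∀ x, m ≤ β x) (hhi : ∀ x, β x ≤ M) :
    StepOK μ (a r) (fun x => b r x * β x) (h r) ca Ca := by
  have T := S r
  have hint : Integrable (fun x => b r x * β x * h r x) μ := by
    have : Integrable (fun x => b r x * h r x * β x) μ :=
      T.hint.mul_bdd (c := M) hm.aestronglyMeasurable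
        (Filter.Eventually.of_forall fun x => by
          rw [Real.norm_eq_abs, abs_of_pos (m0.trans_le (hlo x))]; exact hhi x)
    refine this.congr (Filter.Eventually.of_forall fun x => ?_)
    simp only; ring
  refine ⟨T.ca_pos, T.lt, T.am, T.wm.mul hm,
    fun x => mul_nonneg (T.w0 x) (m0.le.trans (hlo x)), T.hm, T.h0, T.lo, T.hi, ?_, hint⟩
  refine (mul_pos m0 T.hpos).trans_le ?_
  rw [← integral_const_mul]
  refine integral_mono (T.hint.const_mul m) hint fun x => ?_
  have := mul_le_mul_of_nonneg_right (hlo x) (mul_nonneg (T.w0 x) (T.h0 x))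
  simp only
  linarith

lemma beta_good (S : ∀ r, StepOK μ (a r) (b r) (h r) ca Ca) (l : List ℕ) :
    ∀ r, StepOK μ (a r) (fun x => b r x * betaL μ a b l x) (h r) ca Ca := by
  induction l with
  | nil =>
    intro r
    exact step_mul S r measurable_const 1 1 one_pos (fun _ => le_rfl) (fun _ => le_rfl)
  | cons q l ih =>
    intro r
    have T := ih q
    exact step_mul S r T.back_meas _ _ (mul_pos T.ca_pos T.hpos) T.back_lo T.back_hi

lemma forget (S : ∀ r, StepOK μ (a r) (b r) (h r) ca Ca) (l : List ℕ) :
    ∀ f g : α → ℝ, Dens μ f → Dens μ g →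
    ∫ x, |l.foldl (fun g r => bayesOp μ (markovOp μ (a r) g) (b r)) f x
        - l.foldl (fun g r => bayesOp μ (markovOp μ (a r) g) (b r)) g x| ∂μ
      ≤ (1 - ca / Ca) ^ l.length *
        ∫ x, |f x / (∫ x, f x * betaL μ a b l x ∂μ) - g x / (∫ x, g x * betaL μ a b l x ∂μ)|
          * betaL μ a b l x ∂μ := by
  induction l with
  | nil =>
    intro f g hf hg
    simp [betaL, hf.one, hg.one]
  | cons r l ih =>
    intro f g hf hg
    have T := beta_good S l r
    have hγ : 0 ≤ 1 - ca / Ca := by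
      have := (div_le_one T.Ca_pos).2 T.lt.le
      linarith
    rw [List.foldl_cons, List.foldl_cons]
    refine (ih _ _ (dens_step (S r) hf) (dens_step (S r) hg)).trans ?_
    rw [List.length_cons, pow_succ, mul_assoc]
    refine mul_le_mul_of_nonneg_left ?_ (pow_nonneg hγ _)
    set F := ∫ x, f x * betaL μ a b (r :: l) x ∂μ with hF
    set G := ∫ x, g x * betaL μ a b (r :: l) x ∂μ with hG
    have hcH : 0 < ca * ∫ x, b r x * betaL μ a b l x * h r x ∂μ := mul_pos T.ca_pos T.hpos
    have hF0 : 0 < F := hcH.trans_le (dual_pos T hf)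
    have hG0 : 0 < G := hcH.trans_le (dual_pos T hg)
    have tr : ∀ f : α → ℝ, Dens μ f → ∀ x,
        bayesOp μ (markovOp μ (a r) f) (b r) x /
          (∫ x, bayesOp μ (markovOp μ (a r) f) (b r) x * betaL μ a b l x ∂μ)
        = markovOp μ (a r) f x * b r x / ∫ x, f x * betaL μ a b (r :: l) x ∂μ := by
      intro f hf x
      have hc := norm_pos (S r) hf
      have e : ∫ x, bayesOp μ (markovOp μ (a r) f) (b r) x * betaL μ a b l x ∂μ
          = (∫ x, f x * betaL μ a b (r :: l) x ∂μ) / ∫ x, markovOp μ (a r) f x * b r x ∂μ := by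
        change _ = (∫ x, f x * backOp μ (a r) (fun x => b r x * betaL μ a b l x) x ∂μ) / _
        rw [← T.dual hf.i, ← integral_div]
        congr 1
        funext x
        unfold bayesOp
        ring
      rw [e]
      unfold bayesOp
      rw [div_div_div_cancel_right₀ hc.ne']
    simp only [tr f hf, tr g hg]
    rw [← hF, ← hG]
    have hiu : Integrable (fun x => f x / F - g x / G) μ :=
      (hf.i.div_const F).sub (hg.i.div_const G)
    have hz : ∫ x, (f x / F - g x / G) *
        backOp μ (a r) (fun x => b r x * betaL μ a b l x) x ∂μ = 0 := by
      have : (fun x => (f x / F - g x / G) *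
            backOp μ (a r) (fun x => b r x * betaL μ a b l x) x)
          = fun x => f x * betaL μ a b (r :: l) x / F - g x * betaL μ a b (r :: l) x / G := by
        funext x; simp only [betaL]; ring
      have j1 : Integrable (fun x => f x * betaL μ a b (r :: l) x / F) μ :=
        (T.int_mul_back hf.i).div_const F
      have j2 : Integrable (fun x => g x * betaL μ a b (r :: l) x / G) μ :=
        (T.int_mul_back hg.i).div_const G
      rw [this, integral_sub j1 j2, integral_div, integral_div,
        ← hF, ← hG, div_self hF0.ne', div_self hG0.ne', sub_self]
    refine le_trans (le_of_eq ?_) (T.contract hiu hz)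
    congr 1
    funext x
    have hlin : markovOp μ (a r) (fun x => f x / F - g x / G) x
        = markovOp μ (a r) f x / F - markovOp μ (a r) g x / G := by
      unfold markovOp
      rw [← integral_div, ← integral_div, ← integral_sub ((T.int_col hf.i x).div_const F)
        ((T.int_col hg.i x).div_const G)]
      congr 1
      funext x'
      ring
    have hb : 0 ≤ betaL μ a b l x := by
      cases l with
      | nil => simp [betaL]
      | cons q l => exact ((beta_good S l q).back_pos x).le
    rw [hlin, ← abs_of_nonneg hb, ← abs_mul, abs_of_nonneg hb]
    congr 1
    ring

end

/-- Lemma 10: under the strong mixing condition (19)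
(`c_a h_t(x) ≤ a_t(x', x) ≤ C_a h_t(x)`) and the condition (20)
(`0 < ∫ b_t h_t dμ < ∞`), the filter transition operators forget their initial
condition exponentially: for any two densities `f, g` and any `s < t`,
`‖K_{s,t}(f) − K_{s,t}(g)‖₁ ≤ γ_a⁻¹ (1 − γ_a)^(t−s) ‖f − g‖₁` where `γ_a = c_a/C_a`. -/
theorem filter_exponential_forgetting
    {α : Type*} [MeasurableSpace α] (μ : Measure α) [SigmaFinite μ]
    (a : ℕ → α → α → ℝ) (b : ℕ → α → ℝ) (h : ℕ → α → ℝ)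
    (ca Ca : ℝ) (hca : 0 < ca) (hcaCa : ca < Ca)
    (ha_meas : ∀ t, Measurable (Function.uncurry (a t)))
    (hb_meas : ∀ t, Measurable (b t)) (hb_nonneg : ∀ t x, 0 ≤ b t x)
    (hh_meas : ∀ t, Measurable (h t)) (hh_nonneg : ∀ t x, 0 ≤ h t x)
    (hh_int : ∀ t, Integrable (h t) μ) (hh_one : ∀ t, ∫ x, h t x ∂μ = 1)
    -- condition (19)
    (h19 : ∀ t x' x, ca * h t x ≤ a t x' x ∧ a t x' x ≤ Ca * h t x)
    -- condition (20)
    (h20_pos : ∀ t, 0 < ∫ x, b t x * h t x ∂μ)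
    (h20_int : ∀ t, Integrable (fun x => b t x * h t x) μ) :
    ∀ f g : α → ℝ, Measurable f → Measurable g →
      (∀ x, 0 ≤ f x) → (∀ x, 0 ≤ g x) →
      Integrable f μ → Integrable g μ →
      (∫ x, f x ∂μ) = 1 → (∫ x, g x ∂μ) = 1 →
      ∀ s t : ℕ, s < t →
        ∫ x, |filterK μ a b s t f x - filterK μ a b s t g x| ∂μ
          ≤ (ca / Ca)⁻¹ * (1 - ca / Ca) ^ (t - s) * ∫ x, |f x - g x| ∂μ := by
  intro f g hfm hgm hf0 hg0 hfi hgi hf1 hg1 s t hst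
  have S : ∀ r, StepOK μ (a r) (b r) (h r) ca Ca := fun r =>
    ⟨hca, hcaCa, ha_meas r, hb_meas r, hb_nonneg r, hh_meas r, hh_nonneg r,
      fun x' x => (h19 r x' x).1, fun x' x => (h19 r x' x).2, h20_pos r, h20_int r⟩
  have hf : Dens μ f := ⟨hfm, hf0, hfi, hf1⟩
  have hg : Dens μ g := ⟨hgm, hg0, hgi, hg1⟩
  have hγ : 0 ≤ 1 - ca / Ca := by
    have := (div_le_one (hca.trans hcaCa)).2 hcaCa.le
    linarith
  unfold filterK
  have hlen : ((List.range (t - s)).map fun i => s + 1 + i).length = t - s := by simp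
  generalize ((List.range (t - s)).map fun i => s + 1 + i) = l at hlen
  have key := forget S l f g hf hg
  rw [← hlen]
  refine key.trans ?_
  rw [mul_comm (ca / Ca)⁻¹, mul_assoc]
  refine mul_le_mul_of_nonneg_left ?_ (pow_nonneg hγ _)
  cases l with
  | nil => simp at hlen; omega
  | cons r l => exact first_step (beta_good S l r) hf hg
end

section
/- (Theorem 1) If x ↦ a_t(x,·) is continuous with respect to the L₁-norm for every t, and if 0 < b_t(x, y) ≤ C(t, y) < ∞ for all t, x, y, then for all t and all observation sequences y_{1:t}, the L₁-distance ‖f^N_{t|t} − f_{t|t}‖₁ between the particle-filter approximation and the true filter density converges to 0 in probability as N → ∞. -/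
open MeasureTheory ProbabilityTheory


/-- The true filter densities: `f_{0|0} = a_0` and
`f_{t|t} = B(A_t* f_{t-1|t-1}, b_t)` (the observations being absorbed into `b_t`). -/
noncomputable def trueFilter {α : Type*} [MeasurableSpace α] (μ : Measure α)
    (a0 : α → ℝ) (a : ℕ → α → α → ℝ) (b : ℕ → α → ℝ) : ℕ → α → ℝ
  | 0 => a0
  | (t + 1) => bayesOp μ (markovOp μ (a (t + 1)) (trueFilter μ a0 a b t)) (b (t + 1))

/-- The particle filter densities: `f^N_{0|0} = a_0` and
`f^N_{t|t} = B(A_t* E_N(f^N_{t-1|t-1}), b_t)`, where `E_N` is the empirical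
distribution of the particles `(X_{j,t-1})_{j≤N}` at time `t-1`. -/
noncomputable def particleFilter {α Ω : Type*} [MeasurableSpace α] (μ : Measure α)
    (a0 : α → ℝ) (a : ℕ → α → α → ℝ) (b : ℕ → α → ℝ)
    {N : ℕ} (X : ℕ → Fin N → Ω → α) : ℕ → Ω → α → ℝ
  | 0 => fun _ => a0
  | (t + 1) => fun ω =>
      bayesOp μ (fun x => (N : ℝ)⁻¹ * ∑ j, a (t + 1) (X t j ω) x) (b (t + 1))

/-- The σ-field generated by the particles before time `t`. -/
def pastFiltration {α Ω : Type*} [MeasurableSpace α] [MeasurableSpace Ω]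
    {N : ℕ} (X : ℕ → Fin N → Ω → α) (t : ℕ) : MeasurableSpace Ω :=
  ⨆ s : Fin t, MeasurableSpace.comap (fun ω => fun j : Fin N => X s j ω) inferInstance


/-- Nonnegative-ish random variables tending to zero in probability. -/
def PTo0 {Ω : Type*} [MeasurableSpace Ω] (P : Measure Ω) (Z : ℕ → Ω → ℝ) : Prop :=
  ∀ ε : ℝ, 0 < ε → Filter.Tendsto (fun N : ℕ => P {ω | ε < Z N ω}) Filter.atTop (nhds 0)

section PTo0
variable {Ω : Type*} [MeasurableSpace Ω] {P : Measure Ω}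

lemma PTo0.mono_approx {Z : ℕ → Ω → ℝ}
    (h : ∀ δ : ℝ, 0 < δ → ∃ W, PTo0 P W ∧ ∀ N, 0 < N → ∀ ω, Z N ω ≤ W N ω + δ) : PTo0 P Z := by
  intro ε hε
  obtain ⟨W, hW, hZ⟩ := h (ε / 2) (by positivity)
  refine tendsto_of_tendsto_of_tendsto_of_le_of_le' tendsto_const_nhds (hW (ε / 2) (by positivity))
    (Filter.Eventually.of_forall fun _ => zero_le) ?_
  filter_upwards [Filter.eventually_gt_atTop 0] with N hN
  refine measure_mono fun ω hω => ?_
  have h1 : ε < Z N ω := hω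
  have h2 := hZ N hN ω
  show ε / 2 < W N ω
  linarith

lemma PTo0.mono {Z W : ℕ → Ω → ℝ} (hW : PTo0 P W) (h : ∀ N, 0 < N → ∀ ω, Z N ω ≤ W N ω) :
    PTo0 P Z :=
  PTo0.mono_approx fun δ hδ => ⟨W, hW, fun N hN ω => by linarith [h N hN ω]⟩

lemma PTo0.add {Z W : ℕ → Ω → ℝ} (hZ : PTo0 P Z) (hW : PTo0 P W) :
    PTo0 P (fun N ω => Z N ω + W N ω) := by
  intro ε hε
  have h := (hZ (ε / 2) (by positivity)).add (hW (ε / 2) (by positivity))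
  rw [add_zero] at h
  refine tendsto_of_tendsto_of_tendsto_of_le_of_le tendsto_const_nhds h (fun _ => zero_le) ?_
  intro N
  refine (measure_mono ?_).trans (measure_union_le _ _)
  intro ω hω
  have h1 : ε < Z N ω + W N ω := hω
  by_contra hc
  simp only [Set.mem_union, Set.mem_ofPred_eq, not_or, not_lt] at hc
  linarith

lemma PTo0.zero : PTo0 P (fun _ _ => 0) := by
  intro ε hε
  simp [not_lt.2 hε.le]

lemma PTo0.mul_const {Z : ℕ → Ω → ℝ} (hZ : PTo0 P Z) {c : ℝ} (hc : 0 ≤ c) :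
    PTo0 P (fun N ω => Z N ω * c) := by
  rcases hc.eq_or_lt with rfl | hc
  · simpa using PTo0.zero
  intro ε hε
  refine (hZ (ε / c) (by positivity)).congr fun N => ?_
  congr 1; ext ω
  simp [div_lt_iff₀ hc]

lemma PTo0.sum {ι : Type*} (s : Finset ι) {Z : ι → ℕ → Ω → ℝ} (hZ : ∀ i ∈ s, PTo0 P (Z i)) :
    PTo0 P (fun N ω => ∑ i ∈ s, Z i N ω) := by
  classical
  induction s using Finset.induction_on with
  | empty => simpa using PTo0.zero
  | insert i s hi ih =>
    simp only [Finset.sum_insert hi]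
    exact (hZ i (by simp)).add (ih fun j hj => hZ j (by simp [hj]))

end PTo0

/-- Banach-valued law of large numbers from the scalar one. -/
lemma banach_lln {α Ω E : Type*} [MeasurableSpace α] [MeasurableSpace Ω] {P : Measure Ω}
    [NormedAddCommGroup E] [NormedSpace ℝ E] [CompleteSpace E]
    (ν : Measure α) [IsProbabilityMeasure ν] (h : α → E) (hm : StronglyMeasurable h) (c : ℝ)
    (hc : ∀ x, ‖h x‖ ≤ c) (Y : (N : ℕ) → Fin N → Ω → α)
    (hY : ∀ φ : α → ℝ, Measurable φ → (∃ C, ∀ x, |φ x| ≤ C) →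
      PTo0 P fun N ω => |(N : ℝ)⁻¹ * ∑ j, φ (Y N j ω) - ∫ x, φ x ∂ν|) :
    PTo0 P fun N ω => ‖(N : ℝ)⁻¹ • ∑ j, h (Y N j ω) - ∫ x, h x ∂ν‖ := by
  classical
  have h_integ : Integrable h ν := .of_bound hm.aestronglyMeasurable c (.of_forall hc)
  refine PTo0.mono_approx fun δ hδ => ?_
  obtain ⟨s, hs, hs1⟩ := (memLp_one_iff_integrable.2 h_integ).exists_simpleFunc_eLpNorm_sub_lt
    ENNReal.one_ne_top (ε := ENNReal.ofReal (δ / 2)) (by simpa using hδ)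
  have hsint : Integrable s ν := memLp_one_iff_integrable.1 hs1
  set ψ : α → ℝ := fun x => ‖h x - s x‖ with hψ
  have hψm : Measurable ψ := (hm.sub s.stronglyMeasurable).norm.measurable
  have hψi : ∫ x, ψ x ∂ν ≤ δ / 2 := by
    have h2 : ∫ x, ψ x ∂ν = (eLpNorm (h - ⇑s) 1 ν).toReal := by
      rw [eLpNorm_one_eq_lintegral_enorm, ← integral_norm_eq_lintegral_enorm
        (hm.sub s.stronglyMeasurable).aestronglyMeasurable]
      rfl
    rw [h2]
    exact ENNReal.toReal_le_of_le_ofReal (by positivity) hs.le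
  obtain ⟨D, hD⟩ := s.exists_forall_norm_le
  have hψb : ∃ C, ∀ x, |ψ x| ≤ C := ⟨c + D, fun x => by
    rw [hψ]; simp only [abs_norm]
    exact (norm_sub_le _ _).trans (add_le_add (hc x) (hD x))⟩
  let I : E → α → ℝ := fun v => (s ⁻¹' {v}).indicator (fun _ => 1)
  have hI1 : ∀ x, s x = ∑ v ∈ s.range, I v x • v := by
    intro x
    rw [Finset.sum_eq_single (s x)]
    · simp [I]
    · intro v _ hv
      simp [I, Ne.symm hv]
    · intro hx; exact absurd (s.mem_range_self x) hx
  have hIm : ∀ v, Measurable (I v) := fun v =>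
    measurable_const.indicator (s.measurableSet_fiber v)
  have hI2 : ∫ x, s x ∂ν = ∑ v ∈ s.range, (∫ x, I v x ∂ν) • v := by
    rw [SimpleFunc.integral_eq_sum s hsint]
    refine Finset.sum_congr rfl fun v _ => ?_
    rw [integral_indicator_const _ (s.measurableSet_fiber v)]
    simp
  refine ⟨fun N ω => |(N : ℝ)⁻¹ * ∑ j, ψ (Y N j ω) - ∫ x, ψ x ∂ν| +
    ∑ v ∈ s.range, |(N : ℝ)⁻¹ * ∑ j, I v (Y N j ω) - ∫ x, I v x ∂ν| * ‖v‖,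
    (hY ψ hψm hψb).add (PTo0.sum _ fun v _ => (hY (I v) (hIm v) ⟨1, fun x => ?_⟩).mul_const
      (norm_nonneg v)), ?_⟩
  · by_cases hx : x ∈ s ⁻¹' {v} <;> simp [I, hx]
  intro N hN ω
  have e1 : ‖(N : ℝ)⁻¹ • ∑ j, h (Y N j ω) - (N : ℝ)⁻¹ • ∑ j, s (Y N j ω)‖
      ≤ (N : ℝ)⁻¹ * ∑ j, ψ (Y N j ω) := by
    rw [← smul_sub, ← Finset.sum_sub_distrib, norm_smul, Real.norm_of_nonneg (by positivity)]
    exact mul_le_mul_of_nonneg_left (norm_sum_le _ _) (by positivity)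
  have e2 : ‖(N : ℝ)⁻¹ • ∑ j, s (Y N j ω) - ∫ x, s x ∂ν‖
      ≤ ∑ v ∈ s.range, |(N : ℝ)⁻¹ * ∑ j, I v (Y N j ω) - ∫ x, I v x ∂ν| * ‖v‖ := by
    have : (N : ℝ)⁻¹ • ∑ j, s (Y N j ω) - ∫ x, s x ∂ν =
        ∑ v ∈ s.range, ((N : ℝ)⁻¹ * ∑ j, I v (Y N j ω) - ∫ x, I v x ∂ν) • v := by
      rw [hI2]
      simp only [sub_smul, Finset.sum_sub_distrib]
      congr 1
      rw [Finset.sum_congr rfl fun j _ => hI1 (Y N j ω), Finset.sum_comm, Finset.smul_sum]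
      refine Finset.sum_congr rfl fun v _ => ?_
      rw [mul_smul, Finset.sum_smul]
    rw [this]
    refine (norm_sum_le _ _).trans (Finset.sum_le_sum fun v _ => ?_)
    rw [norm_smul, Real.norm_eq_abs]
  have e3 : ‖∫ x, s x ∂ν - ∫ x, h x ∂ν‖ ≤ δ / 2 := by
    rw [← integral_sub hsint h_integ]
    refine (norm_integral_le_integral_norm _).trans (le_trans (le_of_eq ?_) hψi)
    exact integral_congr_ae (.of_forall fun x => norm_sub_rev _ _)
  have e4 := norm_sub_le_norm_sub_add_norm_sub ((N : ℝ)⁻¹ • ∑ j, h (Y N j ω))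
    ((N : ℝ)⁻¹ • ∑ j, s (Y N j ω)) (∫ x, h x ∂ν)
  have e5 := norm_sub_le_norm_sub_add_norm_sub ((N : ℝ)⁻¹ • ∑ j, s (Y N j ω))
    (∫ x, s x ∂ν) (∫ x, h x ∂ν)
  have e6 := le_abs_self ((N : ℝ)⁻¹ * ∑ j, ψ (Y N j ω) - ∫ x, ψ x ∂ν)
  linarith

/-- Variance bound for a conditionally i.i.d. sample. -/
lemma cond_var_bound {Ω : Type*} {F m0 : MeasurableSpace Ω} {P : Measure Ω}
    [IsProbabilityMeasure P] (hF : F ≤ m0) {N : ℕ} (hN : 0 < N) (Y : Fin N → Ω → ℝ) (M : Ω → ℝ) (C : ℝ)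
    (hY : ∀ i, Measurable (Y i)) (hYb : ∀ i ω, |Y i ω| ≤ C) (hMb : ∀ ω, |M ω| ≤ C)
    (h1 : ∀ i, P[Y i | F] =ᵐ[P] M)
    (h2 : ∀ i j, i ≠ j → P[fun ω => Y i ω * Y j ω | F] =ᵐ[P] fun ω => M ω * M ω) :
    AEStronglyMeasurable M P ∧
    ∫ ω, ((N : ℝ)⁻¹ * ∑ i, Y i ω - M ω) ^ 2 ∂P ≤ 4 * C ^ 2 / N := by
  have hMF : AEStronglyMeasurable[F] M P :=
    ⟨P[Y ⟨0, hN⟩ | F], stronglyMeasurable_condExp, (h1 _).symm⟩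
  have hM : AEStronglyMeasurable M P := hMF.mono hF
  refine ⟨hM, ?_⟩
  have bmul : ∀ {u v : ℝ}, |u| ≤ C → |v| ≤ C → ‖u * v‖ ≤ C * C := fun {u v} hu hv => by
    rw [norm_mul]; exact mul_le_mul hu hv (abs_nonneg _) ((abs_nonneg _).trans hu)
  have iY : ∀ i, Integrable (Y i) P := fun i =>
    .of_bound (hY i).aestronglyMeasurable C (.of_forall (hYb i))
  have iYY : ∀ i j, Integrable (fun ω => Y i ω * Y j ω) P := fun i j =>
    .of_bound ((hY i).mul (hY j)).aestronglyMeasurable (C * C)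
      (.of_forall fun ω => bmul (hYb i ω) (hYb j ω))
  have iYM : ∀ i, Integrable (fun ω => Y i ω * M ω) P := fun i =>
    .of_bound ((hY i).aestronglyMeasurable.mul hM) (C * C)
      (.of_forall fun ω => bmul (hYb i ω) (hMb ω))
  have iMM : Integrable (fun ω => M ω * M ω) P :=
    .of_bound (hM.mul hM) (C * C) (.of_forall fun ω => bmul (hMb ω) (hMb ω))
  have eYM : ∀ i, ∫ ω, Y i ω * M ω ∂P = ∫ ω, M ω * M ω ∂P := by
    intro i
    rw [← integral_condExp hF]
    refine integral_congr_ae ?_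
    have := condExp_mul_of_aestronglyMeasurable_right (m := F) (f := Y i) hMF (iYM i) (iY i)
    filter_upwards [this, h1 i] with ω e1 e2
    have e3 : (P[fun ω => Y i ω * M ω | F]) ω = (P[Y i | F] * M) ω := e1
    rw [e3, Pi.mul_apply, e2]
  have eYY : ∀ i j, i ≠ j → ∫ ω, Y i ω * Y j ω ∂P = ∫ ω, M ω * M ω ∂P := by
    intro i j hij
    rw [← integral_condExp hF]
    exact integral_congr_ae (h2 i j hij)
  have iZ : ∀ i j, Integrable (fun ω => (Y i ω - M ω) * (Y j ω - M ω)) P := by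
    intro i j
    have := (((iYY i j).sub (iYM i)).sub (iYM j)).add iMM
    refine this.congr (.of_forall fun ω => ?_)
    simp only [Pi.add_apply, Pi.sub_apply]; ring
  have eZ : ∀ i j, i ≠ j → ∫ ω, (Y i ω - M ω) * (Y j ω - M ω) ∂P = 0 := by
    intro i j hij
    have e : ∀ ω, (Y i ω - M ω) * (Y j ω - M ω) =
      (Y i ω * Y j ω - Y i ω * M ω) - (Y j ω * M ω - M ω * M ω) := fun ω => by ring
    simp only [e]
    have i1 : Integrable (fun ω => Y i ω * Y j ω - Y i ω * M ω) P := (iYY i j).sub (iYM i)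
    have i2 : Integrable (fun ω => Y j ω * M ω - M ω * M ω) P := (iYM j).sub iMM
    rw [integral_sub i1 i2, integral_sub (iYY i j) (iYM i),
      integral_sub (iYM j) iMM, eYY i j hij, eYM, eYM]
    ring
  have eD : ∀ i, ∫ ω, (Y i ω - M ω) * (Y i ω - M ω) ∂P ≤ 4 * C ^ 2 := by
    intro i
    have : ∀ ω, (Y i ω - M ω) * (Y i ω - M ω) ≤ 4 * C ^ 2 := by
      intro ω
      have := abs_le.1 (hYb i ω)
      have := abs_le.1 (hMb ω)
      nlinarith
    calc _ ≤ ∫ ω, 4 * C ^ 2 ∂P := integral_mono (iZ i i) (integrable_const _) this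
      _ = _ := by simp
  have hN' : (0 : ℝ) < N := by exact_mod_cast hN
  have e : ∀ ω, ((N : ℝ)⁻¹ * ∑ i, Y i ω - M ω) ^ 2 =
      (N : ℝ)⁻¹ ^ 2 * ∑ i, ∑ j, (Y i ω - M ω) * (Y j ω - M ω) := by
    intro ω
    rw [← Finset.sum_mul_sum, Finset.sum_sub_distrib]
    simp only [Finset.sum_const, Finset.card_univ, Fintype.card_fin, nsmul_eq_mul]
    field_simp
  simp only [e]
  rw [integral_const_mul, integral_finsetSum _ fun i _ => integrable_finsetSum _ fun j _ => iZ i j]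
  have : ∀ i, ∫ ω, ∑ j, (Y i ω - M ω) * (Y j ω - M ω) ∂P ≤ 4 * C ^ 2 := by
    intro i
    rw [integral_finsetSum _ fun j _ => iZ i j, Finset.sum_eq_single i]
    · exact eD i
    · intro j _ hj; exact eZ i j hj.symm
    · simp
  calc _ ≤ (N : ℝ)⁻¹ ^ 2 * ∑ i : Fin N, 4 * C ^ 2 :=
        mul_le_mul_of_nonneg_left (Finset.sum_le_sum fun i _ => this i) (by positivity)
    _ = _ := by
      simp only [Finset.sum_const, Finset.card_univ, Fintype.card_fin, nsmul_eq_mul]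
      field_simp

/-- Probability densities. -/
structure IsDens {α : Type*} [MeasurableSpace α] (μ : Measure α) (f : α → ℝ) : Prop where
  meas : Measurable f
  nonneg : ∀ x, 0 ≤ f x
  int : Integrable f μ
  one : ∫ x, f x ∂μ = 1

section dens
variable {α : Type*} [MeasurableSpace α] {μ : Measure α}

lemma IsDens.mul_int {g b : α → ℝ} (hg : IsDens μ g) (hb : Measurable b) (hpos : ∀ x, 0 < b x)
    {C : ℝ} (hC : ∀ x, b x ≤ C) : Integrable (fun x => g x * b x) μ :=
  hg.int.mul_bdd hb.aestronglyMeasurable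
    (.of_forall fun x => by rw [Real.norm_of_nonneg (hpos x).le]; exact hC x)

lemma IsDens.mul_pos {g b : α → ℝ} (hg : IsDens μ g) (hb : Measurable b) (hpos : ∀ x, 0 < b x)
    {C : ℝ} (hC : ∀ x, b x ≤ C) : 0 < ∫ x, g x * b x ∂μ := by
  rw [integral_pos_iff_support_of_nonneg (fun x => mul_nonneg (hg.nonneg x) (hpos x).le)
    (hg.mul_int hb hpos hC)]
  have h1 : 0 < ∫ x, g x ∂μ := by rw [hg.one]; exact one_pos
  rw [integral_pos_iff_support_of_nonneg hg.nonneg hg.int] at h1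
  convert h1 using 2
  ext x
  simp [(hpos x).ne']

lemma IsDens.bayes {g b : α → ℝ} (hg : IsDens μ g) (hb : Measurable b) (hpos : ∀ x, 0 < b x)
    {C : ℝ} (hC : ∀ x, b x ≤ C) : IsDens μ (bayesOp μ g b) where
  meas := (hg.meas.mul hb).div_const _
  nonneg x := div_nonneg (mul_nonneg (hg.nonneg x) (hpos x).le) (hg.mul_pos hb hpos hC).le
  int := (hg.mul_int hb hpos hC).div_const _
  one := by
    unfold bayesOp
    rw [integral_div, div_self (hg.mul_pos hb hpos hC).ne']

lemma bayes_dist {g g' b : α → ℝ} (hg : IsDens μ g) (hg' : IsDens μ g')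
    (hb : Measurable b) (hpos : ∀ x, 0 < b x) {C : ℝ} (hC : ∀ x, b x ≤ C) :
    ∫ x, |bayesOp μ g b x - bayesOp μ g' b x| ∂μ ≤
      (∫ x, |g x - g' x| ∂μ) * (2 * C / ∫ x, g' x * b x ∂μ) := by
  have hi := hg.mul_int hb hpos hC
  have hi' := hg'.mul_int hb hpos hC
  have hc := hg.mul_pos hb hpos hC
  have hc' := hg'.mul_pos hb hpos hC
  have hbi := (hg.bayes hb hpos hC).int
  have hbi' := (hg'.bayes hb hpos hC).int
  unfold bayesOp at *
  set c := ∫ x, g x * b x ∂μ with hcd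
  set c' := ∫ x, g' x * b x ∂μ with hcd'
  have hd : ∫ x, |g x * b x - g' x * b x| ∂μ ≤ (∫ x, |g x - g' x| ∂μ) * C := by
    rw [← integral_mul_const]
    refine integral_mono (hi.sub hi').abs ((hg.int.sub hg'.int).abs.mul_const C) fun x => ?_
    show |g x * b x - g' x * b x| ≤ |g x - g' x| * C
    rw [← sub_mul, abs_mul, abs_of_pos (hpos x)]
    exact mul_le_mul_of_nonneg_left (hC x) (abs_nonneg _)
  have hcc : |c - c'| ≤ ∫ x, |g x * b x - g' x * b x| ∂μ := by
    rw [hcd, hcd', ← integral_sub hi hi']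
    exact abs_integral_le_integral_abs
  have i2 : Integrable (fun x => |g x * b x - g' x * b x| / c') μ := (hi.sub hi').abs.div_const _
  have i1 : Integrable (fun x => g x * b x * (|c - c'| / (c * c'))) μ := hi.mul_const _
  calc ∫ x, |g x * b x / c - g' x * b x / c'| ∂μ
      ≤ ∫ x, (g x * b x * (|c - c'| / (c * c')) + |g x * b x - g' x * b x| / c') ∂μ := by
        refine integral_mono (hbi.sub hbi').abs (i1.add i2) fun x => ?_
        show |g x * b x / c - g' x * b x / c'| ≤ _
        have e : g x * b x / c - g' x * b x / c' =
          - (g x * b x * ((c - c') / (c * c'))) + (g x * b x - g' x * b x) / c' := by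
          field_simp; ring
        rw [e]
        refine (abs_add_le _ _).trans (le_of_eq ?_)
        rw [abs_neg, abs_mul, abs_div, abs_div, abs_of_pos (_root_.mul_pos hc hc'), abs_of_pos hc',
          abs_of_nonneg (mul_nonneg (hg.nonneg x) (hpos x).le)]
    _ = |c - c'| / c' + (∫ x, |g x * b x - g' x * b x| ∂μ) / c' := by
        rw [integral_add i1 i2, integral_mul_const, integral_div, ← hcd]
        congr 1
        field_simp
    _ ≤ ((∫ x, |g x - g' x| ∂μ) * C) / c' + ((∫ x, |g x - g' x| ∂μ) * C) / c' := by
        gcongr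
        exact hcc.trans hd
    _ = _ := by ring

/-- Transition kernels. -/
structure IsKer (μ : Measure α) (a : α → α → ℝ) : Prop where
  meas : Measurable (Function.uncurry a)
  nonneg : ∀ x x', 0 ≤ a x x'
  one : ∀ x, ∫ x', a x x' ∂μ = 1

lemma IsKer.dens {a : α → α → ℝ} (ha : IsKer μ a) (x : α) : IsDens μ (a x) where
  meas := ha.meas.of_uncurry_left
  nonneg := ha.nonneg x
  int := by
    by_contra h
    have := ha.one x
    rw [integral_undef h] at this
    exact zero_ne_one this
  one := ha.one x

lemma IsKer.avg {a : α → α → ℝ} (ha : IsKer μ a) {N : ℕ} (hN : 0 < N) (x : Fin N → α) :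
    IsDens μ (fun y => (N : ℝ)⁻¹ * ∑ j, a (x j) y) where
  meas := (Finset.measurable_sum _ fun j _ => (ha.dens (x j)).meas).const_mul _
  nonneg y := mul_nonneg (by positivity) (Finset.sum_nonneg fun j _ => ha.nonneg _ _)
  int := (integrable_finsetSum _ fun j _ => (ha.dens (x j)).int).const_mul _
  one := by
    rw [integral_const_mul, integral_finsetSum _ fun j _ => (ha.dens (x j)).int]
    simp only [ha.one]
    have hN' : (0 : ℝ) < N := by exact_mod_cast hN
    simp [hN'.ne']

lemma IsKer.prod_int [SigmaFinite μ] {a : α → α → ℝ} (ha : IsKer μ a) {f : α → ℝ}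
    (hf : IsDens μ f) :
    Integrable (Function.uncurry fun x' x => f x' * a x' x) (μ.prod μ) := by
  have hm : Measurable (Function.uncurry fun x' x => f x' * a x' x) :=
    (hf.meas.comp measurable_fst).mul ha.meas
  rw [integrable_prod_iff hm.aestronglyMeasurable]
  refine ⟨.of_forall fun x => (ha.dens x).int.const_mul (f x), ?_⟩
  refine hf.int.congr (.of_forall fun x => ?_)
  simp only [Function.uncurry]
  have : ∀ y, ‖f x * a x y‖ = f x * a x y := fun y =>
    Real.norm_of_nonneg (mul_nonneg (hf.nonneg x) (ha.nonneg x y))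
  simp only [this]
  rw [integral_const_mul, ha.one, mul_one]

lemma IsKer.markov [SigmaFinite μ] {a : α → α → ℝ} (ha : IsKer μ a) {f : α → ℝ}
    (hf : IsDens μ f) : IsDens μ (markovOp μ a f) where
  meas := by
    have hm : Measurable (Function.uncurry fun x' x => f x' * a x' x) :=
      (hf.meas.comp measurable_fst).mul ha.meas
    exact (hm.stronglyMeasurable.integral_prod_left).measurable
  nonneg x := integral_nonneg fun x' => mul_nonneg (hf.nonneg x') (ha.nonneg x' x)
  int := (ha.prod_int hf).integral_prod_right
  one := by
    unfold markovOp
    rw [← integral_integral_swap (ha.prod_int hf)]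
    simp only [integral_const_mul, ha.one, mul_one, hf.one]

/-- The kernel as an `L¹`-valued map. -/
noncomputable def kerL1 {a : α → α → ℝ} (ha : IsKer μ a) (x : α) : Lp ℝ 1 μ :=
  (ha.dens x).int.toL1 (a x)

lemma norm_kerL1 {a : α → α → ℝ} (ha : IsKer μ a) (x : α) : ‖kerL1 ha x‖ = 1 := by
  unfold kerL1
  rw [L1.norm_of_fun_eq_integral_norm, ← ha.one x]
  exact integral_congr_ae (.of_forall fun y => Real.norm_of_nonneg (ha.nonneg x y))

/-- The measure with a given density. -/
noncomputable def densMeas (μ : Measure α) (f : α → ℝ) : Measure α :=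
  μ.withDensity fun x => ENNReal.ofReal (f x)

lemma IsDens.prob {f : α → ℝ} (hf : IsDens μ f) : IsProbabilityMeasure (densMeas μ f) := by
  constructor
  rw [densMeas, withDensity_apply _ MeasurableSet.univ, Measure.restrict_univ,
    ← ofReal_integral_eq_lintegral_ofReal hf.int (.of_forall hf.nonneg), hf.one, ENNReal.ofReal_one]

lemma IsDens.integral_densMeas {E : Type*} [NormedAddCommGroup E] [NormedSpace ℝ E]
    {f : α → ℝ} (hf : IsDens μ f) (g : α → E) :
    ∫ x, g x ∂(densMeas μ f) = ∫ x, f x • g x ∂μ := by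
  rw [densMeas, integral_withDensity_eq_integral_toReal_smul hf.meas.ennreal_ofReal
    (.of_forall fun x => ENNReal.ofReal_lt_top)]
  refine integral_congr_ae (.of_forall fun x => ?_)
  simp only [ENNReal.toReal_ofReal (hf.nonneg x)]

lemma integral_kerL1 [SigmaFinite μ] {a : α → α → ℝ} (ha : IsKer μ a) {f : α → ℝ}
    (hf : IsDens μ f) (hm : StronglyMeasurable (kerL1 ha)) :
    ∫ x, kerL1 ha x ∂(densMeas μ f) = (ha.markov hf).int.toL1 (markovOp μ a f) := by
  have := hf.prob
  have h_integ : Integrable (kerL1 ha) (densMeas μ f) :=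
    .of_bound hm.aestronglyMeasurable 1 (.of_forall fun x => (norm_kerL1 ha x).le)
  set I : Lp ℝ 1 μ := ∫ x, kerL1 ha x ∂(densMeas μ f) with hI
  have key : (I : α → ℝ) =ᵐ[μ] markovOp μ a f := by
    refine Integrable.ae_eq_of_forall_setIntegral_eq _ _ (L1.integrable_coeFn I)
      (ha.markov hf).int fun s hs _ => ?_
    let L : Lp ℝ 1 μ →L[ℝ] ℝ := (L1.integralCLM (E := ℝ) (μ := μ.restrict s)).comp
      (LpToLpRestrictCLM α ℝ ℝ μ 1 s)
    have hL : ∀ u : Lp ℝ 1 μ, L u = ∫ x in s, u x ∂μ := by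
      intro u
      show L1.integralCLM (LpToLpRestrictCLM α ℝ ℝ μ 1 s u) = _
      rw [← L1.integral_eq, L1.integral_eq_integral]
      exact integral_congr_ae (LpToLpRestrictCLM_coeFn ℝ s u)
    rw [← hL, hI, ← L.integral_comp_comm h_integ, hf.integral_densMeas]
    unfold markovOp
    have hpi : Integrable (Function.uncurry fun x' x => f x' * a x' x) (μ.prod (μ.restrict s)) := by
      refine (ha.prod_int hf).mono_measure ?_
      exact Measure.prod_mono le_rfl Measure.restrict_le_self
    rw [← integral_integral_swap hpi]
    refine integral_congr_ae (.of_forall fun x => ?_)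
    simp only [hL]
    rw [integral_const_mul, smul_eq_mul]
    congr 1
    exact integral_congr_ae (ae_restrict_of_ae (Integrable.coeFn_toL1 (ha.dens x).int))
  exact Lp.ext (key.trans (Integrable.coeFn_toL1 _).symm)

lemma stronglyMeasurable_kerL1 [MetricSpace α] [SecondCountableTopology α] [BorelSpace α]
    {a : α → α → ℝ} (ha : IsKer μ a)
    (hc : ∀ x₀ : α, ∀ δ > (0:ℝ), ∃ η > (0:ℝ), ∀ x, dist x x₀ < η →
      (∫ y, |a x y - a x₀ y| ∂μ) < δ) : StronglyMeasurable (kerL1 ha) := by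
  have : Continuous (kerL1 ha) := by
    rw [Metric.continuous_iff]
    intro x₀ δ hδ
    obtain ⟨η, hη, h⟩ := hc x₀ δ hδ
    refine ⟨η, hη, fun x hx => ?_⟩
    rw [dist_eq_norm]
    unfold kerL1
    rw [← Integrable.toL1_sub, L1.norm_of_fun_eq_integral_norm]
    exact h x hx
  exact this.stronglyMeasurable

lemma kerL1_dist {a : α → α → ℝ} (ha : IsKer μ a) {N : ℕ} (hN : 0 < N) (x : Fin N → α)
    {g : α → ℝ} (hg : Integrable g μ) :
    ‖(N : ℝ)⁻¹ • ∑ j, kerL1 ha (x j) - hg.toL1 g‖ =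
      ∫ y, |(N : ℝ)⁻¹ * ∑ j, a (x j) y - g y| ∂μ := by
  rw [L1.norm_eq_integral_norm]
  refine integral_congr_ae ?_
  have hk : ∀ᵐ y ∂μ, ∀ j, kerL1 ha (x j) y = a (x j) y :=
    ae_all_iff.2 fun j => Integrable.coeFn_toL1 (ha.dens (x j)).int
  have hs : ∀ᵐ y ∂μ, (∑ j, kerL1 ha (x j) : Lp ℝ 1 μ) y = ∑ j, kerL1 ha (x j) y := by
    have : ∀ s : Finset (Fin N),
        ∀ᵐ y ∂μ, (∑ j ∈ s, kerL1 ha (x j) : Lp ℝ 1 μ) y = ∑ j ∈ s, kerL1 ha (x j) y := by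
      intro s
      induction s using Finset.induction_on with
      | empty =>
        filter_upwards [Lp.coeFn_zero ℝ 1 μ] with y hy
        simpa using hy
      | insert i s hi ih =>
        rw [Finset.sum_insert hi]
        filter_upwards [ih, Lp.coeFn_add (kerL1 ha (x i)) (∑ j ∈ s, kerL1 ha (x j))] with y h1 h2
        rw [Finset.sum_insert hi, h2, Pi.add_apply, h1]
    exact this _
  filter_upwards [hk, hs, Lp.coeFn_sub ((N : ℝ)⁻¹ • ∑ j, kerL1 ha (x j)) (hg.toL1 g),
    Lp.coeFn_smul (N : ℝ)⁻¹ (∑ j, kerL1 ha (x j)), Integrable.coeFn_toL1 hg] with y h1 h2 h3 h4 h5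
  rw [h3, Pi.sub_apply, h4, Pi.smul_apply, h2, h5, Real.norm_eq_abs, smul_eq_mul]
  simp only [h1]

end dens

/-- Scalar conditional law of large numbers, generic densities. -/
lemma scalar_lln {α Ω : Type*} [MeasurableSpace α] {μ : Measure α} [mΩ : MeasurableSpace Ω]
    {P : Measure Ω} [IsProbabilityMeasure P]
    (F : ℕ → MeasurableSpace Ω) (hF : ∀ N, F N ≤ mΩ)
    (Y : (N : ℕ) → Fin N → Ω → α) (hY : ∀ N j, Measurable (Y N j))
    (f : ℕ → Ω → α → ℝ) (hf : ∀ N, 0 < N → ∀ ω, IsDens μ (f N ω))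
    (hcond : ∀ (N : ℕ) (φ : Fin N → α → ℝ), (∀ j, Measurable (φ j)) →
      (∀ j, ∃ C, ∀ x, |φ j x| ≤ C) →
      P[(fun ω => ∏ j, φ j (Y N j ω)) | F N]
        =ᵐ[P] fun ω => ∏ j, ∫ x, φ j x * f N ω x ∂μ)
    (φ : α → ℝ) (hφ : Measurable φ) (C : ℝ) (hC : ∀ x, |φ x| ≤ C) :
    PTo0 P fun N ω => |(N : ℝ)⁻¹ * ∑ j, φ (Y N j ω) - ∫ x, φ x * f N ω x ∂μ| := by
  classical
  have main : ∀ N, 0 < N → AEStronglyMeasurable (fun ω => ∫ x, φ x * f N ω x ∂μ) P ∧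
      (∀ ω, |∫ x, φ x * f N ω x ∂μ| ≤ C) ∧
      ∫ ω, ((N : ℝ)⁻¹ * ∑ i, φ (Y N i ω) - ∫ x, φ x * f N ω x ∂μ) ^ 2 ∂P ≤ 4 * C ^ 2 / N := by
    intro N hN
    have hb : ∀ ω, |∫ x, φ x * f N ω x ∂μ| ≤ C := by
      intro ω
      have hd := hf N hN ω
      calc |∫ x, φ x * f N ω x ∂μ| ≤ ∫ x, C * f N ω x ∂μ := by
            rw [← Real.norm_eq_abs]
            refine norm_integral_le_of_norm_le (hd.int.const_mul C) (.of_forall fun x => ?_)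
            rw [norm_mul, Real.norm_of_nonneg (hd.nonneg x)]
            exact mul_le_mul_of_nonneg_right (hC x) (hd.nonneg x)
        _ = C := by rw [integral_const_mul, hd.one, mul_one]
    have h := cond_var_bound (P := P) (hF N) hN (fun i ω => φ (Y N i ω))
      (fun ω => ∫ x, φ x * f N ω x ∂μ) C (fun i => hφ.comp (hY N i)) (fun i ω => hC _) hb ?_ ?_
    · exact ⟨h.1, hb, h.2⟩
    · intro i
      have h := hcond N (fun k => if k = i then φ else fun _ => 1)
        (fun k => by split_ifs; exacts [hφ, measurable_const])
        (fun k => by split_ifs; exacts [⟨C, hC⟩, ⟨1, fun _ => by simp⟩])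
      have e1 : (fun ω => ∏ k, (if k = i then φ else fun _ => 1) (Y N k ω)) =
          fun ω => φ (Y N i ω) := by
        funext ω
        rw [Finset.prod_eq_single i]
        · simp
        · intro k _ hk; simp [hk]
        · simp
      have e2 : (fun ω => ∏ k, ∫ x, (if k = i then φ else fun _ => 1) x * f N ω x ∂μ) =
          fun ω => ∫ x, φ x * f N ω x ∂μ := by
        funext ω
        rw [Finset.prod_eq_single i]
        · simp
        · intro k _ hk; simp [hk, (hf N hN ω).one]
        · simp
      rw [e1, e2] at h
      exact h
    · intro i j hij
      have h := hcond N (fun k => if k = i ∨ k = j then φ else fun _ => 1)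
        (fun k => by split_ifs; exacts [hφ, measurable_const])
        (fun k => by split_ifs; exacts [⟨C, hC⟩, ⟨1, fun _ => by simp⟩])
      have e1 : (fun ω => ∏ k, (if k = i ∨ k = j then φ else fun _ => 1) (Y N k ω)) =
          fun ω => φ (Y N i ω) * φ (Y N j ω) := by
        funext ω
        rw [Finset.prod_eq_mul i j hij]
        · simp
        · intro k _ hk; simp [hk.1, hk.2]
        · simp
        · simp
      have e2 : (fun ω => ∏ k, ∫ x, (if k = i ∨ k = j then φ else fun _ => 1) x * f N ω x ∂μ) =
          fun ω => (∫ x, φ x * f N ω x ∂μ) * ∫ x, φ x * f N ω x ∂μ := by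
        funext ω
        rw [Finset.prod_eq_mul i j hij]
        · simp
        · intro k _ hk; simp [hk.1, hk.2, (hf N hN ω).one]
        · simp
        · simp
      rw [e1, e2] at h
      exact h
  intro ε hε
  have hlim : Filter.Tendsto (fun N : ℕ => ENNReal.ofReal ((4 * C ^ 2 / ε ^ 2) / N))
      Filter.atTop (nhds 0) := by
    have := ENNReal.tendsto_ofReal (tendsto_const_div_atTop_nhds_zero_nat (4 * C ^ 2 / ε ^ 2))
    simpa using this
  refine tendsto_of_tendsto_of_tendsto_of_le_of_le' tendsto_const_nhds hlim
    (Filter.Eventually.of_forall fun _ => zero_le) ?_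
  filter_upwards [Filter.eventually_gt_atTop 0] with N hN
  obtain ⟨hm, hb, hv⟩ := main N hN
  have hN' : (0 : ℝ) < N := by exact_mod_cast hN
  set Z : Ω → ℝ := fun ω => (N : ℝ)⁻¹ * ∑ i, φ (Y N i ω) - ∫ x, φ x * f N ω x ∂μ with hZ
  have hZm : AEStronglyMeasurable Z P :=
    (((Finset.measurable_sum _ fun j _ => hφ.comp (hY N j)).const_mul _).aestronglyMeasurable).sub hm
  have hZb : ∀ ω, |Z ω| ≤ 2 * C := by
    intro ω
    have h1 : |(N : ℝ)⁻¹ * ∑ i, φ (Y N i ω)| ≤ C := by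
      rw [abs_mul, abs_of_pos (by positivity : (0:ℝ) < (N : ℝ)⁻¹), inv_mul_le_iff₀ hN']
      refine (Finset.abs_sum_le_sum_abs _ _).trans ?_
      refine (Finset.sum_le_sum fun i _ => hC (Y N i ω)).trans ?_
      simp
    have h2 := hb ω
    have := abs_sub ((N : ℝ)⁻¹ * ∑ i, φ (Y N i ω)) (∫ x, φ x * f N ω x ∂μ)
    simp only [hZ]
    linarith
  have hZi : Integrable (fun ω => Z ω ^ 2) P := by
    refine .of_bound (hZm.pow 2) ((2 * C) ^ 2) (.of_forall fun ω => ?_)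
    rw [norm_pow, Real.norm_eq_abs]
    exact pow_le_pow_left₀ (abs_nonneg _) (hZb ω) 2
  have hch := mul_meas_ge_le_integral_of_nonneg (.of_forall fun ω => sq_nonneg (Z ω)) hZi (ε ^ 2)
  calc P {ω | ε < |Z ω|} ≤ P {ω | ε ^ 2 ≤ Z ω ^ 2} := by
        refine measure_mono fun ω hω => ?_
        have h1 : ε < |Z ω| := hω
        show ε ^ 2 ≤ Z ω ^ 2
        rw [← sq_abs (Z ω)]
        exact pow_le_pow_left₀ hε.le h1.le 2
    _ = ENNReal.ofReal (P.real {ω | ε ^ 2 ≤ Z ω ^ 2}) := by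
        rw [Measure.real, ENNReal.ofReal_toReal (measure_ne_top _ _)]
    _ ≤ _ := by
        refine ENNReal.ofReal_le_ofReal ?_
        have h3 := hch.trans hv
        rw [div_div, mul_comm (ε ^ 2), ← div_div, le_div_iff₀ (by positivity)]
        linarith

/-- Theorem 1: if `x ↦ a_t(x,·)` is continuous for the L¹-norm and
`0 < b_t(x, y_t) ≤ C(t, y_t) < ∞`, then for every `t` the particle filter is
consistent: `‖f^N_{t|t} − f_{t|t}‖₁ → 0` in probability as `N → ∞`.
The particles are described by random variables `X N t j` (sample size `N`, time `t`,
particle index `j`) such that, conditionally on the past, `(X N t j)_{j≤N}` is an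
i.i.d. sample from `f^N_{t|t}`. -/
theorem particle_filter_L1_consistency
    {α : Type*} [MeasurableSpace α] [MetricSpace α] [CompleteSpace α]
    [SecondCountableTopology α] [BorelSpace α]
    (μ : Measure α) [SigmaFinite μ]
    {Ω : Type*} [MeasurableSpace Ω] (P : Measure Ω) [IsProbabilityMeasure P]
    (a0 : α → ℝ) (a : ℕ → α → α → ℝ) (b : ℕ → α → ℝ)
    (ha0_meas : Measurable a0) (ha0_nonneg : ∀ x, 0 ≤ a0 x)
    (ha0_int : Integrable a0 μ) (ha0_one : (∫ x, a0 x ∂μ) = 1)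
    (ha_meas : ∀ t, Measurable (Function.uncurry (a t)))
    (ha_nonneg : ∀ t x' x, 0 ≤ a t x' x)
    (ha_kernel : ∀ t x', ∫ x, a t x' x ∂μ = 1)
    -- L¹-continuity of x ↦ a_t(x,·)
    (ha_cont : ∀ t, ∀ x₀ : α, ∀ δ > (0:ℝ), ∃ η > (0:ℝ), ∀ x, dist x x₀ < η →
      (∫ y, |a t x y - a t x₀ y| ∂μ) < δ)
    -- 0 < b_t ≤ C(t, y_t) < ∞
    (hb_meas : ∀ t, Measurable (b t))
    (hb_pos : ∀ t x, 0 < b t x)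
    (hb_bdd : ∀ t, ∃ C, ∀ x, b t x ≤ C)
    -- the particle system
    (X : (N : ℕ) → ℕ → Fin N → Ω → α)
    (hX_meas : ∀ N t j, Measurable (X N t j))
    -- conditionally on the past, (X N t j)_j is an i.i.d. sample from f^N_{t|t}
    (hcond : ∀ (N t : ℕ) (φ : Fin N → α → ℝ), (∀ j, Measurable (φ j)) →
      (∀ j, ∃ C, ∀ x, |φ j x| ≤ C) →
      P[(fun ω => ∏ j, φ j (X N t j ω)) | pastFiltration (X N) t]
        =ᵐ[P] fun ω => ∏ j, ∫ x, φ j x * particleFilter μ a0 a b (X N) t ω x ∂μ) :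
    ∀ t : ℕ, ∀ ε : ℝ, 0 < ε →
      Filter.Tendsto
        (fun N : ℕ => P {ω | ε < ∫ x,
          |particleFilter μ a0 a b (X N) t ω x - trueFilter μ a0 a b t x| ∂μ})
        Filter.atTop (nhds 0) := by
  have hker : ∀ t, IsKer μ (a t) := fun t => ⟨ha_meas t, ha_nonneg t, ha_kernel t⟩
  have hd0 : IsDens μ a0 := ⟨ha0_meas, ha0_nonneg, ha0_int, ha0_one⟩
  have htrue : ∀ t, IsDens μ (trueFilter μ a0 a b t) := by
    intro t
    induction t with
    | zero => exact hd0
    | succ t ih =>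
      obtain ⟨C, hC⟩ := hb_bdd (t + 1)
      exact ((hker (t + 1)).markov ih).bayes (hb_meas _) (hb_pos _) hC
  have hpart : ∀ t N, 0 < N → ∀ ω, IsDens μ (particleFilter μ a0 a b (X N) t ω) := by
    intro t N hN ω
    cases t with
    | zero => exact hd0
    | succ t =>
      obtain ⟨C, hC⟩ := hb_bdd (t + 1)
      exact ((hker (t + 1)).avg hN fun j => X N t j ω).bayes (hb_meas _) (hb_pos _) hC
  have hF : ∀ t N, pastFiltration (X N) t ≤ (inferInstance : MeasurableSpace Ω) := by
    intro t N
    refine iSup_le fun s => ?_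
    exact (measurable_pi_iff.2 fun j => hX_meas N s j).comap_le
  intro t
  change PTo0 P fun N ω => ∫ x, |particleFilter μ a0 a b (X N) t ω x - trueFilter μ a0 a b t x| ∂μ
  induction t with
  | zero =>
    refine PTo0.zero.mono fun N hN ω => ?_
    simp [particleFilter, trueFilter]
  | succ t ih =>
    obtain ⟨C, hC⟩ := hb_bdd (t + 1)
    have hft := htrue t
    have hg := (hker (t + 1)).markov hft
    have := hft.prob
    have hsm := stronglyMeasurable_kerL1 (hker (t + 1)) (ha_cont (t + 1))
    have hlln := banach_lln (P := P) (densMeas μ (trueFilter μ a0 a b t)) (kerL1 (hker (t + 1)))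
      hsm 1 (fun x => (norm_kerL1 _ x).le) (fun N j => X N t j) ?_
    · have hmul := hlln.mul_const (c := 2 * C / ∫ x, markovOp μ (a (t + 1))
        (trueFilter μ a0 a b t) x * b (t + 1) x ∂μ) ?_
      · refine hmul.mono fun N hN ω => ?_
        rw [integral_kerL1 (hker (t + 1)) hft hsm,
          kerL1_dist (hker (t + 1)) hN (fun j => X N t j ω) hg.int]
        exact bayes_dist ((hker (t + 1)).avg hN fun j => X N t j ω) hg (hb_meas _) (hb_pos _) hC
      · have hα : Nonempty α := by
          by_contra hα
          rw [not_nonempty_iff] at hα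
          have : ∫ x, a0 x ∂μ = 0 := by simp [Measure.eq_zero_of_isEmpty μ]
          linarith
        have hC0 : 0 ≤ C := (hb_pos (t + 1) hα.some).le.trans (hC hα.some)
        have := hg.mul_pos (hb_meas (t + 1)) (hb_pos (t + 1)) hC
        positivity
    · rintro φ hφ ⟨D, hD⟩
      have hs := scalar_lln (μ := μ) (P := P) (fun N => pastFiltration (X N) t) (hF t)
        (fun N j => X N t j) (fun N j => hX_meas N t j)
        (fun N => particleFilter μ a0 a b (X N) t) (hpart t) (fun N => hcond N t) φ hφ D hD
      have hα : Nonempty α := by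
        by_contra hα
        rw [not_nonempty_iff] at hα
        have : ∫ x, a0 x ∂μ = 0 := by simp [Measure.eq_zero_of_isEmpty μ]
        linarith
      have hD0 : 0 ≤ D := (abs_nonneg _).trans (hD hα.some)
      refine (hs.add (ih.mul_const hD0)).mono fun N hN ω => ?_
      have hp := hpart t N hN ω
      rw [hft.integral_densMeas]
      have i1 : Integrable (fun x => φ x * particleFilter μ a0 a b (X N) t ω x) μ :=
        hp.int.bdd_mul hφ.aestronglyMeasurable (.of_forall hD)
      have i2 : Integrable (fun x => trueFilter μ a0 a b t x • φ x) μ :=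
        hft.int.mul_bdd hφ.aestronglyMeasurable (.of_forall hD)
      have hle : |∫ x, φ x * particleFilter μ a0 a b (X N) t ω x ∂μ -
          ∫ x, trueFilter μ a0 a b t x • φ x ∂μ| ≤
          (∫ x, |particleFilter μ a0 a b (X N) t ω x - trueFilter μ a0 a b t x| ∂μ) * D := by
        rw [← integral_sub i1 i2, ← integral_mul_const]
        rw [← Real.norm_eq_abs]
        refine norm_integral_le_of_norm_le ((hp.int.sub hft.int).abs.mul_const D)
          (.of_forall fun x => ?_)
        have e : φ x * particleFilter μ a0 a b (X N) t ω x - trueFilter μ a0 a b t x • φ x =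
          (particleFilter μ a0 a b (X N) t ω x - trueFilter μ a0 a b t x) * φ x := by
          rw [smul_eq_mul]; ring
        rw [e, Real.norm_eq_abs, abs_mul]
        exact mul_le_mul_of_nonneg_left (hD x) (abs_nonneg _)
      exact (abs_sub_le _ _ _).trans (add_le_add le_rfl hle)
end

section
/- (Theorem 2) Assume the transition densities a_t = a are the same for all t, that x ↦ a(x,·) is continuous in the L₁-norm and satisfies condition (19), and that condition (21) holds. Then for every ε > 0 there exist constants c₁ and c₂ such that, for all times t and all sample sizes N, P[‖f^N_{t|t} − f_{t|t}‖₁ > ε] ≤ c₁ exp(−c₂ N). -/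
open MeasureTheory ProbabilityTheory

/-- Deterministic hypotheses on the state space model. -/
structure PFModel {α : Type*} [MeasurableSpace α] (μ : Measure α)
    (a : α → α → ℝ) (b : ℕ → α → ℝ) (h : α → ℝ) (ca Ca Cb : ℝ) : Prop where
  ne : Nonempty α
  hca : 0 < ca
  hcaCa : ca < Ca
  ha_meas : Measurable (Function.uncurry a)
  ha_nonneg : ∀ x' x, 0 ≤ a x' x
  ha_kernel : ∀ x', ∫ x, a x' x ∂μ = 1
  hh_meas : Measurable h
  hh_nonneg : ∀ x, 0 ≤ h x
  hh_int : Integrable h μ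
  hh_one : (∫ x, h x ∂μ) = 1
  h19 : ∀ x' x, ca * h x ≤ a x' x ∧ a x' x ≤ Ca * h x
  hb_meas : ∀ t, Measurable (b t)
  hb_pos : ∀ t x, 0 < b t x
  h21 : ∀ t x x', b t x ≤ Cb * b t x'

/-- Probability density. -/
structure PFDens {α : Type*} [MeasurableSpace α] (μ : Measure α) (f : α → ℝ) : Prop where
  meas : Measurable f
  nonneg : ∀ x, 0 ≤ f x
  int : Integrable f μ
  one : (∫ x, f x ∂μ) = 1

set_option linter.unusedSectionVars false

namespace PFModel

variable {α : Type*} [MeasurableSpace α] {μ : Measure α} [SigmaFinite μ]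
    {a : α → α → ℝ} {b : ℕ → α → ℝ} {h : α → ℝ} {ca Ca Cb : ℝ}

lemma sub_abs_int {f g : α → ℝ} (hf : Integrable f μ) (hg : Integrable g μ) :
    Integrable (fun x => |f x - g x|) μ := (hf.sub hg).abs

lemma Cb_ge (M : PFModel μ a b h ca Ca Cb) : 1 ≤ Cb := by
  obtain ⟨x⟩ := M.ne
  have h1 := M.h21 0 x x
  have h2 := M.hb_pos 0 x
  by_contra hc
  push Not at hc
  nlinarith

lemma Ca_pos (M : PFModel μ a b h ca Ca Cb) : 0 < Ca := M.hca.trans M.hcaCa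

lemma a_meas (M : PFModel μ a b h ca Ca Cb) (x : α) : Measurable (a x) :=
  M.ha_meas.comp measurable_prodMk_left

lemma a_meas' (M : PFModel μ a b h ca Ca Cb) (y : α) : Measurable (fun x => a x y) :=
  M.ha_meas.comp measurable_prodMk_right

lemma a_int (M : PFModel μ a b h ca Ca Cb) (x : α) : Integrable (a x) μ := by
  refine (M.hh_int.const_mul Ca).mono' (M.a_meas x).aestronglyMeasurable (ae_of_all _ fun y => ?_)
  rw [Real.norm_eq_abs, abs_of_nonneg (M.ha_nonneg _ _)]
  exact (M.h19 x y).2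

lemma a_dens (M : PFModel μ a b h ca Ca Cb) (x : α) : PFDens μ (a x) :=
  ⟨M.a_meas x, M.ha_nonneg x, M.a_int x, M.ha_kernel x⟩

/-- integrability of `f x * c x y` on the product -/
lemma prod_int (M : PFModel μ a b h ca Ca Cb) {f : α → ℝ} (hf : Measurable f)
    (hfi : Integrable f μ) {c : α → α → ℝ} (hc : Measurable (Function.uncurry c)) (C : ℝ)
    (hcC : ∀ x y, |c x y| ≤ C * h y) :
    Integrable (Function.uncurry fun x y => f x * c x y) (μ.prod μ) := by
  have h1 : Integrable (fun z : α × α => |f z.1| * (C * h z.2)) (μ.prod μ) :=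
    hfi.abs.mul_prod (M.hh_int.const_mul C)
  refine h1.mono' ((hf.comp measurable_fst).mul hc).aestronglyMeasurable (ae_of_all _ fun z => ?_)
  simp only [Function.uncurry, Real.norm_eq_abs, abs_mul]
  exact mul_le_mul_of_nonneg_left (hcC _ _) (abs_nonneg _)

lemma a_abs (M : PFModel μ a b h ca Ca Cb) (x y : α) : |a x y| ≤ Ca * h y := by
  rw [abs_of_nonneg (M.ha_nonneg _ _)]; exact (M.h19 x y).2

lemma fa_int (M : PFModel μ a b h ca Ca Cb) {f : α → ℝ}
    (hfi : Integrable f μ) (y : α) : Integrable (fun x => f x * a x y) μ :=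
  hfi.mul_bdd (c := Ca * h y) (M.a_meas' y).aestronglyMeasurable
    (ae_of_all _ fun x => M.a_abs x y)

lemma markov_lower (M : PFModel μ a b h ca Ca Cb) {w : α → ℝ} (hw : ∀ x, 0 ≤ w x)
    (hwi : Integrable w μ) (y : α) : ca * h y * ∫ x, w x ∂μ ≤ markovOp μ a w y := by
  unfold markovOp
  rw [← integral_const_mul]
  refine integral_mono (hwi.const_mul _) (M.fa_int hwi y) fun x => ?_
  have := (M.h19 x y).1
  have := hw x
  simp only
  nlinarith

lemma markov_upper (M : PFModel μ a b h ca Ca Cb) {w : α → ℝ} (hw : ∀ x, 0 ≤ w x)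
    (hwi : Integrable w μ) (y : α) : markovOp μ a w y ≤ Ca * h y * ∫ x, w x ∂μ := by
  unfold markovOp
  rw [← integral_const_mul]
  refine integral_mono (M.fa_int hwi y) (hwi.const_mul _) fun x => ?_
  have := (M.h19 x y).2
  have := hw x
  simp only
  nlinarith

lemma markov_meas (M : PFModel μ a b h ca Ca Cb) {f : α → ℝ} (hf : Measurable f) :
    Measurable (markovOp μ a f) := by
  unfold markovOp
  have : StronglyMeasurable (fun z : α × α => f z.1 * a z.1 z.2) :=
    ((hf.comp measurable_fst).mul M.ha_meas).stronglyMeasurable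
  exact (this.integral_prod_left' (μ := μ)).measurable

lemma markov_dens (M : PFModel μ a b h ca Ca Cb) {f : α → ℝ} (hf : PFDens μ f) :
    PFDens μ (markovOp μ a f) := by
  have hI := M.prod_int hf.meas hf.int M.ha_meas Ca M.a_abs
  refine ⟨M.markov_meas hf.meas, fun y => integral_nonneg fun x =>
    mul_nonneg (hf.nonneg x) (M.ha_nonneg x y), ?_, ?_⟩
  · exact hI.integral_prod_right
  · unfold markovOp
    rw [← integral_integral_swap hI]
    simp_rw [integral_const_mul, M.ha_kernel, mul_one]
    exact hf.one

lemma markov_sub (M : PFModel μ a b h ca Ca Cb) {f g : α → ℝ} (hf : Integrable f μ)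
    (hg : Integrable g μ) (c d : ℝ) (y : α) :
    markovOp μ a (fun x => c * f x - d * g x) y = c * markovOp μ a f y - d * markovOp μ a g y := by
  unfold markovOp
  rw [← integral_const_mul, ← integral_const_mul, ← integral_sub ((M.fa_int hf y).const_mul _)
    ((M.fa_int hg y).const_mul _)]
  congr 1; ext x; ring

/-- Fubini bound for the norm -/
lemma norm_fubini (M : PFModel μ a b h ca Ca Cb) {f : α → ℝ} (hf : Measurable f)
    (hfi : Integrable f μ) {c : α → α → ℝ} (hc : Measurable (Function.uncurry c)) (C : ℝ)
    (hcC : ∀ x y, |c x y| ≤ C * h y) :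
    ∫ y, |∫ x, f x * c x y ∂μ| ∂μ ≤ ∫ x, |f x| * ∫ y, |c x y| ∂μ ∂μ := by
  have hI := M.prod_int hf hfi hc C hcC
  have hJ : Integrable (Function.uncurry fun x y => |f x| * |c x y|) (μ.prod μ) := by
    refine hI.abs.congr (ae_of_all _ fun z => ?_)
    simp [Function.uncurry, abs_mul]
  calc ∫ y, |∫ x, f x * c x y ∂μ| ∂μ ≤ ∫ y, ∫ x, |f x| * |c x y| ∂μ ∂μ := by
        refine integral_mono hI.integral_prod_right.abs hJ.integral_prod_right fun y => ?_
        refine (abs_integral_le_integral_abs).trans (le_of_eq ?_)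
        simp_rw [abs_mul]
    _ = ∫ x, ∫ y, |f x| * |c x y| ∂μ ∂μ := (integral_integral_swap hJ).symm
    _ = _ := by simp_rw [integral_const_mul]

lemma markov_contr (M : PFModel μ a b h ca Ca Cb) {f g : α → ℝ} (hf : PFDens μ f)
    (hg : PFDens μ g) :
    ∫ y, |markovOp μ a f y - markovOp μ a g y| ∂μ ≤ ∫ x, |f x - g x| ∂μ := by
  have := M.norm_fubini (hf.meas.sub hg.meas) (hf.int.sub hg.int) M.ha_meas Ca M.a_abs
  have e : ∀ x, ∫ y, |a x y| ∂μ = 1 := fun x => by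
    simp_rw [abs_of_nonneg (M.ha_nonneg x _)]; exact M.ha_kernel x
  simp_rw [e, mul_one] at this
  refine le_trans (le_of_eq ?_) this
  congr 1; ext y
  have h2 := M.markov_sub hf.int hg.int 1 1 y
  simp only [one_mul] at h2
  rw [← h2]; rfl

lemma ub_int (M : PFModel μ a b h ca Ca Cb) {u : α → ℝ} (hu : Integrable u μ) (t : ℕ) :
    Integrable (fun x => u x * b t x) μ := by
  obtain ⟨x0⟩ := M.ne
  refine hu.mul_bdd (c := Cb * b t x0) (M.hb_meas t).aestronglyMeasurable
    (ae_of_all _ fun x => ?_)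
  rw [Real.norm_eq_abs, abs_of_pos (M.hb_pos t x)]
  exact M.h21 t x x0

lemma b_le (M : PFModel μ a b h ca Ca Cb) {u : α → ℝ} (hu : PFDens μ u) (t : ℕ) (x : α) :
    b t x ≤ Cb * ∫ x', u x' * b t x' ∂μ := by
  rw [← integral_const_mul]
  calc b t x = ∫ x', u x' * b t x ∂μ := by rw [integral_mul_const, hu.one, one_mul]
    _ ≤ _ := by
      refine integral_mono (hu.int.mul_const _) ((M.ub_int hu.int t).const_mul _) fun x' => ?_
      have := M.h21 t x x'
      have := hu.nonneg x'
      simp only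
      nlinarith

lemma U_pos (M : PFModel μ a b h ca Ca Cb) {u : α → ℝ} (hu : PFDens μ u) (t : ℕ) :
    0 < ∫ x', u x' * b t x' ∂μ := by
  obtain ⟨x⟩ := M.ne
  have h1 := M.b_le hu t x
  have h2 := M.hb_pos t x
  have h3 := M.Cb_ge
  by_contra hc
  push Not at hc
  nlinarith

lemma bayes_dens (M : PFModel μ a b h ca Ca Cb) {u : α → ℝ} (hu : PFDens μ u) (t : ℕ) :
    PFDens μ (bayesOp μ u (b t)) := by
  have hU := M.U_pos hu t
  refine ⟨(hu.meas.mul (M.hb_meas t)).div_const _, fun x =>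
    div_nonneg (mul_nonneg (hu.nonneg x) (M.hb_pos t x).le) hU.le,
    (M.ub_int hu.int t).div_const _, ?_⟩
  unfold bayesOp
  rw [integral_div, div_self hU.ne']

lemma bayes_le (M : PFModel μ a b h ca Ca Cb) {u : α → ℝ} (hu : PFDens μ u) (t : ℕ) (x : α) :
    bayesOp μ u (b t) x ≤ Cb * u x := by
  have hU := M.U_pos hu t
  unfold bayesOp
  rw [div_le_iff₀ hU]
  have := M.b_le hu t x
  have := hu.nonneg x
  nlinarith

lemma bayes_lip (M : PFModel μ a b h ca Ca Cb) {u v : α → ℝ} (hu : PFDens μ u)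
    (hv : PFDens μ v) (t : ℕ) :
    ∫ x, |bayesOp μ u (b t) x - bayesOp μ v (b t) x| ∂μ ≤ 2 * Cb * ∫ x, |u x - v x| ∂μ := by
  have hU := M.U_pos hu t
  have hV := M.U_pos hv t
  have hvd := M.bayes_dens hv t
  have hud := M.bayes_dens hu t
  have hUV : |(∫ x, v x * b t x ∂μ) - ∫ x, u x * b t x ∂μ|
      ≤ Cb * (∫ x, u x * b t x ∂μ) * ∫ x, |u x - v x| ∂μ := by
    rw [← integral_sub (M.ub_int hv.int t) (M.ub_int hu.int t), ← integral_const_mul]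
    refine abs_integral_le_integral_abs.trans ?_
    refine integral_mono ((M.ub_int hv.int t).sub (M.ub_int hu.int t)).abs
      ((hu.int.sub hv.int).abs.const_mul _) fun x => ?_
    simp only
    rw [← sub_mul, abs_mul, abs_of_pos (M.hb_pos t x), abs_sub_comm, mul_comm]
    exact mul_le_mul_of_nonneg_right (M.b_le hu t x) (abs_nonneg _)
  set U := ∫ x, u x * b t x ∂μ with hUdef
  set V := ∫ x, v x * b t x ∂μ with hVdef
  set D := ∫ x, |u x - v x| ∂μ with hD
  have hpt : ∀ x, |bayesOp μ u (b t) x - bayesOp μ v (b t) x|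
      ≤ Cb * |u x - v x| + Cb * D * bayesOp μ v (b t) x := by
    intro x
    have e : bayesOp μ u (b t) x - bayesOp μ v (b t) x
        = (u x - v x) * (b t x / U) + bayesOp μ v (b t) x * ((V - U) / U) := by
      unfold bayesOp
      rw [← hUdef, ← hVdef]
      field_simp
      ring
    rw [e]
    refine (abs_add_le _ _).trans (add_le_add ?_ ?_)
    · rw [abs_mul, mul_comm]
      refine mul_le_mul_of_nonneg_right ?_ (abs_nonneg _)
      rw [abs_of_pos (div_pos (M.hb_pos t x) hU), div_le_iff₀ hU]
      exact M.b_le hu t x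
    · rw [abs_mul, mul_comm, abs_of_nonneg (hvd.nonneg x)]
      refine mul_le_mul_of_nonneg_right ?_ (hvd.nonneg x)
      rw [abs_div, abs_of_pos hU, div_le_iff₀ hU]
      linarith
  calc _ ≤ ∫ x, (Cb * |u x - v x| + Cb * D * bayesOp μ v (b t) x) ∂μ :=
        integral_mono (hud.int.sub hvd.int).abs
          (((hu.int.sub hv.int).abs.const_mul _).add (hvd.int.const_mul _)) hpt
    _ = 2 * Cb * D := by
        rw [integral_add ((sub_abs_int hu.int hv.int).const_mul _) (hvd.int.const_mul _),
          integral_const_mul, integral_const_mul, hvd.one, ← hD]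
        ring

end PFModel

/-- one step of the filter -/
noncomputable def pfStep {α : Type*} [MeasurableSpace α] (μ : Measure α)
    (a : α → α → ℝ) (b : ℕ → α → ℝ) (t : ℕ) (f : α → ℝ) : α → ℝ :=
  bayesOp μ (markovOp μ a f) (b t)

/-- `k` steps of the filter from time `s` -/
noncomputable def pfFlow {α : Type*} [MeasurableSpace α] (μ : Measure α)
    (a : α → α → ℝ) (b : ℕ → α → ℝ) (s : ℕ) (f : α → ℝ) : ℕ → α → ℝ
  | 0 => f
  | (k + 1) => pfStep μ a b (s + k + 1) (pfFlow μ a b s f k)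

/-- comparability -/
def PFRel {α : Type*} (r : ℝ) (f g : α → ℝ) : Prop :=
  ∃ m : ℝ, 0 < m ∧ ∀ x, m * g x ≤ f x ∧ f x ≤ m * (1 + r) * g x

namespace PFModel

variable {α : Type*} [MeasurableSpace α] {μ : Measure α} [SigmaFinite μ]
    {a : α → α → ℝ} {b : ℕ → α → ℝ} {h : α → ℝ} {ca Ca Cb : ℝ}

lemma step_dens (M : PFModel μ a b h ca Ca Cb) {f : α → ℝ} (hf : PFDens μ f) (t : ℕ) :
    PFDens μ (pfStep μ a b t f) := M.bayes_dens (M.markov_dens hf) t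

lemma flow_dens (M : PFModel μ a b h ca Ca Cb) {f : α → ℝ} (hf : PFDens μ f) (s k : ℕ) :
    PFDens μ (pfFlow μ a b s f k) := by
  induction k with
  | zero => exact hf
  | succ k ih => exact M.step_dens ih _

lemma step_lip (M : PFModel μ a b h ca Ca Cb) {f g : α → ℝ} (hf : PFDens μ f)
    (hg : PFDens μ g) (t : ℕ) :
    ∫ x, |pfStep μ a b t f x - pfStep μ a b t g x| ∂μ ≤ 2 * Cb * ∫ x, |f x - g x| ∂μ := by
  have hC := M.Cb_ge
  refine (M.bayes_lip (M.markov_dens hf) (M.markov_dens hg) t).trans ?_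
  exact mul_le_mul_of_nonneg_left (M.markov_contr hf hg) (by linarith)

lemma bayes_rel (M : PFModel μ a b h ca Ca Cb) {u v : α → ℝ} (hu : PFDens μ u)
    (hv : PFDens μ v) (t : ℕ) {r : ℝ} (huv : PFRel r u v) :
    PFRel r (bayesOp μ u (b t)) (bayesOp μ v (b t)) := by
  obtain ⟨m, hm, H⟩ := huv
  have hU := M.U_pos hu t
  have hV := M.U_pos hv t
  refine ⟨m * (∫ x, v x * b t x ∂μ) / (∫ x, u x * b t x ∂μ), by positivity, fun x => ?_⟩
  unfold bayesOp
  set U := ∫ x, u x * b t x ∂μ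
  set V := ∫ x, v x * b t x ∂μ
  have hb := M.hb_pos t x
  constructor
  · rw [show m * V / U * (v x * b t x / V) = (m * v x) * b t x / U by field_simp]
    gcongr
    exact (H x).1
  · rw [show m * V / U * (1 + r) * (v x * b t x / V) = (m * (1 + r) * v x) * b t x / U by
      field_simp]
    gcongr
    exact (H x).2

lemma rel_bounds {f g : α → ℝ} (hf : PFDens μ f) (hg : PFDens μ g) {m r : ℝ}
    (H : ∀ x, m * g x ≤ f x ∧ f x ≤ m * (1 + r) * g x) : m ≤ 1 ∧ 1 ≤ m * (1 + r) := by
  constructor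
  · have := integral_mono (hg.int.const_mul m) hf.int fun x => (H x).1
    rwa [integral_const_mul, hg.one, hf.one, mul_one] at this
  · have := integral_mono hf.int (hg.int.const_mul (m * (1 + r))) fun x => (H x).2
    rwa [integral_const_mul, hg.one, hf.one, mul_one] at this

lemma markov_rel (M : PFModel μ a b h ca Ca Cb) {f g : α → ℝ} (hf : PFDens μ f)
    (hg : PFDens μ g) {r : ℝ} (hr : 0 ≤ r) (hfg : PFRel r f g) :
    PFRel ((1 - ca / Ca) * r) (markovOp μ a f) (markovOp μ a g) := by
  obtain ⟨m, hm, H⟩ := hfg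
  obtain ⟨h1, h2⟩ := rel_bounds hf hg H
  have hCa := M.Ca_pos
  have hγ : 0 < ca / Ca := div_pos M.hca hCa
  have hγ1 : ca / Ca < 1 := (div_lt_one hCa).2 M.hcaCa
  have key : ∀ y, ∀ c : ℝ, 0 ≤ c → ca / Ca * c * markovOp μ a g y ≤ ca * h y * c := by
    intro y c hc
    have := M.markov_upper hg.nonneg hg.int y
    rw [hg.one, mul_one] at this
    calc ca / Ca * c * markovOp μ a g y ≤ ca / Ca * c * (Ca * h y) := by gcongr
      _ = _ := by field_simp
  set γ := ca / Ca
  refine ⟨m + γ * (1 - m), by nlinarith, fun y => ?_⟩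
  have hA := (M.markov_dens hg).nonneg y
  constructor
  · have e := M.markov_lower (w := fun x => 1 * f x - m * g x)
      (fun x => by have := (H x).1; linarith) ((hf.int.const_mul _).sub (hg.int.const_mul _)) y
    rw [M.markov_sub hf.int hg.int, integral_sub (hf.int.const_mul _) (hg.int.const_mul _),
      integral_const_mul, integral_const_mul, hf.one, hg.one] at e
    have := key y (1 - m) (by linarith)
    linarith
  · have e := M.markov_lower (w := fun x => (m * (1 + r)) * g x - 1 * f x)
      (fun x => by have := (H x).2; linarith) ((hg.int.const_mul _).sub (hf.int.const_mul _)) y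
    rw [M.markov_sub hg.int hf.int, integral_sub (hg.int.const_mul _) (hf.int.const_mul _),
      integral_const_mul, integral_const_mul, hf.one, hg.one] at e
    have := key y (m * (1 + r) - 1) (by linarith)
    have h3 : markovOp μ a f y ≤ (m * (1 + r) - γ * (m * (1 + r) - 1)) * markovOp μ a g y := by
      linarith
    refine h3.trans (mul_le_mul_of_nonneg_right ?_ hA)
    have h4 : 0 ≤ γ * (1 - m) * ((1 - γ) * r) :=
      mul_nonneg (mul_nonneg hγ.le (by linarith)) (mul_nonneg (by linarith) hr)
    linarith

lemma markov_rel0 (M : PFModel μ a b h ca Ca Cb) {f g : α → ℝ} (hf : PFDens μ f)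
    (hg : PFDens μ g) :
    PFRel (1 / (ca / Ca) ^ 2 - 1) (markovOp μ a f) (markovOp μ a g) := by
  have hCa := M.Ca_pos
  have hca := M.hca
  refine ⟨ca / Ca, by positivity, fun y => ?_⟩
  have f1 := M.markov_upper hf.nonneg hf.int y
  have f2 := M.markov_lower hf.nonneg hf.int y
  have g1 := M.markov_upper hg.nonneg hg.int y
  have g2 := M.markov_lower hg.nonneg hg.int y
  rw [hf.one, mul_one] at f1 f2
  rw [hg.one, mul_one] at g1 g2
  constructor
  · calc ca / Ca * markovOp μ a g y ≤ ca / Ca * (Ca * h y) := by gcongr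
      _ = ca * h y := by field_simp
      _ ≤ _ := f2
  · calc _ ≤ Ca * h y := f1
      _ = Ca / ca * (ca * h y) := by field_simp
      _ ≤ Ca / ca * markovOp μ a g y := by gcongr
      _ = _ := by field_simp; ring

lemma r0_nonneg (M : PFModel μ a b h ca Ca Cb) : 0 ≤ 1 / (ca / Ca) ^ 2 - 1 := by
  have hCa := M.Ca_pos
  have hγ : 0 < ca / Ca := div_pos M.hca hCa
  have hγ1 : ca / Ca < 1 := (div_lt_one hCa).2 M.hcaCa
  rw [sub_nonneg, le_div_iff₀ (by positivity)]
  nlinarith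

lemma flow_rel (M : PFModel μ a b h ca Ca Cb) {f g : α → ℝ} (hf : PFDens μ f)
    (hg : PFDens μ g) (s k : ℕ) :
    PFRel ((1 - ca / Ca) ^ k * (1 / (ca / Ca) ^ 2 - 1)) (pfFlow μ a b s f (k + 1))
      (pfFlow μ a b s g (k + 1)) := by
  have hCa := M.Ca_pos
  have hγ1 : ca / Ca < 1 := (div_lt_one hCa).2 M.hcaCa
  induction k with
  | zero =>
    rw [pow_zero, one_mul]
    exact M.bayes_rel (M.markov_dens hf) (M.markov_dens hg) _ (M.markov_rel0 hf hg)
  | succ k ih =>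
    rw [pow_succ', mul_assoc]
    have h1 := M.flow_dens hf s (k + 1)
    have h2 := M.flow_dens hg s (k + 1)
    exact M.bayes_rel (M.markov_dens h1) (M.markov_dens h2) _
      (M.markov_rel h1 h2 (mul_nonneg (pow_nonneg (by linarith) _) M.r0_nonneg) ih)

lemma rel_norm {f g : α → ℝ} (hf : PFDens μ f) (hg : PFDens μ g) {r : ℝ} (hr : 0 ≤ r)
    (H : PFRel r f g) : ∫ x, |f x - g x| ∂μ ≤ r := by
  obtain ⟨m, hm, H⟩ := H
  obtain ⟨h1, h2⟩ := rel_bounds hf hg H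
  calc ∫ x, |f x - g x| ∂μ ≤ ∫ x, r * g x ∂μ := by
        refine integral_mono (hf.int.sub hg.int).abs (hg.int.const_mul r) fun x => ?_
        have hx := H x
        have hg0 := hg.nonneg x
        refine abs_le.2 ⟨?_, ?_⟩
        · have : (1 - r) * g x ≤ m * g x := mul_le_mul_of_nonneg_right (by nlinarith) hg0
          linarith
        · have : m * (1 + r) * g x ≤ (1 + r) * g x := mul_le_mul_of_nonneg_right (by nlinarith) hg0
          linarith
    _ = r := by rw [integral_const_mul, hg.one, mul_one]

lemma flow_forget (M : PFModel μ a b h ca Ca Cb) {f g : α → ℝ} (hf : PFDens μ f)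
    (hg : PFDens μ g) (s k : ℕ) :
    ∫ x, |pfFlow μ a b s f (k + 1) x - pfFlow μ a b s g (k + 1) x| ∂μ
      ≤ (1 - ca / Ca) ^ k * (1 / (ca / Ca) ^ 2 - 1) := by
  have hγ1 : ca / Ca < 1 := (div_lt_one M.Ca_pos).2 M.hcaCa
  exact rel_norm (M.flow_dens hf _ _) (M.flow_dens hg _ _)
    (mul_nonneg (pow_nonneg (by linarith) _) M.r0_nonneg) (M.flow_rel hf hg s k)

lemma l1_tri {f g k : α → ℝ} (hf : PFDens μ f) (hg : PFDens μ g) (hk : PFDens μ k) :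
    ∫ x, |f x - k x| ∂μ ≤ ∫ x, |f x - g x| ∂μ + ∫ x, |g x - k x| ∂μ := by
  rw [← integral_add (sub_abs_int hf.int hg.int) (sub_abs_int hg.int hk.int)]
  exact integral_mono (hf.int.sub hk.int).abs
    ((hf.int.sub hg.int).abs.add (hg.int.sub hk.int).abs) fun x => abs_sub_le _ _ _

lemma flow_err (M : PFModel μ a b h ca Ca Cb) (g : ℕ → α → ℝ) (hg : ∀ t, PFDens μ (g t))
    (s : ℕ) (e : ℝ) (k : ℕ)
    (he : ∀ i < k, ∫ x, |g (s + i + 1) x - pfStep μ a b (s + i + 1) (g (s + i)) x| ∂μ ≤ e) :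
    ∫ x, |g (s + k) x - pfFlow μ a b s (g s) k x| ∂μ
      ≤ e * ∑ i ∈ Finset.range k, (2 * Cb) ^ i := by
  induction k with
  | zero => simp [pfFlow]
  | succ k ih =>
    have ih := ih fun i hi => he i (by omega)
    have h1 := he k (by omega)
    have hfl := M.flow_dens (hg s) s k
    have h2 := M.step_lip (hg (s + k)) hfl (s + k + 1)
    have h3 := l1_tri (hg (s + k + 1)) (M.step_dens (hg (s + k)) (s + k + 1))
      (M.step_dens hfl (s + k + 1))
    have hC := M.Cb_ge
    refine h3.trans ?_
    rw [Finset.sum_range_succ', pow_zero]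
    simp_rw [pow_succ]
    rw [← Finset.sum_mul]
    have h4 := mul_le_mul_of_nonneg_left ih (show 0 ≤ 2 * Cb by linarith)
    linarith

end PFModel

namespace PFModel

variable {α : Type*} [MeasurableSpace α] {μ : Measure α} [SigmaFinite μ]
    {a : α → α → ℝ} {b : ℕ → α → ℝ} {h : α → ℝ} {ca Ca Cb : ℝ}

lemma diff_abs (M : PFModel μ a b h ca Ca Cb) (x x' y : α) : |a x y - a x' y| ≤ 2 * Ca * h y := by
  have h1 := M.h19 x y
  have h2 := M.h19 x' y
  have h3 := M.ha_nonneg x y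
  have h4 := M.ha_nonneg x' y
  rw [abs_le]
  constructor <;> nlinarith

lemma emp_dens (M : PFModel μ a b h ca Ca Cb) {N : ℕ} (hN : 0 < N) (X : Fin N → α) :
    PFDens μ (fun y => (N : ℝ)⁻¹ * ∑ j, a (X j) y) := by
  have hN' : (0 : ℝ) < N := by exact_mod_cast hN
  refine ⟨(Finset.measurable_sum _ fun j _ => M.a_meas _).const_mul _, fun y =>
    mul_nonneg (by positivity) (Finset.sum_nonneg fun j _ => M.ha_nonneg _ _),
    (integrable_finsetSum _ fun j _ => M.a_int _).const_mul _, ?_⟩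
  rw [integral_const_mul, integral_finsetSum _ fun j _ => M.a_int _]
  simp only [M.ha_kernel, Finset.sum_const, Finset.card_univ, Fintype.card_fin, nsmul_eq_mul,
    mul_one]
  field_simp

lemma emp_le (M : PFModel μ a b h ca Ca Cb) {N : ℕ} (hN : 0 < N) (X : Fin N → α) (y : α) :
    (N : ℝ)⁻¹ * ∑ j, a (X j) y ≤ Ca * h y := by
  have hN' : (0 : ℝ) < N := by exact_mod_cast hN
  have : ∑ j, a (X j) y ≤ ∑ _j : Fin N, Ca * h y := Finset.sum_le_sum fun j _ => (M.h19 _ _).2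
  simp only [Finset.sum_const, Finset.card_univ, Fintype.card_fin, nsmul_eq_mul] at this
  rw [inv_mul_le_iff₀ hN']
  exact this

/-- deterministic discretisation bound -/
lemma emp_bound (M : PFModel μ a b h ca Ca Cb) {ι : Type*} [Fintype ι] [DecidableEq ι]
    [MeasurableSpace ι] [MeasurableSingletonClass ι] (p : α → ι) (hp : Measurable p) (z : ι → α)
    (r : ι) (δ η : ℝ)
    (hd : ∀ x, ∫ y, |a x y - a (z (p x)) y| ∂μ ≤ δ + 2 * (if p x = r then 1 else 0))
    {f : α → ℝ} (hf : PFDens μ f) {N : ℕ} (hN : 0 < N) (X : Fin N → α)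
    (hq : ∫ x, (if p x = r then 1 else 0) * f x ∂μ ≤ δ)
    (hE : ∀ i, |(N : ℝ)⁻¹ * ∑ j, (if p (X j) = i then (1 : ℝ) else 0)
      - ∫ x, (if p x = i then (1 : ℝ) else 0) * f x ∂μ| ≤ η) :
    ∫ y, |(N : ℝ)⁻¹ * ∑ j, a (X j) y - markovOp μ a f y| ∂μ
      ≤ 6 * δ + (Fintype.card ι + 2) * η := by
  have hN' : (0 : ℝ) < N := by exact_mod_cast hN
  set E : ι → ℝ := fun i => (N : ℝ)⁻¹ * ∑ j, (if p (X j) = i then (1 : ℝ) else 0) with hEdef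
  set q : ι → ℝ := fun i => ∫ x, (if p x = i then (1 : ℝ) else 0) * f x ∂μ with hqdef
  have hind : ∀ i, Measurable (fun x => if p x = i then (1 : ℝ) else 0) := fun i =>
    Measurable.ite (hp (measurableSet_singleton i)) measurable_const measurable_const
  have hindI : ∀ i, Integrable (fun x => (if p x = i then (1 : ℝ) else 0) * f x) μ := fun i =>
    hf.int.bdd_mul (c := 1) (hind i).aestronglyMeasurable
      (ae_of_all _ fun x => by split_ifs <;> simp)
  -- the discretised kernel
  have hzm : Measurable (Function.uncurry fun x y => a (z (p x)) y) := by
    have : (Function.uncurry fun x y => a (z (p x)) y)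
        = fun w : α × α => ∑ i, (if p w.1 = i then (1 : ℝ) else 0) * a (z i) w.2 := by
      ext w; simp [Function.uncurry]
    rw [this]
    exact Finset.measurable_sum _ fun i _ =>
      ((hind i).comp measurable_fst).mul ((M.a_meas _).comp measurable_snd)
  have hcm : Measurable (Function.uncurry fun x y => a (z (p x)) y - a x y) := hzm.sub M.ha_meas
  have hcb : ∀ x y, |a (z (p x)) y - a x y| ≤ 2 * Ca * h y := fun x y => M.diff_abs _ _ _
  have hI := M.prod_int hf.meas hf.int hcm (2 * Ca) hcb
  have hdI : ∀ x, Integrable (fun y => |a x y - a (z (p x)) y|) μ := fun x =>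
    sub_abs_int (M.a_int _) (M.a_int _)
  have hpt : ∀ y, (N : ℝ)⁻¹ * ∑ j, a (X j) y - markovOp μ a f y
      = (N : ℝ)⁻¹ * ∑ j, (a (X j) y - a (z (p (X j))) y) + ∑ i, (E i - q i) * a (z i) y
        + ∫ x, f x * (a (z (p x)) y - a x y) ∂μ := by
    intro y
    have e1 : (N : ℝ)⁻¹ * ∑ j, a (z (p (X j))) y = ∑ i, E i * a (z i) y := by
      simp only [hEdef, mul_assoc, Finset.sum_mul, ← Finset.mul_sum]
      rw [Finset.sum_comm]
      simp
    have i2 : Integrable (fun x => f x * a (z (p x)) y) μ :=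
      hf.int.mul_bdd (c := Ca * h y)
        (hzm.comp measurable_prodMk_right).aestronglyMeasurable (ae_of_all _ fun x => M.a_abs _ _)
    have e2 : ∫ x, f x * a (z (p x)) y ∂μ = ∑ i, q i * a (z i) y := by
      simp only [hqdef, ← integral_mul_const]
      rw [← integral_finsetSum _ fun i _ => (hindI i).mul_const _]
      congr 1; ext x; simp [ite_mul]
    have e3 : ∫ x, f x * (a (z (p x)) y - a x y) ∂μ
        = ∑ i, q i * a (z i) y - markovOp μ a f y := by
      simp only [mul_sub]
      rw [integral_sub i2 (M.fa_int hf.int y), e2]; rfl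
    rw [e3, Finset.sum_sub_distrib, mul_sub, e1]
    simp only [sub_mul, Finset.sum_sub_distrib]
    ring
  have I1 : Integrable (fun y => (N : ℝ)⁻¹ * ∑ j, |a (X j) y - a (z (p (X j))) y|) μ :=
    (integrable_finsetSum _ fun j _ => hdI _).const_mul _
  have I2 : Integrable (fun y => ∑ i, |E i - q i| * a (z i) y) μ :=
    integrable_finsetSum _ fun i _ => (M.a_int _).const_mul _
  have I3 : Integrable (fun y => |∫ x, f x * (a (z (p x)) y - a x y) ∂μ|) μ :=
    hI.integral_prod_right.abs
  have B3 : ∫ y, |∫ x, f x * (a (z (p x)) y - a x y) ∂μ| ∂μ ≤ δ + 2 * q r := by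
    refine (M.norm_fubini hf.meas hf.int hcm (2 * Ca) hcb).trans ?_
    have : ∫ x, (δ * f x + 2 * ((if p x = r then (1 : ℝ) else 0) * f x)) ∂μ = δ + 2 * q r := by
      rw [integral_add (hf.int.const_mul _) ((hindI r).const_mul _), integral_const_mul,
        integral_const_mul, hf.one, mul_one]
    rw [← this]
    refine integral_mono_of_nonneg (ae_of_all _ fun x =>
      mul_nonneg (abs_nonneg _) (integral_nonneg fun y => abs_nonneg _))
      ((hf.int.const_mul _).add ((hindI r).const_mul _)) (ae_of_all _ fun x => ?_)
    simp only
    rw [abs_of_nonneg (hf.nonneg x)]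
    simp_rw [abs_sub_comm (a (z (p x)) _)]
    have := mul_le_mul_of_nonneg_left (hd x) (hf.nonneg x)
    linarith
  have B1 : ∫ y, (N : ℝ)⁻¹ * ∑ j, |a (X j) y - a (z (p (X j))) y| ∂μ ≤ δ + 2 * E r := by
    rw [integral_const_mul, integral_finsetSum _ fun j _ => hdI _]
    have h1 : ∑ j, ∫ y, |a (X j) y - a (z (p (X j))) y| ∂μ
        ≤ ∑ j, (δ + 2 * (if p (X j) = r then (1 : ℝ) else 0)) :=
      Finset.sum_le_sum fun j _ => hd _
    rw [Finset.sum_add_distrib, ← Finset.mul_sum] at h1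
    simp only [Finset.sum_const, Finset.card_univ, Fintype.card_fin, nsmul_eq_mul] at h1
    have h2 := mul_le_mul_of_nonneg_left h1 (inv_nonneg.2 hN'.le)
    refine h2.trans (le_of_eq ?_)
    simp only [hEdef]
    field_simp
  have B2 : ∫ y, ∑ i, |E i - q i| * a (z i) y ∂μ ≤ Fintype.card ι * η := by
    rw [integral_finsetSum _ fun i _ => (M.a_int _).const_mul _]
    simp only [integral_const_mul, M.ha_kernel, mul_one]
    have : ∑ i, |E i - q i| ≤ ∑ _i : ι, η := Finset.sum_le_sum fun i _ => hE i
    refine this.trans (le_of_eq ?_)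
    simp only [Finset.sum_const, Finset.card_univ, nsmul_eq_mul]
  have hEr := (abs_le.1 (hE r)).2
  have hqr : q r ≤ δ := hq
  calc _ ≤ ∫ y, ((N : ℝ)⁻¹ * ∑ j, |a (X j) y - a (z (p (X j))) y|
        + ∑ i, |E i - q i| * a (z i) y + |∫ x, f x * (a (z (p x)) y - a x y) ∂μ|) ∂μ := by
        refine integral_mono_of_nonneg (ae_of_all _ fun y => abs_nonneg _) ((I1.add I2).add I3)
          (ae_of_all _ fun y => ?_)
        simp only
        rw [hpt y]
        refine (abs_add_le _ _).trans (add_le_add ((abs_add_le _ _).trans (add_le_add ?_ ?_)) le_rfl)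
        · rw [abs_mul, abs_of_pos (inv_pos.2 hN')]
          exact mul_le_mul_of_nonneg_left (Finset.abs_sum_le_sum_abs _ _) (inv_nonneg.2 hN'.le)
        · refine (Finset.abs_sum_le_sum_abs _ _).trans (le_of_eq ?_)
          simp only [abs_mul, abs_of_nonneg (M.ha_nonneg _ _)]
    _ ≤ (δ + 2 * E r) + Fintype.card ι * η + (δ + 2 * q r) := by
        have I12 : Integrable (fun y => (N : ℝ)⁻¹ * ∑ j, |a (X j) y - a (z (p (X j))) y|
            + ∑ i, |E i - q i| * a (z i) y) μ := I1.add I2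
        rw [integral_add I12 I3, integral_add I1 I2]
        linarith
    _ ≤ _ := by
        have : E r - q r ≤ η := hEr
        linarith

end PFModel

namespace PFModel

lemma exists_partition {α : Type*} [MeasurableSpace α] [MetricSpace α]
    [SecondCountableTopology α] [BorelSpace α]
    {μ : Measure α} [SigmaFinite μ]
    {a : α → α → ℝ} {b : ℕ → α → ℝ} {h : α → ℝ} {ca Ca Cb : ℝ}
    (M : PFModel μ a b h ca Ca Cb)
    (ha_cont : ∀ x₀ : α, ∀ δ > (0:ℝ), ∃ η > (0:ℝ), ∀ x, dist x x₀ < η →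
      (∫ y, |a x y - a x₀ y| ∂μ) < δ)
    (κ : α → ℝ) (hκ : Integrable κ μ) (δ : ℝ) (hδ : 0 < δ) :
    ∃ m : ℕ, ∃ p : α → Fin (m + 1), Measurable p ∧ ∃ z : Fin (m + 1) → α, ∃ r : Fin (m + 1),
      (∀ x, ∫ y, |a x y - a (z (p x)) y| ∂μ ≤ δ + 2 * (if p x = r then 1 else 0)) ∧
      ∫ x, (if p x = r then 1 else 0) * κ x ∂μ ≤ δ := by
  classical
  have := M.ne
  set z := TopologicalSpace.denseSeq α with hz
  have hm : ∀ n, Measurable fun x => ∫ y, |a x y - a (z n) y| ∂μ := by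
    intro n
    have : StronglyMeasurable (fun w : α × α => |a w.1 w.2 - a (z n) w.2|) := by
      refine Measurable.stronglyMeasurable ?_
      exact (M.ha_meas.sub ((M.a_meas (z n)).comp measurable_snd)).abs
    exact (this.integral_prod_right' (ν := μ)).measurable
  have hex : ∀ x, ∃ n, ∫ y, |a x y - a (z n) y| ∂μ < δ := by
    intro x
    obtain ⟨η, hη, H⟩ := ha_cont x δ hδ
    obtain ⟨n, hn⟩ := (TopologicalSpace.denseRange_denseSeq α).exists_dist_lt x hη
    refine ⟨n, ?_⟩
    rw [dist_comm] at hn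
    have := H _ hn
    simp_rw [abs_sub_comm (a x _)]
    exact this
  set π₀ : α → ℕ := fun x => Nat.find (hex x) with hπ
  have hπm : Measurable π₀ := measurable_find hex fun k => measurableSet_lt (hm k) measurable_const
  have hπs : ∀ x, ∫ y, |a x y - a (z (π₀ x)) y| ∂μ < δ := fun x => Nat.find_spec (hex x)
  have hsm : ∀ n : ℕ, MeasurableSet {x | n ≤ π₀ x} := fun n =>
    measurableSet_le measurable_const hπm
  have hlim := tendsto_setIntegral_of_antitone (f := κ) (μ := μ) (s := fun n : ℕ => {x | n ≤ π₀ x})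
    hsm (fun i j hij x hx => le_trans hij hx) ⟨0, hκ.integrableOn⟩
  have hemp : (⋂ n : ℕ, {x | n ≤ π₀ x}) = ∅ := by
    ext x
    simp only [Set.mem_iInter, Set.mem_ofPred_eq, Set.mem_empty_iff_false, iff_false, not_forall]
    exact ⟨π₀ x + 1, by omega⟩
  rw [hemp, Measure.restrict_empty, integral_zero_measure] at hlim
  obtain ⟨m, hmm⟩ := (hlim.eventually (gt_mem_nhds hδ)).exists
  have hlast : ∀ x, (⟨min (π₀ x) m, by omega⟩ : Fin (m + 1)) = Fin.last m ↔ m ≤ π₀ x := by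
    intro x
    rw [Fin.ext_iff]
    simp
  refine ⟨m, fun x => ⟨min (π₀ x) m, by omega⟩, ?_, fun i => z i, Fin.last m, ?_, ?_⟩
  · refine measurable_to_countable' fun i => ?_
    have : (fun x => (⟨min (π₀ x) m, by omega⟩ : Fin (m + 1))) ⁻¹' {i}
        = (fun x => min (π₀ x) m) ⁻¹' {(i : ℕ)} := by
      ext x; simp [Fin.ext_iff]
    rw [this]
    exact (hπm.min measurable_const) (measurableSet_singleton _)
  · intro x
    simp only [hlast]
    split_ifs with hx
    · have : ∫ y, |a x y - a (z (min (π₀ x) m)) y| ∂μ ≤ ∫ y, (a x y + a (z (min (π₀ x) m)) y) ∂μ := by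
        refine integral_mono (sub_abs_int (M.a_int _) (M.a_int _))
          ((M.a_int _).add (M.a_int _)) fun y => ?_
        have h1 := M.ha_nonneg x y
        have h2 := M.ha_nonneg (z (min (π₀ x) m)) y
        simp only
        rw [abs_le]; constructor <;> linarith
      rw [integral_add (M.a_int _) (M.a_int _), M.ha_kernel, M.ha_kernel] at this
      linarith
    · have : min (π₀ x) m = π₀ x := by omega
      rw [this]
      linarith [hπs x]
  · simp only [hlast]
    have e : ∀ x, (if m ≤ π₀ x then (1 : ℝ) else 0) * κ x = {x | m ≤ π₀ x}.indicator κ x := by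
      intro x
      simp [Set.indicator_apply]
    simp_rw [e]
    rw [integral_indicator (hsm m)]
    exact hmm.le

end PFModel

lemma pf_ofReal_mul (n : ℕ) (c : ℝ) :
    ((n + 1 : ℕ) : ENNReal) * ENNReal.ofReal c = ENNReal.ofReal (((n : ℝ) + 1) * c) := by
  rw [ENNReal.ofReal_mul (by positivity), ← Nat.cast_succ, ENNReal.ofReal_natCast]

lemma pf_hoeff {α Ω : Type*} [MeasurableSpace α] (μ : Measure α)
    {m mΩ : MeasurableSpace Ω} (hm : m ≤ mΩ) (P : Measure Ω) [IsProbabilityMeasure P]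
    {N : ℕ} (hN : 0 < N) (X : Fin N → Ω → α) (hX : ∀ j, Measurable (X j)) (F : Ω → α → ℝ)
    (hF : ∀ ω, PFDens μ (F ω))
    (hcond : ∀ φ : Fin N → α → ℝ, (∀ j, Measurable (φ j)) →
      (∀ j, ∃ C, ∀ x, |φ j x| ≤ C) →
      P[(fun ω => ∏ j, φ j (X j ω)) | m] =ᵐ[P] fun ω => ∏ j, ∫ x, φ j x * F ω x ∂μ)
    (φ : α → ℝ) (hφ : Measurable φ) (hφ01 : ∀ x, φ x = 0 ∨ φ x = 1) (η : ℝ) (hη : 0 < η)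
    (hη1 : η ≤ 1) :
    P {ω | η < |(N : ℝ)⁻¹ * ∑ j, φ (X j ω) - ∫ x, φ x * F ω x ∂μ|}
      ≤ ENNReal.ofReal (2 * Real.exp (-(η ^ 2 / 4) * N)) := by
  have hN' : (0 : ℝ) < N := by exact_mod_cast hN
  have hφb : ∀ x, |φ x| ≤ 1 := fun x => by rcases hφ01 x with h | h <;> simp [h]
  have hφ0 : ∀ x, 0 ≤ φ x := fun x => by rcases hφ01 x with h | h <;> simp [h]
  have hφI : ∀ ω, Integrable (fun x => φ x * F ω x) μ := fun ω =>
    (hF ω).int.bdd_mul (c := 1) hφ.aestronglyMeasurable (ae_of_all _ hφb)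
  set p : Ω → ℝ := fun ω => ∫ x, φ x * F ω x ∂μ with hp
  have hp0 : ∀ ω, 0 ≤ p ω := fun ω => integral_nonneg fun x => mul_nonneg (hφ0 x) ((hF ω).nonneg x)
  have hp1 : ∀ ω, p ω ≤ 1 := fun ω => by
    rw [← (hF ω).one]
    refine integral_mono (hφI ω) (hF ω).int fun x => ?_
    have := (hF ω).nonneg x
    have := (abs_le.1 (hφb x)).2
    simp only
    nlinarith
  have hpm : AEStronglyMeasurable[m] p P := by
    have h1 := hcond (fun j => if j = ⟨0, hN⟩ then φ else fun _ => 1)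
      (fun j => by split_ifs <;> [exact hφ; exact measurable_const])
      (fun j => ⟨1, fun x => by split_ifs <;> [exact hφb x; simp]⟩)
    have h2 : (fun ω => ∏ j : Fin N, ∫ x, (if j = ⟨0, hN⟩ then φ else fun _ => 1) x * F ω x ∂μ)
        = p := by
      ext ω
      rw [Finset.prod_eq_single (⟨0, hN⟩ : Fin N)]
      · simp [hp]
      · intro j _ hj
        simp [hj, (hF ω).one]
      · simp
    rw [h2] at h1
    exact (stronglyMeasurable_condExp.aestronglyMeasurable (μ := P)).congr h1
  have hpmΩ : AEStronglyMeasurable p P := hpm.mono hm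
  have hSm : Measurable fun ω => ∑ j, φ (X j ω) :=
    Finset.measurable_sum _ fun j _ => hφ.comp (hX j)
  have hSb : ∀ ω, |∑ j, φ (X j ω)| ≤ N := fun ω => by
    refine (Finset.abs_sum_le_sum_abs _ _).trans ?_
    refine (Finset.sum_le_sum fun j _ => hφb (X j ω)).trans ?_
    simp
  -- exponential moment
  have key : ∀ l : ℝ, |l| ≤ 1 →
      Integrable (fun ω => Real.exp (-(N * l * p ω)) * Real.exp (l * ∑ j, φ (X j ω))) P ∧
      ∫ ω, Real.exp (-(N * l * p ω)) * Real.exp (l * ∑ j, φ (X j ω)) ∂P ≤ Real.exp (N * l ^ 2) := by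
    intro l hl
    set f : Ω → ℝ := fun ω => Real.exp (-(N * l * p ω)) with hf
    set g : Ω → ℝ := fun ω => Real.exp (l * ∑ j, φ (X j ω)) with hg
    have hfm : AEStronglyMeasurable[m] f P :=
      Continuous.comp_aestronglyMeasurable (g := fun t : ℝ => Real.exp (-(N * l * t)))
        (by fun_prop) hpm
    have hfb : ∀ ω, ‖f ω‖ ≤ Real.exp N := fun ω => by
      rw [Real.norm_eq_abs, Real.abs_exp, Real.exp_le_exp]
      have h1 : |l * p ω| ≤ 1 := by
        rw [abs_mul, abs_of_nonneg (hp0 ω)]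
        nlinarith [hp0 ω, hp1 ω, abs_nonneg l]
      nlinarith [(abs_le.1 h1).1]
    have hgb : ∀ ω, ‖g ω‖ ≤ Real.exp N := fun ω => by
      rw [Real.norm_eq_abs, Real.abs_exp, Real.exp_le_exp]
      refine (le_abs_self _).trans ?_
      rw [abs_mul]
      nlinarith [hSb ω, abs_nonneg l, abs_nonneg (∑ j, φ (X j ω))]
    have hgm : Measurable g := (hSm.const_mul l).exp
    have hgI : Integrable g P :=
      Integrable.of_bound hgm.aestronglyMeasurable _ (ae_of_all _ hgb)
    have hfgI : Integrable (fun ω => f ω * g ω) P :=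
      hgI.bdd_mul (hfm.mono hm) (ae_of_all _ hfb)
    refine ⟨hfgI, ?_⟩
    have hpull := condExp_stronglyMeasurable_mul_of_bound₀ hm hfm hgI _ (ae_of_all _ hfb)
    have hc := hcond (fun _ x => Real.exp (l * φ x)) (fun _ => (hφ.const_mul l).exp)
      (fun _ => ⟨Real.exp 1, fun x => by
        rw [Real.abs_exp, Real.exp_le_exp]
        refine (le_abs_self _).trans ?_
        rw [abs_mul]
        nlinarith [hφb x, abs_nonneg l, abs_nonneg (φ x)]⟩)
    have hgp : (fun ω => ∏ j : Fin N, Real.exp (l * φ (X j ω))) = g := by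
      ext ω
      simp only [hg]
      rw [← Real.exp_sum, Finset.mul_sum]
    rw [hgp] at hc
    have hint : ∀ ω, ∫ x, Real.exp (l * φ x) * F ω x ∂μ = 1 + (Real.exp l - 1) * p ω := by
      intro ω
      have : ∀ x, Real.exp (l * φ x) * F ω x = F ω x + (Real.exp l - 1) * (φ x * F ω x) := by
        intro x
        rcases hφ01 x with h | h
        · simp [h]
        · simp only [h, mul_one, one_mul]
          ring
      simp_rw [this]
      rw [integral_add (hF ω).int ((hφI ω).const_mul _), (hF ω).one, integral_const_mul]
    calc ∫ ω, f ω * g ω ∂P = ∫ ω, (P[f * g | m]) ω ∂P := (integral_condExp hm).symm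
      _ ≤ ∫ _ω, Real.exp (N * l ^ 2) ∂P := by
          refine integral_mono_ae integrable_condExp (integrable_const _) ?_
          filter_upwards [hpull, hc] with ω h1 h2
          rw [h1, Pi.mul_apply, h2]
          simp only [hint, Finset.prod_const, Finset.card_univ, Fintype.card_fin]
          have hq : 1 + (Real.exp l - 1) * p ω ≤ Real.exp (l * p ω + l ^ 2) := by
            have h3 := (abs_le.1 (Real.abs_exp_sub_one_sub_id_le hl)).2
            have h4 := Real.add_one_le_exp (l * p ω + l ^ 2)
            have h5 : (Real.exp l - 1) * p ω ≤ (l + l ^ 2) * p ω :=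
              mul_le_mul_of_nonneg_right (by linarith) (hp0 ω)
            nlinarith [hp1 ω, sq_nonneg l]
          have hq0 : 0 ≤ 1 + (Real.exp l - 1) * p ω := by
            nlinarith [hp1 ω, hp0 ω, Real.exp_pos l]
          calc f ω * (1 + (Real.exp l - 1) * p ω) ^ N
              ≤ f ω * (Real.exp (l * p ω + l ^ 2)) ^ N :=
                mul_le_mul_of_nonneg_left (pow_le_pow_left₀ hq0 hq N) (Real.exp_pos _).le
            _ = Real.exp (N * l ^ 2) := by
                simp only [hf]
                rw [← Real.exp_nat_mul, ← Real.exp_add]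
                congr 1; ring
      _ = Real.exp (N * l ^ 2) := by simp
  -- one-sided bound
  have side : ∀ σ : ℝ, |σ| = 1 →
      P {ω | η < σ * ((N : ℝ)⁻¹ * ∑ j, φ (X j ω) - p ω)}
        ≤ ENNReal.ofReal (Real.exp (-(η ^ 2 / 4) * N)) := by
    intro σ hσ
    have hσ2 : σ ^ 2 = 1 := by rw [← sq_abs, hσ]; norm_num
    obtain ⟨hI, hB⟩ := key (σ * (η / 2)) (by
      rw [abs_mul, hσ, one_mul, abs_of_pos (by positivity)]; linarith)
    have hmk := mul_meas_ge_le_integral_of_nonneg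
      (ae_of_all _ fun ω => (mul_pos (Real.exp_pos _) (Real.exp_pos _)).le) hI
      (Real.exp (N * (η ^ 2 / 2)))
    have hsub : {ω | η < σ * ((N : ℝ)⁻¹ * ∑ j, φ (X j ω) - p ω)} ⊆
        {ω | Real.exp (N * (η ^ 2 / 2)) ≤ Real.exp (-(N * (σ * (η / 2)) * p ω)) *
          Real.exp (σ * (η / 2) * ∑ j, φ (X j ω))} := by
      intro ω hω
      simp only [Set.mem_ofPred_eq] at hω ⊢
      rw [← Real.exp_add, Real.exp_le_exp]
      have e : -(N * (σ * (η / 2)) * p ω) + σ * (η / 2) * ∑ j, φ (X j ω)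
          = N * (η / 2) * (σ * ((N : ℝ)⁻¹ * ∑ j, φ (X j ω) - p ω)) := by
        field_simp
        ring
      rw [e]
      have : N * (η / 2) * η ≤ N * (η / 2) * (σ * ((N : ℝ)⁻¹ * ∑ j, φ (X j ω) - p ω)) :=
        mul_le_mul_of_nonneg_left hω.le (by positivity)
      calc _ = N * (η / 2) * η := by ring
        _ ≤ _ := this
    refine (measure_mono hsub).trans ?_
    rw [← ofReal_measureReal]
    refine ENNReal.ofReal_le_ofReal ?_
    have h3 := hmk.trans hB
    rw [mul_comm, ← le_div_iff₀ (Real.exp_pos _), ← Real.exp_sub] at h3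
    refine h3.trans (le_of_eq ?_)
    congr 1
    rw [mul_pow, hσ2]; ring
  have hsub : {ω | η < |(N : ℝ)⁻¹ * ∑ j, φ (X j ω) - p ω|}
      ⊆ {ω | η < 1 * ((N : ℝ)⁻¹ * ∑ j, φ (X j ω) - p ω)}
        ∪ {ω | η < (-1) * ((N : ℝ)⁻¹ * ∑ j, φ (X j ω) - p ω)} := by
    intro ω hω
    rcases lt_abs.1 (show η < |(N : ℝ)⁻¹ * ∑ j, φ (X j ω) - p ω| from hω) with h | h
    · left; simpa using h
    · right
      show η < (-1) * ((N : ℝ)⁻¹ * ∑ j, φ (X j ω) - p ω)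
      linarith
  refine (measure_mono hsub).trans ((measure_union_le _ _).trans ?_)
  rw [two_mul, ENNReal.ofReal_add (Real.exp_pos _).le (Real.exp_pos _).le]
  exact add_le_add (side 1 (by simp)) (side (-1) (by simp))

/-- Theorem 2: if the transition densities are the same for all `t`, continuous in
the L¹-norm, and satisfy condition (19) (`c_a h ≤ a(x',·) ≤ C_a h`), and if
condition (21) holds (`C_b = sup_{t,x,x',y} b_t(x,y)/b_t(x',y) < ∞`), then for every
`ε > 0` there are constants `c₁, c₂` such that for all times `t` and all sample
sizes `N`, `P[‖f^N_{t|t} − f_{t|t}‖₁ > ε] ≤ c₁ exp(−c₂ N)`. -/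
theorem particle_filter_uniform_exponential_bound
    {α : Type*} [MeasurableSpace α] [MetricSpace α] [CompleteSpace α]
    [SecondCountableTopology α] [BorelSpace α]
    (μ : Measure α) [SigmaFinite μ]
    {Ω : Type*} [MeasurableSpace Ω] (P : Measure Ω) [IsProbabilityMeasure P]
    (a0 : α → ℝ) (a : α → α → ℝ) (b : ℕ → α → ℝ) (h : α → ℝ)
    (ca Ca Cb : ℝ) (hca : 0 < ca) (hcaCa : ca < Ca)
    (ha0_meas : Measurable a0) (ha0_nonneg : ∀ x, 0 ≤ a0 x)
    (ha0_int : Integrable a0 μ) (ha0_one : (∫ x, a0 x ∂μ) = 1)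
    (ha_meas : Measurable (Function.uncurry a))
    (ha_nonneg : ∀ x' x, 0 ≤ a x' x)
    (ha_kernel : ∀ x', ∫ x, a x' x ∂μ = 1)
    -- L¹-continuity of x ↦ a(x,·)
    (ha_cont : ∀ x₀ : α, ∀ δ > (0:ℝ), ∃ η > (0:ℝ), ∀ x, dist x x₀ < η →
      (∫ y, |a x y - a x₀ y| ∂μ) < δ)
    (hh_meas : Measurable h) (hh_nonneg : ∀ x, 0 ≤ h x)
    (hh_int : Integrable h μ) (hh_one : (∫ x, h x ∂μ) = 1)
    -- condition (19)
    (h19 : ∀ x' x, ca * h x ≤ a x' x ∧ a x' x ≤ Ca * h x)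
    -- condition (21)
    (hb_meas : ∀ t, Measurable (b t))
    (hb_pos : ∀ t x, 0 < b t x)
    (h21 : ∀ t x x', b t x ≤ Cb * b t x')
    -- the particle system
    (X : (N : ℕ) → ℕ → Fin N → Ω → α)
    (hX_meas : ∀ N t j, Measurable (X N t j))
    -- conditionally on the past, (X N t j)_j is an i.i.d. sample from f^N_{t|t}
    (hcond : ∀ (N t : ℕ) (φ : Fin N → α → ℝ), (∀ j, Measurable (φ j)) →
      (∀ j, ∃ C, ∀ x, |φ j x| ≤ C) →
      P[(fun ω => ∏ j, φ j (X N t j ω)) | pastFiltration (X N) t]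
        =ᵐ[P] fun ω => ∏ j, ∫ x, φ j x
          * particleFilter μ a0 (fun _ => a) b (X N) t ω x ∂μ) :
    ∀ ε : ℝ, 0 < ε → ∃ c₁ c₂ : ℝ, 0 < c₂ ∧ ∀ t N : ℕ,
      P {ω | ε < ∫ x, |particleFilter μ a0 (fun _ => a) b (X N) t ω x
            - trueFilter μ a0 (fun _ => a) b t x| ∂μ}
        ≤ ENNReal.ofReal (c₁ * Real.exp (-c₂ * N)) := by
  
  have hne : Nonempty α := by
    by_contra hc
    rw [not_nonempty_iff] at hc
    have : μ = 0 := Measure.eq_zero_of_isEmpty μ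
    rw [this] at ha0_one
    simp at ha0_one
  have M : PFModel μ a b h ca Ca Cb := ⟨hne, hca, hcaCa, ha_meas, ha_nonneg, ha_kernel, hh_meas,
    hh_nonneg, hh_int, hh_one, h19, hb_meas, hb_pos, h21⟩
  have hCb := M.Cb_ge
  have hγ : 0 < ca / Ca := div_pos hca M.Ca_pos
  have hγ1 : ca / Ca < 1 := (div_lt_one M.Ca_pos).2 hcaCa
  have d0 : PFDens μ a0 := ⟨ha0_meas, ha0_nonneg, ha0_int, ha0_one⟩
  intro ε hε
  obtain ⟨k, hk⟩ : ∃ k : ℕ, (1 - ca / Ca) ^ k * (1 / (ca / Ca) ^ 2 - 1) < ε / 2 := by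
    have h1 := (tendsto_pow_atTop_nhds_zero_of_lt_one (show 0 ≤ 1 - ca / Ca by linarith)
      (show 1 - ca / Ca < 1 by linarith)).mul_const (1 / (ca / Ca) ^ 2 - 1)
    rw [zero_mul] at h1
    exact (h1.eventually (gt_mem_nhds (half_pos hε))).exists
  set S : ℝ := ∑ i ∈ Finset.range (k + 1), (2 * Cb) ^ i with hS
  have hSpos : 0 < S := Finset.sum_pos (fun i _ => by positivity) ⟨0, by simp⟩
  set δ' : ℝ := ε / (4 * Cb * S) with hδ'
  have hδ'pos : 0 < δ' := by positivity
  have hδS : 2 * Cb * δ' * S = ε / 2 := by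
    rw [hδ']; field_simp; ring
  have hκ : Integrable (fun x => Cb * (Ca * h x) + a0 x) μ :=
    ((hh_int.const_mul _).const_mul _).add ha0_int
  obtain ⟨m, p, hp, z, r, hd, hq⟩ := M.exists_partition ha_cont _ hκ (δ' / 12) (by positivity)
  set η : ℝ := min 1 (δ' / (2 * (m + 3))) with hη
  have hηpos : 0 < η := lt_min one_pos (by positivity)
  have hη1 : η ≤ 1 := min_le_left _ _
  have hη2 : (m + 3 : ℝ) * η ≤ δ' / 2 := by
    have : η ≤ δ' / (2 * (m + 3)) := min_le_right _ _
    calc (m + 3 : ℝ) * η ≤ (m + 3) * (δ' / (2 * (m + 3))) := by gcongr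
      _ = δ' / 2 := by field_simp
  refine ⟨(k + 1) * ((m + 1) * 2), η ^ 2 / 4, by positivity, fun t N => ?_⟩
  rcases Nat.eq_zero_or_pos N with hN0 | hN
  · refine prob_le_one.trans ?_
    subst hN0
    rw [ENNReal.one_le_ofReal]
    simp only [Nat.cast_zero, mul_zero, Real.exp_zero, mul_one]
    have h1 : (0 : ℝ) ≤ k := Nat.cast_nonneg k
    have h2 : (0 : ℝ) ≤ m := Nat.cast_nonneg m
    nlinarith [mul_nonneg h1 h2]
  set pf := particleFilter μ a0 (fun _ => a) b (X N) with hpf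
  have hpfS : ∀ s ω, pf (s + 1) ω
      = bayesOp μ (fun x => (N : ℝ)⁻¹ * ∑ j, a (X N s j ω) x) (b (s + 1)) := fun s ω => rfl
  have hpfd : ∀ s ω, PFDens μ (pf s ω) := by
    intro s ω
    cases s with
    | zero => exact d0
    | succ s => rw [hpfS]; exact M.bayes_dens (M.emp_dens hN _) _
  have hpfle : ∀ s ω x, pf s ω x ≤ Cb * (Ca * h x) + a0 x := by
    intro s ω x
    have hCa := M.Ca_pos
    have hhx := hh_nonneg x
    cases s with
    | zero =>
      have : 0 ≤ Cb * (Ca * h x) := by positivity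
      have e : pf 0 ω x = a0 x := rfl
      linarith
    | succ s =>
      rw [hpfS]
      have h1 := M.bayes_le (M.emp_dens hN (fun j => X N s j ω)) (s + 1) x
      have h2 := M.emp_le hN (fun j => X N s j ω) x
      have h3 := ha0_nonneg x
      have h4 := mul_le_mul_of_nonneg_left h2 (show 0 ≤ Cb by linarith)
      linarith
  set ind : Fin (m + 1) → α → ℝ := fun i x => if p x = i then (1 : ℝ) else 0 with hind
  have hindm : ∀ i, Measurable (ind i) := fun i =>
    Measurable.ite (hp (measurableSet_singleton i)) measurable_const measurable_const
  have hind01 : ∀ i x, ind i x = 0 ∨ ind i x = 1 := fun i x => by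
    simp only [hind]; split_ifs <;> simp
  have hindI : ∀ i {f : α → ℝ}, Integrable f μ → Integrable (fun x => ind i x * f x) μ :=
    fun i f hf => hf.bdd_mul (c := 1) (hindm i).aestronglyMeasurable
      (ae_of_all _ fun x => by rcases hind01 i x with h | h <;> simp [h])
  have hqs : ∀ s ω, ∫ x, ind r x * pf s ω x ∂μ ≤ δ' / 12 := by
    intro s ω
    refine le_trans ?_ hq
    refine integral_mono (hindI r (hpfd s ω).int) (hindI r hκ) fun x => ?_
    exact mul_le_mul_of_nonneg_left (hpfle s ω x) (by rcases hind01 r x with h | h <;> simp [h])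
  have hpast : ∀ s, pastFiltration (X N) s ≤ ‹MeasurableSpace Ω› := by
    intro s
    refine iSup_le fun i => ?_
    exact (measurable_pi_lambda _ fun j => hX_meas N i j).comap_le
  set Bad : ℕ → Set Ω := fun s => ⋃ i, {ω | η < |(N : ℝ)⁻¹ * ∑ j, ind i (X N s j ω)
    - ∫ x, ind i x * pf s ω x ∂μ|} with hBad
  have hBadP : ∀ s, P (Bad s) ≤ ENNReal.ofReal ((m + 1) * 2 * Real.exp (-(η ^ 2 / 4) * N)) := by
    intro s
    refine (measure_iUnion_fintype_le _ _).trans ?_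
    refine (Finset.sum_le_sum fun i _ => pf_hoeff μ (hpast s) P hN (X N s) (hX_meas N s) (pf s)
      (hpfd s) (hcond N s) (ind i) (hindm i) (hind01 i) η hηpos hη1).trans ?_
    rw [Finset.sum_const, Finset.card_univ, Fintype.card_fin, nsmul_eq_mul,
      mul_assoc ((m : ℝ) + 1), pf_ofReal_mul]
  have hgood : ∀ s ω, ω ∉ Bad s →
      ∫ x, |pf (s + 1) ω x - pfStep μ a b (s + 1) (pf s ω) x| ∂μ ≤ 2 * Cb * δ' := by
    intro s ω hω
    simp only [hBad, Set.mem_iUnion, Set.mem_ofPred_eq, not_exists, not_lt] at hω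
    have h1 := M.emp_bound p hp z r (δ' / 12) η hd (hpfd s ω) hN (fun j => X N s j ω)
      (hqs s ω) hω
    rw [Fintype.card_fin] at h1
    have h2 := M.bayes_lip (M.emp_dens hN (fun j => X N s j ω)) (M.markov_dens (hpfd s ω)) (s + 1)
    rw [hpfS]
    refine h2.trans (mul_le_mul_of_nonneg_left ?_ (by linarith))
    refine h1.trans ?_
    push_cast
    linarith
  have htrue : ∀ s n, trueFilter μ a0 (fun _ => a) b (s + n)
      = pfFlow μ a b s (trueFilter μ a0 (fun _ => a) b s) n := by
    intro s n
    induction n with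
    | zero => rfl
    | succ n ih =>
      show pfStep μ a b (s + n + 1) (trueFilter μ a0 (fun _ => a) b (s + n)) = _
      rw [ih]; rfl
  have htrued : ∀ s, PFDens μ (trueFilter μ a0 (fun _ => a) b s) := by
    intro s
    have := htrue 0 s
    rw [zero_add] at this
    rw [this]
    exact M.flow_dens d0 0 s
  obtain ⟨s, n, hst, hn, hcase⟩ : ∃ s n : ℕ, s + n = t ∧ n ≤ k + 1 ∧ (s = 0 ∨ n = k + 1) :=
    ⟨t - (k + 1), t - (t - (k + 1)), by omega, by omega, by omega⟩
  have hsub : {ω | ε < ∫ x, |pf t ω x - trueFilter μ a0 (fun _ => a) b t x| ∂μ}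
      ⊆ ⋃ i ∈ Finset.range (k + 1), Bad (s + i) := by
    intro ω hω
    by_contra hc
    simp only [Set.mem_iUnion, Finset.mem_range, not_exists] at hc
    rw [Set.mem_ofPred_eq] at hω
    have h1 := M.flow_err (fun s => pf s ω) (fun s => hpfd s ω) s (2 * Cb * δ') n
      fun i hi => hgood (s + i) ω (hc i (by omega))
    have h2 : 2 * Cb * δ' * ∑ i ∈ Finset.range n, (2 * Cb) ^ i ≤ ε / 2 := by
      rw [← hδS]
      refine mul_le_mul_of_nonneg_left ?_ (by positivity)
      exact Finset.sum_le_sum_of_subset_of_nonneg (Finset.range_mono hn)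
        fun i _ _ => by positivity
    have h3 : ∫ x, |pfFlow μ a b s (pf s ω) n x
        - pfFlow μ a b s (trueFilter μ a0 (fun _ => a) b s) n x| ∂μ ≤ ε / 2 := by
      rcases hcase with h0 | h0
      · subst h0
        have e : pf 0 ω = trueFilter μ a0 (fun _ => a) b 0 := rfl
        rw [e]
        simp only [sub_self, abs_zero, integral_zero]
        linarith
      · subst h0
        exact (M.flow_forget (hpfd s ω) (htrued s) s k).trans hk.le
    rw [← hst, htrue s n] at hω
    have h4 := PFModel.l1_tri (hpfd (s + n) ω) (M.flow_dens (hpfd s ω) s n)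
      (M.flow_dens (htrued s) s n)
    linarith
  refine (measure_mono hsub).trans ((measure_biUnion_finset_le _ _).trans ?_)
  refine (Finset.sum_le_sum fun i _ => hBadP (s + i)).trans ?_
  refine le_of_eq ?_
  rw [Finset.sum_const, Finset.card_range, nsmul_eq_mul, pf_ofReal_mul]
  congr 1
  ring
end
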